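/- Let F be a function on half-integral positive definite symmetric 2×2 matrices satisfying a(AᵀTA) = a(T) for all A ∈ Γ⁰(N) := {[[a, Nc], [b, d]] ∈ SL₂(ℤ)}, and let ε ∈ {±1} with a([[n, r/2], [r/2, m]]) = ε·a([[m/N, -r/2], [-r/2, nN]]) whenever N ∣ m. If S = [[n, r/2], [r/2, Nm]] is primitive with a(S) ≠ 0, then there exists an odd prime p ∤ N and a half-integral positive definite matrix T with bottom-right entry Np and a(T) ≠ 0. -/

import Mathlib

open Matrix

/-- A 2×2 rational matrix is half-integral symmetric:
`T = [[n, r/2], [r/2, m]]` with `n, r, m ∈ ℤ`. -/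
def HalfIntegral (T : Matrix (Fin 2) (Fin 2) ℚ) : Prop :=
  T 1 0 = T 0 1 ∧ (∃ n : ℤ, T 0 0 = n) ∧ (∃ m : ℤ, T 1 1 = m) ∧ (∃ r : ℤ, 2 * T 0 1 = r)

/-- Positive definiteness for a symmetric 2×2 matrix. -/
def PosDef2 (T : Matrix (Fin 2) (Fin 2) ℚ) : Prop :=
  0 < T 0 0 ∧ 0 < T.det

/-!
The Fricke symmetry turns `S` into `S' = [[m, -r/2], [-r/2, Nn]]`. Congruence by an element of
`Γ⁰(N)` with second column `(Nc, d)` puts `N (n d² - r c d + N m c²)` in the bottom-right corner, so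
what is needed is a large prime represented by a primitive positive definite form: Weber's theorem.

A form of discriminant `-4a` whose leading coefficient is coprime to `2a` corresponds to a ring
class modulo `2a` of the ring of integers of `ℚ(√-a)`, and it represents a prime as soon as the
inverse class contains an ideal of prime norm. By counting lattice points, the ideals of norm at
most `x` are equidistributed among the ring classes with error `O(√x)`, so every nontrivial class
character has an `L`-series holomorphic on `Re s > 1/2`. The residues at `1` of the negated
logarithmic derivatives are integers, `1` for the trivial character and at most `0` for the others,
and their sum is nonnegative, being the residue of a series with nonnegative coefficients. Hence at
most one character is exceptional, with residue `-1`. It would equal its conjugate, so be trivial on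
squares, and its residue would cancel that of the trivial character in every square class. This is
impossible: for primes `p ≡ 1` modulo `16 a³`, Legendre's theorem solves `p z² = x² + a y²`, which
puts an ideal of norm `p` into a square class, and Dirichlet's theorem provides enough such primes.
-/

section LSeriesResidue

open Filter Topology Complex Asymptotics MeasureTheory

lemma natCast_rpow_isBigO_of_le {r r' : ℝ} (h : r ≤ r') :
    (fun n : ℕ ↦ (n : ℝ) ^ r) =O[atTop] fun n : ℕ ↦ (n : ℝ) ^ r' :=
  .of_bound 1 ((eventually_ge_atTop 1).mono fun n hn ↦ by
    have hn1 : (1 : ℝ) ≤ n := by exact_mod_cast hn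
    simpa [abs_of_nonneg, Real.rpow_nonneg] using Real.rpow_le_rpow_of_exponent_le hn1 h)

lemma cpow_smul_indicator_Ioi_one (S : ℝ → ℂ) (s : ℂ) :
    (fun t : ℝ ↦ (t : ℂ) ^ (-s - 1) • (Set.Ioi 1).indicator S t) =
      (Set.Ioi 1).indicator fun t ↦ S t * (t : ℂ) ^ (-(s + 1)) := by
  funext t
  rw [← neg_add', smul_eq_mul, mul_comm]
  exact (Set.indicator_mul_left _ S fun t : ℝ ↦ (t : ℂ) ^ (-(s + 1))).symm

lemma mellin_indicator_Ioi_one (S : ℝ → ℂ) (s : ℂ) :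
    mellin ((Set.Ioi 1).indicator S) (-s) =
      ∫ t in Set.Ioi (1 : ℝ), S t * (t : ℂ) ^ (-(s + 1)) := by
  rw [mellin, cpow_smul_indicator_Ioi_one, setIntegral_indicator measurableSet_Ioi,
    Set.inter_eq_right.2 (Set.Ioi_subset_Ioi zero_le_one)]

lemma integrableOn_of_mellinConvergent_indicator {S : ℝ → ℂ} {s : ℂ}
    (h : MellinConvergent ((Set.Ioi 1).indicator S) (-s)) :
    IntegrableOn (fun t : ℝ ↦ S t * (t : ℂ) ^ (-(s + 1))) (Set.Ioi 1) := by
  rwa [MellinConvergent, cpow_smul_indicator_Ioi_one, integrableOn_indicator_iff measurableSet_Ioi,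
    Set.inter_eq_left.2 (Set.Ioi_subset_Ioi zero_le_one)] at h

/-- The error term of the summatory function, cut off at `1` so that its Mellin transform has no
pole coming from `0`. -/
noncomputable def sumError (f : ℕ → ℂ) (c : ℂ) : ℝ → ℂ :=
  (Set.Ioi 1).indicator fun t ↦ ∑ k ∈ Finset.Icc 1 ⌊t⌋₊, f k - c * t

section

variable {f : ℕ → ℂ} {c : ℂ} {r : ℝ}

lemma locallyIntegrableOn_sumError (f : ℕ → ℂ) (c : ℂ) :
    LocallyIntegrableOn (sumError f c) (Set.Ioi 0) := by
  have hsum : LocallyIntegrableOn (fun t : ℝ ↦ ∑ k ∈ Finset.Icc 1 ⌊t⌋₊, f k) (Set.Ici 0) := by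
    simpa using locallyIntegrableOn_mul_sum_Icc f (m := 1) le_rfl
      ((locallyIntegrable_const (1 : ℂ)).locallyIntegrableOn _)
  have hlin : LocallyIntegrableOn (fun t : ℝ ↦ c * t) (Set.Ici 0) :=
    (by fun_prop : Continuous fun t : ℝ ↦ c * t).locallyIntegrable.locallyIntegrableOn _
  intro t ht
  obtain ⟨u, hu, hint⟩ := (hsum.sub hlin).mono_set Set.Ioi_subset_Ici_self t ht
  exact ⟨u, hu, hint.indicator measurableSet_Ioi⟩

lemma sumError_isBigO (hr : 0 ≤ r)
    (hO : (fun n : ℕ ↦ ∑ k ∈ Finset.Icc 1 n, f k - c * n) =O[atTop] fun n : ℕ ↦ (n : ℝ) ^ r) :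
    sumError f c =O[atTop] fun t : ℝ ↦ t ^ r := by
  have hfloor : (fun t : ℝ ↦ ∑ k ∈ Finset.Icc 1 ⌊t⌋₊, f k - c * ⌊t⌋₊) =O[atTop]
      fun t : ℝ ↦ t ^ r :=
    (hO.comp_tendsto tendsto_nat_floor_atTop).trans
      (isEquivalent_nat_floor.isBigO.rpow hr (eventually_ge_atTop 0))
  have hfract : (fun t : ℝ ↦ c * (⌊t⌋₊ - t)) =O[atTop] fun t : ℝ ↦ t ^ r := by
    refine IsBigO.of_bound ‖c‖ ?_
    filter_upwards [eventually_ge_atTop 1] with t ht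
    have hdist : ‖((⌊t⌋₊ : ℂ) - t)‖ ≤ 1 := by
      rw [← ofReal_natCast, ← ofReal_sub, norm_real, Real.norm_eq_abs, abs_le]
      constructor <;> linarith [Nat.floor_le (zero_le_one.trans ht), Nat.lt_floor_add_one t]
    rw [norm_mul]
    gcongr
    exact hdist.trans ((Real.one_le_rpow ht hr).trans (Real.le_norm_self _))
  refine (hfloor.add hfract).congr' ?_ .rfl
  filter_upwards [eventually_gt_atTop 1] with t ht
  rw [sumError, Set.indicator_of_mem (Set.mem_Ioi.2 ht)]
  ring

lemma sumError_isBigO_nhdsGT_zero (f : ℕ → ℂ) (c : ℂ) (b : ℝ) :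
    sumError f c =O[𝓝[>] 0] fun t : ℝ ↦ t ^ b := by
  refine (isBigO_zero _ _).congr' ?_ .rfl
  filter_upwards [mem_nhdsWithin_of_mem_nhds (Iio_mem_nhds one_pos)] with t ht
  exact (Set.indicator_of_notMem (Set.notMem_Ioi.2 (Set.mem_Iio.1 ht).le) _).symm

lemma mellinConvergent_sumError_neg (hr : 0 ≤ r)
    (hO : (fun n : ℕ ↦ ∑ k ∈ Finset.Icc 1 n, f k - c * n) =O[atTop] fun n : ℕ ↦ (n : ℝ) ^ r)
    {s : ℂ} (hs : r < s.re) : MellinConvergent (sumError f c) (-s) :=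
  mellinConvergent_of_isBigO_rpow (locallyIntegrableOn_sumError f c) (a := -r)
    (by simpa using sumError_isBigO hr hO) (by simpa using hs)
    (sumError_isBigO_nhdsGT_zero f c (-(-s.re - 1))) (by simp)

lemma differentiableAt_mellin_sumError_neg (hr : 0 ≤ r)
    (hO : (fun n : ℕ ↦ ∑ k ∈ Finset.Icc 1 n, f k - c * n) =O[atTop] fun n : ℕ ↦ (n : ℝ) ^ r)
    {s : ℂ} (hs : r < s.re) : DifferentiableAt ℂ (fun s ↦ mellin (sumError f c) (-s)) s := by
  have hmellin : DifferentiableAt ℂ (mellin (sumError f c)) (-s) :=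
    mellin_differentiableAt_of_isBigO_rpow (locallyIntegrableOn_sumError f c) (a := -r)
      (by simpa using sumError_isBigO hr hO) (by simpa using hs)
      (sumError_isBigO_nhdsGT_zero f c (-(-s.re - 1))) (by simp)
  exact hmellin.comp s differentiableAt_id.neg

lemma LSeries_eq_add_mellin_sumError (hr : 0 ≤ r) (hr1 : r < 1)
    (hO : (fun n : ℕ ↦ ∑ k ∈ Finset.Icc 1 n, f k - c * n) =O[atTop] fun n : ℕ ↦ (n : ℝ) ^ r)
    {s : ℂ} (hs : 1 < s.re) (hf : LSeriesSummable f s) :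
    LSeries f s = s * (c / (s - 1) + mellin (sumError f c) (-s)) := by
  have hsum : (fun n ↦ ∑ k ∈ Finset.Icc 1 n, f k) =O[atTop] fun n : ℕ ↦ (n : ℝ) ^ (1 : ℝ) := by
    have hmain : (fun n : ℕ ↦ c * n) =O[atTop] fun n : ℕ ↦ (n : ℝ) ^ (1 : ℝ) :=
      .of_bound ‖c‖ (.of_forall fun n ↦ by simp)
    simpa using (hO.trans (natCast_rpow_isBigO_of_le hr1.le)).add hmain
  have hpow : IntegrableOn (fun t : ℝ ↦ (t : ℂ) ^ (-s)) (Set.Ioi 1) :=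
    integrableOn_Ioi_cpow_of_lt (by simpa using hs) one_pos
  have herr : IntegrableOn (fun t : ℝ ↦ (∑ k ∈ Finset.Icc 1 ⌊t⌋₊, f k - c * t) *
      (t : ℂ) ^ (-(s + 1))) (Set.Ioi 1) :=
    integrableOn_of_mellinConvergent_indicator (mellinConvergent_sumError_neg hr hO (hr1.trans hs))
  rw [LSeries_eq_mul_integral f zero_le_one hs hf hsum, sumError, mellin_indicator_Ioi_one]
  have hsplit : ∀ t ∈ Set.Ioi (1 : ℝ), (∑ k ∈ Finset.Icc 1 ⌊t⌋₊, f k) * (t : ℂ) ^ (-(s + 1)) =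
      c * (t : ℂ) ^ (-s) +
        (∑ k ∈ Finset.Icc 1 ⌊t⌋₊, f k - c * t) * (t : ℂ) ^ (-(s + 1)) := fun t ht ↦ by
    have ht0 : (t : ℂ) ≠ 0 := ofReal_ne_zero.2 (zero_lt_one.trans ht).ne'
    have hcpow : (t : ℂ) ^ (-s) = t * (t : ℂ) ^ (-(s + 1)) := by
      nth_rw 2 [← cpow_one (t : ℂ)]
      rw [← cpow_add _ _ ht0]; ring_nf
    rw [hcpow]; ring
  rw [setIntegral_congr_fun measurableSet_Ioi hsplit, integral_add (hpow.const_mul c) herr,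
    integral_const_mul, integral_Ioi_cpow_of_lt (by simpa using hs) one_pos]
  have hs1 : s - 1 ≠ 0 := sub_ne_zero.2 fun h ↦ by simp [h] at hs
  have hs1' : -s + 1 ≠ 0 := fun h ↦ hs1 (by linear_combination -h)
  congr 2
  rw [ofReal_one, one_cpow]
  field_simp
  ring

lemma exists_continuation_sub_one_mul_LSeries (hr : 0 ≤ r) (hr1 : r < 1)
    (hf : ∀ s : ℂ, 1 < s.re → LSeriesSummable f s)
    (hO : (fun n : ℕ ↦ ∑ k ∈ Finset.Icc 1 n, f k - c * n) =O[atTop] fun n : ℕ ↦ (n : ℝ) ^ r) :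
    ∃ h : ℂ → ℂ, AnalyticOnNhd ℂ h {s | r < s.re} ∧ h 1 = c ∧
      ∀ s : ℂ, 1 < s.re → h s = (s - 1) * LSeries f s := by
  refine ⟨fun s ↦ s * (c + (s - 1) * mellin (sumError f c) (-s)),
    DifferentiableOn.analyticOnNhd (fun s hs ↦ ?_) (isOpen_lt continuous_const continuous_re),
    by simp, fun s hs ↦ ?_⟩
  · have := differentiableAt_mellin_sumError_neg hr hO hs
    exact DifferentiableAt.differentiableWithinAt (by fun_prop)
  · have hs1 : s - 1 ≠ 0 := sub_ne_zero.2 fun h ↦ by simp [h] at hs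
    rw [LSeries_eq_add_mellin_sumError hr hr1 hO hs (hf s hs)]
    field_simp

end

lemma tendsto_sub_mul_logDeriv_of_analyticOrderAt_eq {g : ℂ → ℂ} {z : ℂ} (hg : AnalyticAt ℂ g z)
    {k : ℕ} (hk : analyticOrderAt g z = k) :
    Tendsto (fun s ↦ (s - z) * logDeriv g s) (𝓝[≠] z) (𝓝 k) := by
  obtain ⟨u, hu, hu0, heq⟩ := hg.analyticOrderAt_eq_natCast.1 hk
  have hcont : ContinuousAt (fun s ↦ (k : ℂ) + (s - z) * logDeriv u s) z :=
    continuousAt_const.add ((continuousAt_id.sub continuousAt_const).mul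
      (hu.deriv.continuousAt.div hu.continuousAt hu0))
  have hlim := hcont.tendsto.mono_left (nhdsWithin_le_nhds (s := {z}ᶜ))
  simp only [sub_self, zero_mul, add_zero] at hlim
  refine hlim.congr' ?_
  filter_upwards [mem_nhdsWithin_of_mem_nhds (heq.eventually_nhds.and
    (hu.eventually_analyticAt.and (hu.continuousAt.eventually_ne hu0))),
    self_mem_nhdsWithin] with s ⟨hs, hus, hus0⟩ hsz
  have hsz' : s - z ≠ 0 := sub_ne_zero.2 hsz
  have hlog : logDeriv g s = k / (s - z) + logDeriv u s := by
    have hpow : logDeriv (fun s ↦ (s - z) ^ k) s = k / (s - z) := by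
      rw [logDeriv_fun_pow (by fun_prop), logDeriv_apply]
      simp [div_eq_mul_inv]
    rw [← hpow, ← logDeriv_mul (f := fun s ↦ (s - z) ^ k) s (pow_ne_zero k hsz') hus0
      (by fun_prop) hus.differentiableAt]
    exact congr_arg₂ (· / ·) (EventuallyEq.deriv_eq hs) hs.self_of_nhds
  rw [hlog]
  field_simp

/-- The residue at `1` of the L-series of `f`, encoded as a limit along reals approaching `1` from
the right, so that no continuation of the L-series is presupposed. -/
def HasLSeriesResidue (f : ℕ → ℂ) (ρ : ℂ) : Prop :=
  Tendsto (fun x : ℝ ↦ ((x : ℂ) - 1) * LSeries f x) (𝓝[>] 1) (𝓝 ρ)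

lemma tendsto_ofReal_nhdsGT_one : Tendsto (fun x : ℝ ↦ (x : ℂ)) (𝓝[>] 1) (𝓝[≠] 1) := by
  refine tendsto_nhdsWithin_iff.2 ⟨?_, ?_⟩
  · exact (continuous_ofReal.tendsto' 1 1 ofReal_one).mono_left nhdsWithin_le_nhds
  · filter_upwards [self_mem_nhdsWithin] with x (hx : 1 < x)
    exact ofReal_ne_one.2 hx.ne'

section

variable {f b : ℕ → ℂ} (hf : ∀ s : ℂ, 1 < s.re → LSeriesSummable f s)
include hf

lemma abscissaOfAbsConv_le_one_of_LSeriesSummable : LSeries.abscissaOfAbsConv f ≤ 1 :=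
  LSeries.abscissaOfAbsConv_le_of_forall_lt_LSeriesSummable
    (x := 1) fun y hy ↦ hf y (by simpa using hy)

lemma abscissaOfAbsConv_lt_re_of_LSeriesSummable {s : ℂ} (hs : 1 < s.re) :
    LSeries.abscissaOfAbsConv f < s.re :=
  (abscissaOfAbsConv_le_one_of_LSeriesSummable hf).trans_lt (by exact_mod_cast hs)

lemma logDeriv_LSeries_of_logMul_eq_convolution (hb : ∀ s : ℂ, 1 < s.re → LSeriesSummable b s)
    (hconv : LSeries.logMul f = LSeries.convolution f b) {s : ℂ} (hs : 1 < s.re)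
    (h0 : LSeries f s ≠ 0) : logDeriv (LSeries f) s = -LSeries b s := by
  rw [logDeriv_apply, LSeries_deriv (abscissaOfAbsConv_lt_re_of_LSeriesSummable hf hs), hconv,
    LSeries_convolution' (hf s hs) (hb s hs)]
  field_simp

lemma not_eventually_eq_zero_of_eq_sub_one_mul_LSeries (h1 : f 1 ≠ 0) {h : ℂ → ℂ} {r : ℝ}
    (hr : r < 1) (hana : AnalyticOnNhd ℂ h {s | r < s.re})
    (hh : ∀ s : ℂ, 1 < s.re → h s = (s - 1) * LSeries f s) : ¬ ∀ᶠ s in 𝓝 1, h s = 0 := by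
  intro hzero
  have hvanish := hana.eqOn_zero_of_preconnected_of_eventuallyEq_zero
    (convex_halfSpace_re_gt r).isPreconnected (by simpa using hr) hzero
  have hLzero : (fun x : ℝ ↦ LSeries f x) =ᶠ[atTop] 0 := by
    filter_upwards [eventually_gt_atTop 1] with x hx
    have hx0 : h x = 0 := hvanish (by simpa using hr.trans hx)
    rw [hh x (by simpa using hx), mul_eq_zero, sub_eq_zero, ofReal_eq_one] at hx0
    exact hx0.resolve_left hx.ne'
  rcases LSeries_eventually_eq_zero_iff'.1 hLzero with hcoeff | htop
  · exact h1 (hcoeff 1 one_ne_zero)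
  · have hle := abscissaOfAbsConv_le_one_of_LSeriesSummable hf
    exact absurd (htop ▸ hle) (by simp [← EReal.coe_one, EReal.coe_ne_top])

lemma exists_hasLSeriesResidue_one_sub (hb : ∀ s : ℂ, 1 < s.re → LSeriesSummable b s)
    (hconv : LSeries.logMul f = LSeries.convolution f b) (h1 : f 1 ≠ 0) {c : ℂ} {r : ℝ}
    (hr : 0 ≤ r) (hr1 : r < 1)
    (hO : (fun n : ℕ ↦ ∑ k ∈ Finset.Icc 1 n, f k - c * n) =O[atTop] fun n : ℕ ↦ (n : ℝ) ^ r) :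
    ∃ k : ℕ, (k = 0 ↔ c ≠ 0) ∧ HasLSeriesResidue b (1 - k) := by
  obtain ⟨h, hana, hone, hh⟩ := exists_continuation_sub_one_mul_LSeries hr hr1 hf hO
  have hana1 : AnalyticAt ℂ h 1 := hana 1 (by simpa using hr1)
  have hne := not_eventually_eq_zero_of_eq_sub_one_mul_LSeries hf h1 hr1 hana hh
  obtain ⟨k, hk⟩ := ENat.ne_top_iff_exists.1 (mt analyticOrderAt_eq_top.1 hne)
  refine ⟨k, ?_, ?_⟩
  · rw [← hone, ← hana1.analyticOrderAt_eq_zero, ← hk, Nat.cast_eq_zero]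
  have hlim := (tendsto_sub_mul_logDeriv_of_analyticOrderAt_eq hana1 hk.symm).comp
    tendsto_ofReal_nhdsGT_one
  refine (hlim.const_sub 1).congr' ?_
  filter_upwards [tendsto_ofReal_nhdsGT_one.eventually
    (hana1.eventually_eq_zero_or_eventually_ne_zero.resolve_left hne), self_mem_nhdsWithin]
    with x hx0 (hx : 1 < x)
  have hre : 1 < (x : ℂ).re := by simpa using hx
  have hx1 : (x : ℂ) - 1 ≠ 0 := sub_ne_zero.2 (ofReal_ne_one.2 hx.ne')
  have hL0 : LSeries f x ≠ 0 := right_ne_zero_of_mul (hh x hre ▸ hx0)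
  have hev : h =ᶠ[𝓝 (x : ℂ)] fun s ↦ (s - 1) * LSeries f s := by
    filter_upwards [(isOpen_lt continuous_const continuous_re).mem_nhds hre] with s hs
    exact hh s hs
  have hdiff : DifferentiableAt ℂ (LSeries f) x :=
    (LSeries_hasDerivAt (abscissaOfAbsConv_lt_re_of_LSeriesSummable hf hre)).differentiableAt
  have hlog : logDeriv h x = 1 / ((x : ℂ) - 1) - LSeries b x := by
    rw [logDeriv_apply, hev.deriv_eq, hev.self_of_nhds, ← logDeriv_apply,
      logDeriv_mul (f := fun s ↦ s - 1) _ hx1 hL0 (by fun_prop) hdiff,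
      logDeriv_LSeries_of_logMul_eq_convolution hf hb hconv hre hL0, sub_eq_add_neg]
    simp [logDeriv_apply]
  simp only [Function.comp_apply, hlog]
  field_simp
  ring

end

end LSeriesResidue

section VonMangoldtDomination

open Filter Topology Complex
open scoped ArithmeticFunction.vonMangoldt

lemma LSeries_term_ofReal (f : ℕ → ℝ) {x : ℝ} (hx : 0 < x) (n : ℕ) :
    LSeries.term (fun n ↦ (f n : ℂ)) x n = ((f n / (n : ℝ) ^ x : ℝ) : ℂ) := by
  rcases eq_or_ne n 0 with rfl | hn
  · simp [Real.zero_rpow hx.ne']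
  · rw [LSeries.term_of_ne_zero hn, ofReal_div, ofReal_cpow n.cast_nonneg, ofReal_natCast]

lemma LSeries_ofReal_eq_tsum (f : ℕ → ℝ) {x : ℝ} (hx : 0 < x) :
    LSeries (fun n ↦ (f n : ℂ)) x = ((∑' n : ℕ, f n / (n : ℝ) ^ x : ℝ) : ℂ) := by
  rw [LSeries, ofReal_tsum]
  exact tsum_congr (LSeries_term_ofReal f hx)

lemma hasLSeriesResidue_ofReal_iff {f : ℕ → ℝ} {ρ : ℝ} :
    HasLSeriesResidue (fun n ↦ (f n : ℂ)) ρ ↔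
      Tendsto (fun x : ℝ ↦ (x - 1) * ∑' n : ℕ, f n / (n : ℝ) ^ x) (𝓝[>] 1) (𝓝 ρ) := by
  rw [HasLSeriesResidue, ← tendsto_ofReal_iff (f := fun x : ℝ ↦ (x - 1) * ∑' n, f n / (n : ℝ) ^ x)]
  refine tendsto_congr' ?_
  filter_upwards [self_mem_nhdsWithin] with x (hx : 1 < x)
  rw [LSeries_ofReal_eq_tsum f (zero_lt_one.trans hx)]
  push_cast
  rfl

namespace HasLSeriesResidue

lemma unique {f : ℕ → ℂ} {ρ ρ' : ℂ} (h : HasLSeriesResidue f ρ) (h' : HasLSeriesResidue f ρ') :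
    ρ = ρ' :=
  tendsto_nhds_unique h h'

lemma nonneg {f : ℕ → ℝ} {ρ : ℝ} (h : HasLSeriesResidue (fun n ↦ (f n : ℂ)) ρ)
    (hf : ∀ n, 0 ≤ f n) : 0 ≤ ρ := by
  refine ge_of_tendsto (hasLSeriesResidue_ofReal_iff.1 h) ?_
  filter_upwards [self_mem_nhdsWithin] with x (hx : 1 < x)
  exact mul_nonneg (sub_nonneg.2 hx.le) (tsum_nonneg fun n ↦ div_nonneg (hf n) (by positivity))

lemma add {f g : ℕ → ℂ} {ρ σ : ℂ} (hf : ∀ s : ℂ, 1 < s.re → LSeriesSummable f s)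
    (hg : ∀ s : ℂ, 1 < s.re → LSeriesSummable g s) (h : HasLSeriesResidue f ρ)
    (h' : HasLSeriesResidue g σ) : HasLSeriesResidue (fun n ↦ f n + g n) (ρ + σ) := by
  refine (Filter.Tendsto.add h h').congr' ?_
  filter_upwards [self_mem_nhdsWithin] with x (hx : 1 < x)
  have hx' : 1 < (x : ℂ).re := by simpa using hx
  exact (mul_add _ _ _).symm.trans (congrArg _ (LSeries_add (hf x hx') (hg x hx')).symm)

lemma sum_mul {ι : Type*} {t : Finset ι} {c ρ : ι → ℂ} {f : ι → ℕ → ℂ}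
    (hf : ∀ i ∈ t, ∀ s : ℂ, 1 < s.re → LSeriesSummable (f i) s)
    (h : ∀ i ∈ t, HasLSeriesResidue (f i) (ρ i)) :
    HasLSeriesResidue (fun n ↦ ∑ i ∈ t, c i * f i n) (∑ i ∈ t, c i * ρ i) := by
  refine (tendsto_finsetSum t fun i hi ↦ (h i hi).const_mul (c i)).congr' ?_
  filter_upwards [self_mem_nhdsWithin] with x (hx : 1 < x)
  have hlin := LSeries_sum (S := t) (f := fun i ↦ c i • f i) (s := x)
    fun i hi ↦ (hf i hi x (by simpa using hx)).smul (c i)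
  have hfun : ∑ i ∈ t, c i • f i = fun n ↦ ∑ i ∈ t, c i * f i n := by
    ext n
    simp
  rw [← hfun, hlin, Finset.mul_sum]
  exact Finset.sum_congr rfl fun i _ ↦ by rw [LSeries_smul]; ring

lemma star {f : ℕ → ℂ} {ρ : ℂ} (h : HasLSeriesResidue f ρ) :
    HasLSeriesResidue (fun n ↦ star (f n)) (star ρ) := by
  refine ((continuous_star.tendsto ρ).comp h).congr fun x ↦ ?_
  rw [Function.comp_apply, star_mul', star_sub, star_one, star_def, conj_ofReal, LSeries, LSeries,
    conj_tsum]
  refine congr_arg _ (tsum_congr fun n ↦ ?_)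
  rcases eq_or_ne n 0 with rfl | hn
  · simp
  · rw [LSeries.term_of_ne_zero hn, LSeries.term_of_ne_zero hn, map_div₀, ← ofReal_natCast,
      ← ofReal_cpow n.cast_nonneg, conj_ofReal]

end HasLSeriesResidue

lemma tendsto_sub_one_mul_const (y : ℝ) :
    Tendsto (fun x : ℝ ↦ (x - 1) * y) (𝓝[>] 1) (𝓝 0) :=
  ((by fun_prop : Continuous fun x : ℝ ↦ (x - 1) * y).tendsto' 1 0 (by simp)).mono_left
    nhdsWithin_le_nhds

lemma LSeriesSummable_of_norm_le_vonMangoldt {f : ℕ → ℂ} {C : ℝ} (hf : ∀ n, ‖f n‖ ≤ C * Λ n)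
    {s : ℂ} (hs : 1 < s.re) : LSeriesSummable f s := by
  refine .of_norm_bounded ((ArithmeticFunction.LSeriesSummable_vonMangoldt hs).norm.mul_left C)
    fun n ↦ ?_
  rcases eq_or_ne n 0 with rfl | hn
  · simp
  · rw [LSeries.norm_term_eq, LSeries.norm_term_eq, if_neg hn, if_neg hn, norm_real,
      Real.norm_of_nonneg ArithmeticFunction.vonMangoldt_nonneg, ← mul_div_assoc]
    gcongr
    exact hf n

lemma summable_vonMangoldt_non_primes_div :
    Summable fun n : ℕ ↦ (if n.Prime then 0 else Λ n) / n := by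
  refine (ArithmeticFunction.vonMangoldt.summable_residueClass_non_primes_div
    (q := 1) 0).congr fun n ↦ ?_
  simp [ArithmeticFunction.vonMangoldt.residueClass, Subsingleton.elim (n : ZMod 1) 0]

variable {f : ℕ → ℝ} {C : ℝ} (hf0 : ∀ n, 0 ≤ f n) (hf : ∀ n, f n ≤ C * Λ n)
include hf0 hf

lemma LSeriesSummable_ofReal_of_le_vonMangoldt {s : ℂ} (hs : 1 < s.re) :
    LSeriesSummable (fun n ↦ (f n : ℂ)) s :=
  LSeriesSummable_of_norm_le_vonMangoldt
    (fun n ↦ by rw [norm_real, Real.norm_of_nonneg (hf0 n)]; exact hf n) hs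

lemma summable_div_rpow_of_le_vonMangoldt {x : ℝ} (hx : 1 < x) :
    Summable fun n : ℕ ↦ f n / (n : ℝ) ^ x :=
  summable_ofReal.1 <| (LSeriesSummable_ofReal_of_le_vonMangoldt hf0 hf
    (by simpa using hx : 1 < (x : ℂ).re)).congr (LSeries_term_ofReal f (zero_lt_one.trans hx))

lemma hasLSeriesResidue_zero_of_summable_div (hsum : Summable fun n : ℕ ↦ f n / n) :
    HasLSeriesResidue (fun n ↦ (f n : ℂ)) 0 := by
  rw [← ofReal_zero, hasLSeriesResidue_ofReal_iff]
  refine squeeze_zero' ?_ ?_ (tendsto_sub_one_mul_const (∑' n : ℕ, f n / n)) <;>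
    filter_upwards [self_mem_nhdsWithin] with x (hx : 1 < x)
  · exact mul_nonneg (sub_nonneg.2 hx.le) (tsum_nonneg fun n ↦ div_nonneg (hf0 n) (by positivity))
  · refine mul_le_mul_of_nonneg_left (Summable.tsum_le_tsum (fun n ↦ ?_)
      (summable_div_rpow_of_le_vonMangoldt hf0 hf hx) hsum) (sub_nonneg.2 hx.le)
    rcases n.eq_zero_or_pos with rfl | hn
    · simp [Real.zero_rpow (zero_lt_one.trans hx).ne']
    · have hn1 : (1 : ℝ) ≤ n := by exact_mod_cast hn
      exact div_le_div_of_nonneg_left (hf0 n) (by positivity)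
        (Real.self_le_rpow_of_one_le hn1 hx.le)

lemma hasLSeriesResidue_zero_of_eq_zero_of_prime {X : ℕ}
    (hX : ∀ p : ℕ, p.Prime → X < p → f p = 0) : HasLSeriesResidue (fun n ↦ (f n : ℂ)) 0 := by
  refine hasLSeriesResidue_zero_of_summable_div hf0 hf ?_
  have hsmall : Summable fun n : ℕ ↦ if n ≤ X then f n / n else 0 :=
    summable_of_hasFiniteSupport <| (Set.finite_Iic X).subset fun n hn ↦ by
      by_contra h
      exact hn (if_neg h)
  refine Summable.of_nonneg_of_le (fun n ↦ div_nonneg (hf0 n) n.cast_nonneg) (fun n ↦ ?_)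
    (hsmall.add (summable_vonMangoldt_non_primes_div.mul_left C))
  have hfn : 0 ≤ f n / n := div_nonneg (hf0 n) n.cast_nonneg
  have hle : f n / n ≤ C * (Λ n / n) := by
    rw [← mul_div_assoc]
    gcongr
    exact hf n
  by_cases hp : n.Prime <;> by_cases hn : n ≤ X <;> simp only [hp, hn, if_true, if_false]
  · simp
  · simp [hX n hp (not_le.1 hn)]
  · linarith
  · simpa using hle

lemma not_hasLSeriesResidue_zero_of_residueClass_le {Q : ℕ} [NeZero Q]
    (hQ : ∀ n, ArithmeticFunction.vonMangoldt.residueClass (1 : ZMod Q) n ≤ f n) :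
    ¬ HasLSeriesResidue (fun n ↦ (f n : ℂ)) 0 := by
  intro hres
  obtain ⟨D, hD⟩ := ArithmeticFunction.vonMangoldt.LSeries_residueClass_lower_bound
    (q := Q) (a := 1) isUnit_one
  rw [← ofReal_zero, hasLSeriesResidue_ofReal_iff] at hres
  have htot : (0 : ℝ) < (Q.totient : ℝ)⁻¹ := inv_pos.2 (mod_cast Q.totient.pos_of_neZero)
  refine absurd (ge_of_tendsto (b := (Q.totient : ℝ)⁻¹)
    (hres.add (tendsto_sub_one_mul_const D)) ?_) (by simpa using htot.not_ge)
  filter_upwards [Ioc_mem_nhdsGT (show (1 : ℝ) < 2 by norm_num)] with x hx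
  have hle := (hD hx).trans <| Summable.tsum_le_tsum
    (fun n ↦ div_le_div_of_nonneg_right (hQ n) (by positivity))
    (summable_div_rpow_of_le_vonMangoldt (C := 1)
      (ArithmeticFunction.vonMangoldt.residueClass_nonneg _)
      (fun n ↦ by simpa using ArithmeticFunction.vonMangoldt.residueClass_le (1 : ZMod Q) n) hx.1)
    (summable_div_rpow_of_le_vonMangoldt hf0 hf hx.1)
  have hlower := (div_le_iff₀ (sub_pos.2 hx.1)).1 (sub_le_iff_le_add.1 hle)
  linarith

lemma not_hasLSeriesResidue_zero_of_log_le {Q : ℕ} [NeZero Q]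
    (hQ : ∀ p : ℕ, p.Prime → (p : ZMod Q) = 1 → Real.log p ≤ f p) :
    ¬ HasLSeriesResidue (fun n ↦ (f n : ℂ)) 0 := by
  intro hres
  set u : ℕ → ℝ := fun n ↦ if n.Prime then 0 else Λ n with hu
  have hu0 (n : ℕ) : 0 ≤ u n := ite_nonneg le_rfl ArithmeticFunction.vonMangoldt_nonneg
  have hule (n : ℕ) : u n ≤ 1 * Λ n := by
    rw [one_mul]
    exact (ite_le_sup _ _ _).trans (sup_le ArithmeticFunction.vonMangoldt_nonneg le_rfl)
  have hures : HasLSeriesResidue (fun n ↦ (u n : ℂ)) 0 :=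
    hasLSeriesResidue_zero_of_eq_zero_of_prime hu0 hule (X := 0) fun p hp _ ↦ if_pos hp
  have hadd := HasLSeriesResidue.add
    (fun s hs ↦ LSeriesSummable_ofReal_of_le_vonMangoldt hf0 hf hs)
    (fun s hs ↦ LSeriesSummable_ofReal_of_le_vonMangoldt hu0 hule hs) hres hures
  refine not_hasLSeriesResidue_zero_of_residueClass_le (f := fun n ↦ f n + u n) (C := C + 1)
    (Q := Q) (fun n ↦ add_nonneg (hf0 n) (hu0 n))
    (fun n ↦ (add_le_add (hf n) (hule n)).trans_eq (add_mul C 1 (Λ n)).symm) (fun n ↦ ?_)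
    (by simpa using hadd)
  have hle := ArithmeticFunction.vonMangoldt.residueClass_le (1 : ZMod Q) n
  by_cases hp : n.Prime
  · by_cases hn : (n : ZMod Q) = 1
    · rw [ArithmeticFunction.vonMangoldt_apply_prime hp] at hle
      exact (hle.trans (hQ n hp hn)).trans (le_add_of_nonneg_right (hu0 n))
    · simpa [hu, hp, ArithmeticFunction.vonMangoldt.residueClass, hn] using hf0 n
  · exact hle.trans (by simpa [hu, hp] using hf0 n)

end VonMangoldtDomination

section EquidistributedGrading

open Filter Topology Complex Asymptotics
open scoped ArithmeticFunction.vonMangoldt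

section Twist

variable {G : Type*} [AddCommGroup G] [Fintype G]

/-- The twist of a `G`-graded family of arithmetic functions by a character of `G`. -/
noncomputable def addCharTwist (A : G → ℕ → ℝ) (ψ : AddChar G ℂ) (n : ℕ) : ℂ :=
  ∑ g, ψ g * (A g n : ℂ)

lemma addCharTwist_neg (A : G → ℕ → ℝ) (ψ : AddChar G ℂ) (n : ℕ) :
    addCharTwist A (-ψ) n = star (addCharTwist A ψ n) := by
  simp only [addCharTwist, star_sum, star_mul', star_def, conj_ofReal, AddChar.neg_apply,
    AddChar.map_neg_eq_conj]

lemma sum_mul_addCharTwist (A : G → ℕ → ℝ) (g : G) (n : ℕ) :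
    ∑ ψ : AddChar G ℂ, ψ (-g) / Fintype.card G * addCharTwist A ψ n = A g n := by
  classical
  have hcard : (Fintype.card G : ℂ) ≠ 0 := by simp
  calc ∑ ψ : AddChar G ℂ, ψ (-g) / Fintype.card G * addCharTwist A ψ n
      = ∑ h, (∑ ψ : AddChar G ℂ, ψ (h - g)) * ((A h n : ℂ) / Fintype.card G) := by
        simp_rw [addCharTwist, Finset.mul_sum, Finset.sum_mul]
        rw [Finset.sum_comm]
        refine Finset.sum_congr rfl fun h _ ↦ Finset.sum_congr rfl fun ψ _ ↦ ?_
        rw [sub_eq_add_neg, AddChar.map_add_eq_mul]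
        ring
    _ = A g n := by
        simp_rw [AddChar.sum_apply_eq_ite, sub_eq_zero]
        simp [field]

lemma logMul_addCharTwist_eq_convolution {A B : G → ℕ → ℝ}
    (hAB : ∀ g (n : ℕ), n ≠ 0 → Real.log n * A g n =
      ∑ d ∈ n.divisorsAntidiagonal, ∑ h, A h d.1 * B (g - h) d.2) (ψ : AddChar G ℂ) :
    LSeries.logMul (addCharTwist A ψ) =
      LSeries.convolution (addCharTwist A ψ) (addCharTwist B ψ) := by
  ext n
  rcases eq_or_ne n 0 with rfl | hn
  · simp [LSeries.logMul]
  rw [LSeries.convolution_def]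
  calc Complex.log n * ∑ g, ψ g * (A g n : ℂ)
      = ∑ g, ψ g * ((Real.log n * A g n : ℝ) : ℂ) := by
        rw [Finset.mul_sum]
        refine Finset.sum_congr rfl fun g _ ↦ ?_
        rw [ofReal_mul, ← natCast_log]
        ring
    _ = ∑ g, ∑ d ∈ n.divisorsAntidiagonal, ∑ h, ψ g * (A h d.1 * B (g - h) d.2 : ℂ) := by
        refine Finset.sum_congr rfl fun g _ ↦ ?_
        rw [hAB g n hn]
        push_cast
        simp_rw [Finset.mul_sum]
    _ = ∑ d ∈ n.divisorsAntidiagonal, ∑ h, ∑ g, ψ g * (A h d.1 * B (g - h) d.2 : ℂ) := by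
        rw [Finset.sum_comm]
        exact Finset.sum_congr rfl fun d _ ↦ Finset.sum_comm
    _ = ∑ d ∈ n.divisorsAntidiagonal, addCharTwist A ψ d.1 * addCharTwist B ψ d.2 := by
        refine Finset.sum_congr rfl fun d _ ↦ ?_
        simp_rw [addCharTwist, Finset.sum_mul]
        refine Finset.sum_congr rfl fun h _ ↦ ?_
        rw [Finset.mul_sum, ← Equiv.sum_comp (Equiv.addRight h)]
        refine Finset.sum_congr rfl fun g _ ↦ ?_
        simp only [Equiv.coe_addRight, add_sub_cancel_right, AddChar.map_add_eq_mul]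
        ring

lemma LSeriesSummable_addCharTwist {F : G → ℕ → ℝ}
    (hF : ∀ g, ∀ s : ℂ, 1 < s.re → LSeriesSummable (fun n ↦ (F g n : ℂ)) s) (ψ : AddChar G ℂ)
    {s : ℂ} (hs : 1 < s.re) : LSeriesSummable (addCharTwist F ψ) s := by
  have hsum := LSeriesSummable.sum (S := Finset.univ) (f := fun g ↦ ψ g • fun n ↦ (F g n : ℂ))
    (s := s) fun g _ ↦ (hF g s hs).smul (ψ g)
  convert hsum using 1
  ext n
  simp [addCharTwist]

lemma sum_addCharTwist_isBigO {A : G → ℕ → ℝ} {κ : ℝ} {u : ℕ → ℝ}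
    (hA : ∀ g, (fun n : ℕ ↦ ∑ k ∈ Finset.Icc 1 n, A g k - κ * n) =O[atTop] u)
    (ψ : AddChar G ℂ) :
    (fun n : ℕ ↦ ∑ k ∈ Finset.Icc 1 n, addCharTwist A ψ k - (∑ g, ψ g) * κ * n) =O[atTop] u := by
  have hterm : ∀ g ∈ Finset.univ, (fun n : ℕ ↦ ψ g *
      ((∑ k ∈ Finset.Icc 1 n, A g k - κ * n : ℝ) : ℂ)) =O[atTop] u := fun g _ ↦
    (isBigO_const_mul_self _ _ _).trans
      (isBigO_norm_left.1 (by simpa only [norm_real] using (hA g).norm_left))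
  refine (IsBigO.fun_sum hterm).congr_left fun n ↦ ?_
  simp_rw [addCharTwist]
  rw [Finset.sum_comm, Finset.sum_mul, Finset.sum_mul, ← Finset.sum_sub_distrib]
  refine Finset.sum_congr rfl fun g _ ↦ ?_
  push_cast
  rw [← Finset.mul_sum]
  ring

end Twist

/-- A family `A g` of nonnegative arithmetic functions graded by a finite abelian group `G`, with
asymptotically equal summatory functions up to a power saving, and `B` in the role of the graded von
Mangoldt function of `A`: the relation `log_mul_count` says that `B` is, after twisting by any
character, the negated logarithmic derivative of `A`. The model is `A g n`, the number of ideals of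
norm `n` in the class `g`. -/
structure IsEquidistributedGrading {G : Type*} [AddCommGroup G] [Fintype G] [DecidableEq G]
    (A B : G → ℕ → ℝ) (C κ r : ℝ) : Prop where
  count_nonneg (g : G) (n : ℕ) : 0 ≤ A g n
  weight_nonneg (g : G) (n : ℕ) : 0 ≤ B g n
  count_one (g : G) : A g 1 = if g = 0 then 1 else 0
  log_mul_count (g : G) (n : ℕ) : n ≠ 0 → Real.log n * A g n =
    ∑ d ∈ n.divisorsAntidiagonal, ∑ h, A h d.1 * B (g - h) d.2
  weight_le (g : G) (n : ℕ) : B g n ≤ C * Λ n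
  density_pos : 0 < κ
  exponent_nonneg : 0 ≤ r
  exponent_lt_one : r < 1
  isBigO (g : G) : (fun n : ℕ ↦ ∑ k ∈ Finset.Icc 1 n, A g k - κ * n) =O[atTop]
    fun n : ℕ ↦ (n : ℝ) ^ r

lemma exists_ne_eq_neg_one_of_sum_nonneg {ι : Type*} [Fintype ι] {m : ι → ℤ} {i j : ι}
    (hi : m i = 1) (hm : ∀ k ≠ i, m k ≤ 0) (hsum : 0 ≤ ∑ k, m k) (hji : j ≠ i) (hj : m j ≠ 0) :
    m j = -1 ∧ ∀ k ≠ i, k ≠ j → m k = 0 := by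
  classical
  have hj' : m j ≤ 0 := hm j hji
  rw [← Finset.add_sum_erase _ _ (Finset.mem_univ i),
    ← Finset.add_sum_erase _ _ (Finset.mem_erase.2 ⟨hji, Finset.mem_univ j⟩), hi] at hsum
  have hrest : ∀ k ∈ (Finset.univ.erase i).erase j, m k ≤ 0 := fun k hk ↦
    hm k (Finset.ne_of_mem_erase (Finset.mem_of_mem_erase hk))
  have hle := Finset.sum_nonpos hrest
  refine ⟨by omega, fun k hki hkj ↦ ?_⟩
  exact (Finset.sum_eq_zero_iff_of_nonpos hrest).1 (by omega) k (by simp [hki, hkj])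

namespace IsEquidistributedGrading

variable {G : Type*} [AddCommGroup G] [Fintype G] [DecidableEq G] {A B : G → ℕ → ℝ} {C κ r : ℝ}
  (h : IsEquidistributedGrading A B C κ r)
include h

lemma LSeriesSummable_count (g : G) {s : ℂ} (hs : 1 < s.re) :
    LSeriesSummable (fun n ↦ (A g n : ℂ)) s := by
  refine LSeriesSummable_of_sum_norm_bigO (r := 1) ?_ zero_le_one hs
  have hmain : (fun n : ℕ ↦ κ * (n : ℝ)) =O[atTop] fun n : ℕ ↦ (n : ℝ) ^ (1 : ℝ) := by
    simpa only [Real.rpow_one] using isBigO_const_mul_self κ _ _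
  refine (((h.isBigO g).trans (natCast_rpow_isBigO_of_le h.exponent_lt_one.le)).add
    hmain).congr_left fun n ↦ ?_
  simp only [norm_real, sub_add_cancel, Real.norm_of_nonneg (h.count_nonneg g _)]

lemma LSeriesSummable_weight (g : G) {s : ℂ} (hs : 1 < s.re) :
    LSeriesSummable (fun n ↦ (B g n : ℂ)) s :=
  LSeriesSummable_ofReal_of_le_vonMangoldt (h.weight_nonneg g) (h.weight_le g) hs

lemma exists_hasLSeriesResidue_addCharTwist (ψ : AddChar G ℂ) :
    ∃ m : ℤ, (ψ = 0 → m = 1) ∧ (ψ ≠ 0 → m ≤ 0) ∧ HasLSeriesResidue (addCharTwist B ψ) m := by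
  obtain ⟨k, hk, hres⟩ := exists_hasLSeriesResidue_one_sub
    (fun s hs ↦ LSeriesSummable_addCharTwist (fun g _ ↦ h.LSeriesSummable_count g) ψ hs)
    (fun s hs ↦ LSeriesSummable_addCharTwist (fun g _ ↦ h.LSeriesSummable_weight g) ψ hs)
    (logMul_addCharTwist_eq_convolution h.log_mul_count ψ)
    (by simp [addCharTwist, h.count_one, apply_ite ((↑) : ℝ → ℂ)])
    h.exponent_nonneg h.exponent_lt_one
    (sum_addCharTwist_isBigO h.isBigO ψ)
  have hκ : (κ : ℂ) ≠ 0 := ofReal_ne_zero.2 h.density_pos.ne'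
  have hk0 : k = 0 ↔ ψ = 0 := by
    rw [hk, mul_ne_zero_iff, and_iff_left hκ, ← not_iff_not, not_not,
      AddChar.sum_eq_zero_iff_ne_zero]
  refine ⟨1 - k, fun hψ ↦ by simp [hk0.2 hψ], fun hψ ↦ ?_, by exact_mod_cast hres⟩
  have := Nat.one_le_iff_ne_zero.2 (mt hk0.1 hψ)
  omega

/-- The residue at `1` of the negated logarithmic derivative of the twist by `ψ`, that is, minus
the order at `1` of the twisted L-series. -/
noncomputable def residue (ψ : AddChar G ℂ) : ℤ :=
  (h.exists_hasLSeriesResidue_addCharTwist ψ).choose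

lemma residue_zero : h.residue 0 = 1 :=
  (h.exists_hasLSeriesResidue_addCharTwist 0).choose_spec.1 rfl

lemma residue_nonpos {ψ : AddChar G ℂ} (hψ : ψ ≠ 0) : h.residue ψ ≤ 0 :=
  (h.exists_hasLSeriesResidue_addCharTwist ψ).choose_spec.2.1 hψ

lemma hasLSeriesResidue_addCharTwist (ψ : AddChar G ℂ) :
    HasLSeriesResidue (addCharTwist B ψ) (h.residue ψ) :=
  (h.exists_hasLSeriesResidue_addCharTwist ψ).choose_spec.2.2

lemma residue_neg (ψ : AddChar G ℂ) : h.residue (-ψ) = h.residue ψ := by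
  have hneg : HasLSeriesResidue (addCharTwist B (-ψ)) (star (h.residue ψ : ℂ)) := by
    simpa only [← addCharTwist_neg] using (h.hasLSeriesResidue_addCharTwist ψ).star
  simpa using (h.hasLSeriesResidue_addCharTwist (-ψ)).unique hneg

lemma hasLSeriesResidue_weight (g : G) : HasLSeriesResidue (fun n ↦ (B g n : ℂ))
    (∑ ψ : AddChar G ℂ, ψ (-g) / Fintype.card G * h.residue ψ) := by
  simpa only [sum_mul_addCharTwist] using HasLSeriesResidue.sum_mul (t := Finset.univ)
    (c := fun ψ : AddChar G ℂ ↦ ψ (-g) / Fintype.card G)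
    (fun ψ _ s hs ↦ LSeriesSummable_addCharTwist (fun g _ ↦ h.LSeriesSummable_weight g) ψ hs)
    fun ψ _ ↦ h.hasLSeriesResidue_addCharTwist ψ

lemma sum_residue_nonneg : 0 ≤ ∑ ψ, h.residue ψ := by
  have hres := h.hasLSeriesResidue_weight 0
  have heq : ∑ ψ : AddChar G ℂ, ψ (-0) / Fintype.card G * h.residue ψ =
      (((∑ ψ, h.residue ψ : ℤ) / Fintype.card G : ℝ) : ℂ) := by
    push_cast
    rw [Finset.sum_div]
    refine Finset.sum_congr rfl fun ψ _ ↦ ?_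
    rw [neg_zero, AddChar.map_zero_eq_one]
    ring
  rw [heq] at hres
  have hcard : (0 : ℝ) < Fintype.card G := by exact_mod_cast Fintype.card_pos
  have hsum := (le_div_iff₀ hcard).1 (hres.nonneg (h.weight_nonneg 0))
  rw [zero_mul] at hsum
  exact_mod_cast hsum

lemma not_forall_hasLSeriesResidue_zero {Q : ℕ} [NeZero Q]
    (hsq : ∀ p : ℕ, p.Prime → (p : ZMod Q) = 1 → ∃ g, Real.log p ≤ B (g + g) p) :
    ¬ ∀ g, HasLSeriesResidue (fun n ↦ (B (g + g) n : ℂ)) 0 := by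
  intro hzero
  have hres := HasLSeriesResidue.sum_mul (t := Finset.univ) (c := fun _ ↦ 1)
    (fun g _ s hs ↦ h.LSeriesSummable_weight (g + g) hs) fun g _ ↦ hzero g
  refine not_hasLSeriesResidue_zero_of_log_le (f := fun n ↦ ∑ g, B (g + g) n)
    (C := Fintype.card G * C) (Q := Q) (fun n ↦ Finset.sum_nonneg fun g _ ↦ h.weight_nonneg _ n)
    (fun n ↦ ?_) (fun p hp hpQ ↦ ?_) (by simpa using hres)
  · calc ∑ g, B (g + g) n ≤ ∑ _g : G, C * Λ n := Finset.sum_le_sum fun g _ ↦ h.weight_le _ n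
      _ = Fintype.card G * C * Λ n := by simp [mul_assoc]
  · obtain ⟨g, hg⟩ := hsq p hp hpQ
    exact hg.trans (Finset.single_le_sum (f := fun g ↦ B (g + g) p)
      (fun g _ ↦ h.weight_nonneg _ p) (Finset.mem_univ g))

lemma residue_eq_zero {Q : ℕ} [NeZero Q]
    (hsq : ∀ p : ℕ, p.Prime → (p : ZMod Q) = 1 → ∃ g, Real.log p ≤ B (g + g) p)
    {ψ : AddChar G ℂ} (hψ : ψ ≠ 0) : h.residue ψ = 0 := by
  by_contra hne
  obtain ⟨hψ1, huniq⟩ := exists_ne_eq_neg_one_of_sum_nonneg h.residue_zero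
    (fun _ hk ↦ h.residue_nonpos hk) h.sum_residue_nonneg hψ hne
  have hreal : -ψ = ψ := by
    by_contra hne'
    exact hne (h.residue_neg ψ ▸ huniq (-ψ) (neg_ne_zero.2 hψ) hne')
  have hval (g : G) : ψ (-(g + g)) = 1 := by
    have hneg : ψ (-g) = ψ g := by rw [← AddChar.neg_apply, hreal]
    rw [neg_add, AddChar.map_add_eq_mul]
    nth_rewrite 1 [hneg]
    rw [← AddChar.map_add_eq_mul, add_neg_cancel, AddChar.map_zero_eq_one]
  refine h.not_forall_hasLSeriesResidue_zero hsq fun g ↦ ?_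
  convert h.hasLSeriesResidue_weight (g + g)
  rw [Finset.sum_eq_add_of_mem 0 ψ (Finset.mem_univ _) (Finset.mem_univ _) hψ.symm
    fun χ _ hχ ↦ by simp [huniq χ hχ.1 hχ.2]]
  rw [hval, h.residue_zero, hψ1, AddChar.zero_apply]
  push_cast
  ring

theorem exists_prime_gt_weight_pos {Q : ℕ} [NeZero Q]
    (hsq : ∀ p : ℕ, p.Prime → (p : ZMod Q) = 1 → ∃ g, Real.log p ≤ B (g + g) p)
    (g : G) (X : ℕ) : ∃ p : ℕ, p.Prime ∧ X < p ∧ 0 < B g p := by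
  by_contra! hcon
  have hzero := hasLSeriesResidue_zero_of_eq_zero_of_prime (h.weight_nonneg g) (h.weight_le g)
    fun p hp hX ↦ le_antisymm (hcon p hp hX) (h.weight_nonneg g p)
  have heq := hzero.unique (h.hasLSeriesResidue_weight g)
  rw [Finset.sum_eq_single 0 (fun χ _ hχ ↦ by simp [h.residue_eq_zero hsq hχ])
    (fun h0 ↦ absurd (Finset.mem_univ _) h0)] at heq
  have hcard : (Fintype.card G : ℂ) ≠ 0 := by simp
  simp [h.residue_zero, hcard.symm] at heq

end IsEquidistributedGrading

end EquidistributedGrading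

section IdealVonMangoldt

open Filter Topology Asymptotics UniqueFactorizationMonoid
open scoped ArithmeticFunction.vonMangoldt

section Divisors

variable {R : Type*} [CommRing R] [IsDedekindDomain R]

open Classical in
/-- The divisors of a nonzero ideal. -/
noncomputable def idealDivisors (I : Ideal R) : Finset (Ideal R) :=
  (normalizedFactors I).powerset.toFinset.image Multiset.prod

lemma mem_idealDivisors {I : Ideal R} (hI : I ≠ 0) {D : Ideal R} :
    D ∈ idealDivisors I ↔ D ∣ I := by
  simp only [idealDivisors, Finset.mem_image, Multiset.mem_toFinset, Multiset.mem_powerset]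
  constructor
  · rintro ⟨s, hs, rfl⟩
    have hprod := associated_iff_eq.1 (prod_normalizedFactors hI)
    exact hprod ▸ Multiset.prod_dvd_prod_of_le hs
  · intro hD
    have hD0 : D ≠ 0 := ne_zero_of_dvd_ne_zero hI hD
    exact ⟨normalizedFactors D, (dvd_iff_normalizedFactors_le_normalizedFactors hD0 hI).1 hD,
      associated_iff_eq.1 (prod_normalizedFactors hD0)⟩

open Classical in
lemma pow_dvd_iff_le_count_normalizedFactors {P I : Ideal R} (hP : Prime P) (hI : I ≠ 0) {k : ℕ} :
    P ^ k ∣ I ↔ k ≤ (normalizedFactors I).count P := by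
  rw [pow_dvd_iff_le_emultiplicity, emultiplicity_eq_count_normalizedFactors hP.irreducible hI,
    normalize_eq, Nat.cast_le]

lemma ideal_radical_pow_of_prime {P : Ideal R} (hP : Prime P) {k : ℕ} (hk : k ≠ 0) :
    (P ^ k).radical = P := by
  rw [Ideal.radical_pow P hk, (Ideal.isPrime_of_prime hP).radical]

open Classical in
lemma sum_idealDivisors_eq_sum_prime_pow {M : Type*} [AddCommMonoid M] {I : Ideal R} (hI : I ≠ 0)
    {f : Ideal R → M} (hf : ∀ D, ¬ IsPrimePow D → f D = 0) :
    ∑ D ∈ idealDivisors I, f D = ∑ P ∈ (normalizedFactors I).toFinset,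
      ∑ k ∈ Finset.Icc 1 ((normalizedFactors I).count P), f (P ^ k) := by
  have hprime : ∀ P ∈ (normalizedFactors I).toFinset, Prime P := fun P hP ↦
    prime_of_normalized_factor P (Multiset.mem_toFinset.1 hP)
  rw [Finset.sum_sigma']
  symm
  refine Finset.sum_bij_ne_zero (fun x _ _ ↦ x.1 ^ x.2) ?_ ?_ ?_ fun _ _ _ ↦ rfl
  · rintro ⟨P, k⟩ h -
    rw [Finset.mem_sigma, Finset.mem_Icc] at h
    exact (mem_idealDivisors hI).2
      ((pow_dvd_iff_le_count_normalizedFactors (hprime P h.1) hI).2 h.2.2)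
  · rintro ⟨P, k⟩ hP - ⟨P', l⟩ hP' - heq
    simp only [Finset.mem_sigma, Finset.mem_Icc] at hP hP' heq
    obtain rfl : P = P' := by
      rw [← ideal_radical_pow_of_prime (hprime P hP.1) (Nat.one_le_iff_ne_zero.1 hP.2.1), heq,
        ideal_radical_pow_of_prime (hprime P' hP'.1) (Nat.one_le_iff_ne_zero.1 hP'.2.1)]
    have hpr := hprime P hP.1
    rw [pow_injective_of_not_isUnit hpr.not_isUnit hpr.ne_zero heq]
  · intro D hD hfD
    obtain ⟨P, k, hP, hk, rfl⟩ := of_not_not (mt (hf D) hfD)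
    have hk' := (pow_dvd_iff_le_count_normalizedFactors hP hI).1 ((mem_idealDivisors hI).1 hD)
    exact ⟨⟨P, k⟩, Finset.mem_sigma.2 ⟨Multiset.mem_toFinset.2
      (Multiset.count_pos.1 (hk.trans_le hk')), Finset.mem_Icc.2 ⟨hk, hk'⟩⟩, hfD, rfl⟩

end Divisors

variable {R : Type*} [CommRing R] [IsDedekindDomain R] [Module.Free ℤ R]

open Classical in
/-- The von Mangoldt function on ideals; the radical recovers the prime from its power. -/
noncomputable def idealVonMangoldt (I : Ideal R) : ℝ :=
  if IsPrimePow I then Real.log (Ideal.absNorm I.radical) else 0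

lemma idealVonMangoldt_pow {P : Ideal R} (hP : Prime P) {k : ℕ} (hk : k ≠ 0) :
    idealVonMangoldt (P ^ k) = Real.log (Ideal.absNorm P) := by
  rw [idealVonMangoldt, if_pos (hP.isPrimePow.pow hk), ideal_radical_pow_of_prime hP hk]

lemma idealVonMangoldt_of_prime {P : Ideal R} (hP : Prime P) :
    idealVonMangoldt P = Real.log (Ideal.absNorm P) := by
  simpa only [pow_one] using idealVonMangoldt_pow hP one_ne_zero

lemma idealVonMangoldt_nonneg (I : Ideal R) : 0 ≤ idealVonMangoldt I := by
  rw [idealVonMangoldt]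
  split_ifs
  exacts [Real.log_natCast_nonneg _, le_rfl]

lemma idealVonMangoldt_of_not_isPrimePow {I : Ideal R} (h : ¬ IsPrimePow I) :
    idealVonMangoldt I = 0 := if_neg h

variable [Module.Finite ℤ R]

lemma absNorm_ne_zero {I : Ideal R} (hI : I ≠ 0) : Ideal.absNorm I ≠ 0 :=
  mt Ideal.absNorm_eq_zero_iff.1 hI

lemma isPrimePow_absNorm {I : Ideal R} (hI : IsPrimePow I) : IsPrimePow (Ideal.absNorm I) := by
  obtain ⟨P, k, hP, hk, rfl⟩ := hI
  have : P.IsMaximal := (Ideal.isPrime_of_prime hP).isMaximal hP.ne_zero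
  obtain ⟨p, f, hf, -, hp, hnorm⟩ := Ideal.exists_prime_and_absNorm_eq_pow P
  rw [map_pow, hnorm, ← pow_mul]
  exact hp.isPrimePow.pow (mul_ne_zero hf.ne' hk.ne')

lemma sum_idealVonMangoldt_idealDivisors {I : Ideal R} (hI : I ≠ 0) :
    ∑ D ∈ idealDivisors I, idealVonMangoldt D = Real.log (Ideal.absNorm I) := by
  classical
  have hprime : ∀ P ∈ (normalizedFactors I).toFinset, Prime P := fun P hP ↦
    prime_of_normalized_factor P (Multiset.mem_toFinset.1 hP)
  have hpow : ∀ P ∈ (normalizedFactors I).toFinset,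
      ∑ k ∈ Finset.Icc 1 ((normalizedFactors I).count P), idealVonMangoldt (P ^ k) =
      Real.log ((Ideal.absNorm P : ℝ) ^ (normalizedFactors I).count P) := by
    intro P hP
    rw [Finset.sum_congr rfl fun k hk ↦ idealVonMangoldt_pow (hprime P hP)
      (Nat.one_le_iff_ne_zero.1 (Finset.mem_Icc.1 hk).1)]
    simp
  have hprod : (normalizedFactors I).prod = I := associated_iff_eq.1 (prod_normalizedFactors hI)
  rw [sum_idealDivisors_eq_sum_prime_pow hI fun D ↦ idealVonMangoldt_of_not_isPrimePow,
    Finset.sum_congr rfl hpow, ← Real.log_prod fun P hP ↦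
      pow_ne_zero _ (Nat.cast_ne_zero.2 (absNorm_ne_zero (hprime P hP).ne_zero))]
  conv_rhs => rw [← hprod, Finset.prod_multiset_count, map_prod]
  simp only [map_pow, Nat.cast_prod, Nat.cast_pow]

lemma eq_of_radical_eq_of_absNorm_eq {I J : Ideal R} (hI : IsPrimePow I) (hJ : IsPrimePow J)
    (hrad : I.radical = J.radical) (hnorm : Ideal.absNorm I = Ideal.absNorm J) : I = J := by
  obtain ⟨P, k, hP, hk, rfl⟩ := hI
  obtain ⟨P', l, hP', hl, rfl⟩ := hJ
  rw [ideal_radical_pow_of_prime hP hk.ne', ideal_radical_pow_of_prime hP' hl.ne'] at hrad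
  subst hrad
  have hone : 1 < Ideal.absNorm P := by
    have h0 := absNorm_ne_zero hP.ne_zero
    have h1 := mt Ideal.absNorm_eq_one_iff.1 (Ideal.isPrime_of_prime hP).ne_top
    omega
  rw [map_pow, map_pow] at hnorm
  rw [Nat.pow_right_injective hone hnorm]

variable [CharZero R]

variable (R) in
/-- The ideals of norm `n`. -/
noncomputable def idealsOfNorm (n : ℕ) : Finset (Ideal R) :=
  (Ideal.finite_setOfPred_absNorm_eq (S := R) n).toFinset

lemma mem_idealsOfNorm {n : ℕ} {I : Ideal R} : I ∈ idealsOfNorm R n ↔ Ideal.absNorm I = n := by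
  simp [idealsOfNorm]

lemma ne_zero_of_mem_idealsOfNorm {n : ℕ} (hn : n ≠ 0) {I : Ideal R} (hI : I ∈ idealsOfNorm R n) :
    I ≠ 0 := by
  rintro rfl
  exact hn (by simpa using (mem_idealsOfNorm.1 hI).symm)

lemma idealsOfNorm_one : idealsOfNorm R 1 = {1} := by
  ext I
  rw [mem_idealsOfNorm, Ideal.absNorm_eq_one_iff, Finset.mem_singleton, Ideal.one_eq_top]

-- For `n` a power of `p`, the prime powers of norm `n` have distinct radicals, all dividing `(p)`.
lemma sum_idealVonMangoldt_idealsOfNorm_le (n : ℕ) :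
    ∑ I ∈ idealsOfNorm R n, idealVonMangoldt I ≤ Module.finrank ℤ R * Λ n := by
  classical
  by_cases hn : IsPrimePow n
  swap
  · refine (Finset.sum_eq_zero fun I hI ↦ idealVonMangoldt_of_not_isPrimePow fun h ↦ hn ?_).trans_le
      (mul_nonneg (Nat.cast_nonneg _) ArithmeticFunction.vonMangoldt_nonneg)
    exact mem_idealsOfNorm.1 hI ▸ isPrimePow_absNorm h
  obtain ⟨p, k, hp, hk, rfl⟩ := hn
  have hp0 : Ideal.span {(p : R)} ≠ 0 := by
    simpa [Ideal.span_singleton_eq_bot] using hp.ne_zero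
  calc ∑ I ∈ idealsOfNorm R (p ^ k), idealVonMangoldt I
      = ∑ I ∈ idealsOfNorm R (p ^ k) with IsPrimePow I, idealVonMangoldt I.radical := by
        rw [Finset.sum_filter]
        refine Finset.sum_congr rfl fun I _ ↦ ?_
        split_ifs with h
        · obtain ⟨P, l, hP, hl, rfl⟩ := h
          rw [ideal_radical_pow_of_prime hP hl.ne', idealVonMangoldt_pow hP hl.ne',
            idealVonMangoldt_of_prime hP]
        · exact idealVonMangoldt_of_not_isPrimePow h
    _ = ∑ D ∈ (idealsOfNorm R (p ^ k)).filter (IsPrimePow ·) |>.image Ideal.radical,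
          idealVonMangoldt D := by
        refine (Finset.sum_image fun I hI J hJ hIJ ↦ ?_).symm
        simp only [Finset.coe_filter, mem_idealsOfNorm, Set.mem_ofPred_eq] at hI hJ
        exact eq_of_radical_eq_of_absNorm_eq hI.2 hJ.2 hIJ (hI.1.trans hJ.1.symm)
    _ ≤ ∑ D ∈ idealDivisors (Ideal.span {(p : R)}), idealVonMangoldt D := by
        refine Finset.sum_le_sum_of_subset_of_nonneg (fun D hD ↦ ?_)
          fun D _ _ ↦ idealVonMangoldt_nonneg D
        obtain ⟨I, hI, rfl⟩ := Finset.mem_image.1 hD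
        rw [Finset.mem_filter, mem_idealsOfNorm] at hI
        rw [mem_idealDivisors hp0, Ideal.dvd_span_singleton]
        refine Ideal.mem_radical_iff.2 ⟨k, ?_⟩
        exact_mod_cast hI.1 ▸ Ideal.absNorm_mem I
    _ = Module.finrank ℤ R * Λ (p ^ k) := by
        rw [sum_idealVonMangoldt_idealDivisors hp0, Ideal.absNorm_span_natCast, Nat.cast_pow,
          Real.log_pow, ArithmeticFunction.vonMangoldt_apply_pow hk.ne',
          ArithmeticFunction.vonMangoldt_apply_prime hp.nat_prime]

lemma sum_divisorsAntidiagonal_idealsOfNorm {M : Type*} [AddCommMonoid M] {n : ℕ} (hn : n ≠ 0)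
    (f : Ideal R → Ideal R → M) :
    ∑ d ∈ n.divisorsAntidiagonal, ∑ J ∈ idealsOfNorm R d.1, ∑ D ∈ idealsOfNorm R d.2, f (J * D) D =
      ∑ I ∈ idealsOfNorm R n, ∑ D ∈ idealDivisors I, f I D := by
  have hne : ∀ I : Ideal R, Ideal.absNorm I = n → I ≠ 0 := fun I hI ↦
    ne_zero_of_mem_idealsOfNorm hn (mem_idealsOfNorm.2 hI)
  simp only [Finset.sum_sigma']
  refine Finset.sum_bij (fun x _ ↦ ⟨x.2.1 * x.2.2, x.2.2⟩) ?_ ?_ ?_ fun _ _ ↦ rfl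
  · rintro ⟨d, J, D⟩ h
    simp only [Finset.mem_sigma, mem_idealsOfNorm, Nat.mem_divisorsAntidiagonal] at h ⊢
    have hJD : Ideal.absNorm (J * D) = n := by rw [map_mul, h.2.1, h.2.2, h.1.1]
    exact ⟨hJD, (mem_idealDivisors (hne _ hJD)).2 (dvd_mul_left _ _)⟩
  · rintro ⟨d, J, D⟩ h ⟨d', J', D'⟩ h' heq
    simp only [Finset.mem_sigma, mem_idealsOfNorm, Nat.mem_divisorsAntidiagonal] at h h'
    simp only [Sigma.mk.injEq, heq_eq_eq] at heq
    obtain ⟨hmul, rfl⟩ := heq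
    have hD : D ≠ 0 := by
      rintro rfl
      exact hn (by rw [← h.1.1, ← h.2.2]; simp)
    obtain rfl := mul_right_cancel₀ hD hmul
    obtain rfl : d = d' := Prod.ext (h.2.1.symm.trans h'.2.1) (h.2.2.symm.trans h'.2.2)
    rfl
  · rintro ⟨I, D⟩ h
    simp only [Finset.mem_sigma, mem_idealsOfNorm] at h
    obtain ⟨J, rfl⟩ := (mem_idealDivisors (hne I h.1)).1 h.2
    refine ⟨⟨(Ideal.absNorm J, Ideal.absNorm D), J, D⟩, ?_, by simp only [mul_comm]⟩
    simp only [Finset.mem_sigma, mem_idealsOfNorm, Nat.mem_divisorsAntidiagonal, and_true]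
    exact ⟨by rw [← h.1, map_mul, mul_comm], hn⟩

lemma sum_Icc_sum_idealsOfNorm_filter (s : Ideal R → Prop) [DecidablePred s] (hs : ¬ s 0) (n : ℕ) :
    ∑ k ∈ Finset.Icc 1 n, ((idealsOfNorm R k).filter s).card =
      Nat.card {I : Ideal R // s I ∧ Ideal.absNorm I ≤ n} := by
  classical
  rw [← Finset.card_biUnion fun k _ l _ hkl ↦ Finset.disjoint_left.2 fun I hk hl ↦ hkl ?_,
    ← Nat.card_eq_finsetCard]
  · refine Nat.card_congr (Equiv.subtypeEquivRight fun I ↦ ?_)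
    simp only [Finset.mem_biUnion, Finset.mem_filter, mem_idealsOfNorm, Finset.mem_Icc]
    constructor
    · rintro ⟨k, hk, rfl, hI⟩
      exact ⟨hI, hk.2⟩
    · rintro ⟨hI, hn⟩
      exact ⟨_, ⟨Nat.one_le_iff_ne_zero.2 (absNorm_ne_zero fun h ↦ hs (h ▸ hI)), hn⟩, rfl, hI⟩
  · rw [Finset.mem_filter, mem_idealsOfNorm] at hk hl
    exact hk.1.symm.trans hl.1

lemma sum_ite_mul_ite_sub {G : Type*} [CommGroup G] [Fintype G] [DecidableEq G] (x y : WithZero G)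
    (g : Additive G) (c : ℝ) :
    ∑ h : Additive G, (if x = (h.toMul : G) then 1 else 0) *
      (if y = ((g - h).toMul : G) then c else 0) = if x * y = (g.toMul : G) then c else 0 := by
  rcases eq_or_ne x 0 with rfl | hx
  · simp
  obtain ⟨j, rfl⟩ := WithZero.ne_zero_iff_exists.1 hx
  rw [Finset.sum_eq_single (Additive.ofMul j)]
  · rw [toMul_ofMul, if_pos rfl, one_mul]
    refine if_congr ?_ rfl rfl
    rw [toMul_sub, toMul_ofMul, WithZero.coe_div, eq_div_iff WithZero.coe_ne_zero, mul_comm]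
  · intro h _ hne
    rw [if_neg, zero_mul]
    rw [WithZero.coe_inj]
    rintro rfl
    exact hne rfl
  · simp

section Grading

variable {G : Type*} [CommGroup G] (cl : Ideal R →*₀ WithZero G)

open Classical in
/-- The sum of `w` over the ideals of norm `n` in the class `g`. The classes are written additively
to fit `IsEquidistributedGrading`, and `cl I = 0` means that `I` has no class. -/
noncomputable def idealClassSum (w : Ideal R → ℝ) (g : Additive G) (n : ℕ) : ℝ :=
  ∑ I ∈ idealsOfNorm R n, if cl I = (g.toMul : G) then w I else 0

lemma idealClassSum_nonneg {w : Ideal R → ℝ} (hw : ∀ I, 0 ≤ w I) (g : Additive G) (n : ℕ) :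
    0 ≤ idealClassSum cl w g n :=
  Finset.sum_nonneg fun I _ ↦ by split_ifs; exacts [hw I, le_rfl]

lemma idealClassSum_le_sum {w : Ideal R → ℝ} (hw : ∀ I, 0 ≤ w I) (g : Additive G) (n : ℕ) :
    idealClassSum cl w g n ≤ ∑ I ∈ idealsOfNorm R n, w I :=
  Finset.sum_le_sum fun I _ ↦ by split_ifs; exacts [le_rfl, hw I]

lemma le_idealClassSum {w : Ideal R → ℝ} (hw : ∀ I, 0 ≤ w I) {g : Additive G} {I : Ideal R}
    (hI : cl I = (g.toMul : G)) : w I ≤ idealClassSum cl w g (Ideal.absNorm I) := by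
  classical
  calc w I = if cl I = (g.toMul : G) then w I else 0 := (if_pos hI).symm
    _ ≤ _ := Finset.single_le_sum
      (f := fun I ↦ if cl I = ((g.toMul : G) : WithZero G) then w I else 0)
      (fun I _ ↦ by split_ifs; exacts [hw I, le_rfl]) (mem_idealsOfNorm.2 rfl)

lemma exists_of_idealClassSum_ne_zero {w : Ideal R → ℝ} {g : Additive G} {n : ℕ}
    (h : idealClassSum cl w g n ≠ 0) : ∃ I, cl I = (g.toMul : G) ∧ Ideal.absNorm I = n := by
  obtain ⟨I, hI, hne⟩ := Finset.exists_ne_zero_of_sum_ne_zero h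
  exact ⟨I, of_not_not fun hcl ↦ hne (if_neg hcl), mem_idealsOfNorm.1 hI⟩

lemma idealClassSum_one_one [DecidableEq G] (g : Additive G) :
    idealClassSum cl 1 g 1 = if g = 0 then 1 else 0 := by
  have hiff : ((1 : G) : WithZero G) = (g.toMul : G) ↔ g = 0 := by
    rw [WithZero.coe_inj, eq_comm, toMul_eq_one]
  simp only [idealClassSum, idealsOfNorm_one, Finset.sum_singleton, map_one, ← WithZero.coe_one,
    hiff, Pi.one_apply]

lemma sum_Icc_idealClassSum_one (g : G) (n : ℕ) :
    ∑ k ∈ Finset.Icc 1 n, idealClassSum cl 1 (Additive.ofMul g) k =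
      Nat.card {I : Ideal R // cl I = g ∧ Ideal.absNorm I ≤ n} := by
  classical
  rw [← sum_Icc_sum_idealsOfNorm_filter (fun I ↦ cl I = g)
    (by rw [map_zero]; exact WithZero.zero_ne_coe) n]
  simp [idealClassSum]

lemma log_mul_idealClassSum_one [Fintype G] (g : Additive G) {n : ℕ} (hn : n ≠ 0) :
    Real.log n * idealClassSum cl 1 g n = ∑ d ∈ n.divisorsAntidiagonal,
      ∑ h, idealClassSum cl 1 h d.1 * idealClassSum cl idealVonMangoldt (g - h) d.2 := by
  classical
  calc Real.log n * idealClassSum cl 1 g n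
      = ∑ I ∈ idealsOfNorm R n, ∑ D ∈ idealDivisors I,
          if cl I = (g.toMul : G) then idealVonMangoldt D else 0 := by
        rw [idealClassSum, Finset.mul_sum]
        refine Finset.sum_congr rfl fun I hI ↦ ?_
        split_ifs
        · rw [sum_idealVonMangoldt_idealDivisors (ne_zero_of_mem_idealsOfNorm hn hI),
            mem_idealsOfNorm.1 hI, Pi.one_apply, mul_one]
        · simp
    _ = ∑ d ∈ n.divisorsAntidiagonal, ∑ J ∈ idealsOfNorm R d.1, ∑ D ∈ idealsOfNorm R d.2,
          if cl (J * D) = (g.toMul : G) then idealVonMangoldt D else 0 :=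
        (sum_divisorsAntidiagonal_idealsOfNorm hn fun I D ↦
          if cl I = (g.toMul : G) then idealVonMangoldt D else 0).symm
    _ = ∑ d ∈ n.divisorsAntidiagonal,
          ∑ h, idealClassSum cl 1 h d.1 * idealClassSum cl idealVonMangoldt (g - h) d.2 := by
        refine Finset.sum_congr rfl fun d _ ↦ ?_
        simp only [idealClassSum, Finset.sum_mul_sum, Pi.one_apply]
        symm
        rw [Finset.sum_comm]
        refine Finset.sum_congr rfl fun J _ ↦ ?_
        rw [Finset.sum_comm]
        refine Finset.sum_congr rfl fun D _ ↦ ?_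
        rw [map_mul, sum_ite_mul_ite_sub]

lemma isEquidistributedGrading_idealClassSum [Fintype G] [DecidableEq G] {κ r : ℝ} (hκ : 0 < κ)
    (hr0 : 0 ≤ r) (hr1 : r < 1)
    (hcount : ∀ g : G, (fun n : ℕ ↦
      (Nat.card {I : Ideal R // cl I = g ∧ Ideal.absNorm I ≤ n} : ℝ) - κ * n) =O[atTop]
      fun n : ℕ ↦ (n : ℝ) ^ r) :
    IsEquidistributedGrading (idealClassSum cl 1) (idealClassSum cl idealVonMangoldt)
      (Module.finrank ℤ R) κ r where
  count_nonneg := idealClassSum_nonneg cl fun _ ↦ zero_le_one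
  weight_nonneg := idealClassSum_nonneg cl idealVonMangoldt_nonneg
  count_one := idealClassSum_one_one cl
  log_mul_count g _ hn := log_mul_idealClassSum_one cl g hn
  weight_le g n := (idealClassSum_le_sum cl idealVonMangoldt_nonneg g n).trans
    (sum_idealVonMangoldt_idealsOfNorm_le n)
  density_pos := hκ
  exponent_nonneg := hr0
  exponent_lt_one := hr1
  isBigO g := (hcount g.toMul).congr_left fun n ↦ by
    rw [← sum_Icc_idealClassSum_one, ofMul_toMul]

theorem exists_prime_absNorm_of_card_isBigO [Finite G] {κ r : ℝ} (hκ : 0 < κ)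
    (hr0 : 0 ≤ r) (hr1 : r < 1)
    (hcount : ∀ g : G, (fun n : ℕ ↦
      (Nat.card {I : Ideal R // cl I = g ∧ Ideal.absNorm I ≤ n} : ℝ) - κ * n) =O[atTop]
      fun n : ℕ ↦ (n : ℝ) ^ r) {Q : ℕ} [NeZero Q]
    (hsq : ∀ p : ℕ, p.Prime → (p : ZMod Q) = 1 → ∃ g : G, ∃ I : Ideal R,
      cl I = (g * g : G) ∧ Ideal.absNorm I = p)
    (g : G) (X : ℕ) : ∃ I : Ideal R, cl I = g ∧ (Ideal.absNorm I).Prime ∧ X < Ideal.absNorm I := by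
  classical
  have := Fintype.ofFinite G
  have hgrading := isEquidistributedGrading_idealClassSum cl hκ hr0 hr1 hcount
  have hlog : ∀ p : ℕ, p.Prime → (p : ZMod Q) = 1 →
      ∃ g : Additive G, Real.log p ≤ idealClassSum cl idealVonMangoldt (g + g) p := by
    intro p hp hpQ
    obtain ⟨g, I, hI, rfl⟩ := hsq p hp hpQ
    rw [← idealVonMangoldt_of_prime
      (irreducible_iff_prime.1 (Ideal.irreducible_of_irreducible_absNorm hp))]
    exact ⟨Additive.ofMul g, le_idealClassSum cl idealVonMangoldt_nonneg hI⟩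
  obtain ⟨p, hp, hX, hpos⟩ := hgrading.exists_prime_gt_weight_pos hlog (Additive.ofMul g) X
  obtain ⟨I, hI, rfl⟩ := exists_of_idealClassSum_ne_zero cl hpos.ne'
  exact ⟨I, hI, hp, hX⟩

end Grading

end IdealVonMangoldt

section RingClassGroup

/-- The nonzero elements of `R` congruent modulo `m` to a rational integer coprime to `m`. They
generate the principal ideals whose ring class modulo `m` is trivial. -/
def IsRationalUnitMod {R : Type*} [CommRing R] (m : ℕ) (α : R) : Prop :=
  α ≠ 0 ∧ ∃ k : ℤ, IsCoprime k m ∧ (m : R) ∣ α - k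

namespace IsRationalUnitMod

variable {R : Type*} [CommRing R] {m : ℕ} {α β γ : R}

lemma natCast [CharZero R] {k : ℕ} (hk : k ≠ 0) (h : k.Coprime m) :
    IsRationalUnitMod m (k : R) :=
  ⟨Nat.cast_ne_zero.2 hk, k, Nat.isCoprime_iff_coprime.2 h, by simp⟩

lemma one [Nontrivial R] : IsRationalUnitMod m (1 : R) :=
  ⟨one_ne_zero, 1, isCoprime_one_left, by simp⟩

lemma mul [NoZeroDivisors R] (hα : IsRationalUnitMod m α) (hβ : IsRationalUnitMod m β) :
    IsRationalUnitMod m (α * β) := by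
  obtain ⟨hα0, k, hk, hα⟩ := hα
  obtain ⟨hβ0, l, hl, hβ⟩ := hβ
  refine ⟨mul_ne_zero hα0 hβ0, k * l, hk.mul_left hl, ?_⟩
  rw [show α * β - ((k * l : ℤ) : R) = (α - k) * β + k * (β - l) by push_cast; ring]
  exact dvd_add (hα.mul_right β) (hβ.mul_left _)

lemma of_mul_left (hα : IsRationalUnitMod m α) (h : IsRationalUnitMod m (α * γ)) :
    IsRationalUnitMod m γ := by
  obtain ⟨-, k, ⟨u, v, huv⟩, hα⟩ := hα
  obtain ⟨hαγ, l, hl, h⟩ := h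
  have hu : IsCoprime u m := ⟨k, v, by linarith⟩
  refine ⟨right_ne_zero_of_mul hαγ, u * l, hu.mul_left hl, ?_⟩
  have huv' : ((u * k + v * m : ℤ) : R) = 1 := by rw [huv]; simp
  push_cast at huv'
  have : γ - ((u * l : ℤ) : R) = m * (v * γ) - (α - k) * (u * γ) + u * (α * γ - l) := by
    push_cast
    linear_combination -γ * huv'
  rw [this]
  exact dvd_add (dvd_sub (dvd_mul_right _ _) (hα.mul_right _)) (h.mul_left _)

lemma isCoprime_span (hα : IsRationalUnitMod m α) :
    IsCoprime (Ideal.span {α}) (Ideal.span {(m : R)}) := by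
  rw [Ideal.isCoprime_span_singleton_iff]
  obtain ⟨-, k, hk, c, hc⟩ := hα
  have hkm : IsCoprime (k : R) (m : R) := by simpa using hk.map (Int.castRingHom R)
  rw [show α = k + m * c by linear_combination hc]
  exact hkm.add_mul_left_left c

end IsRationalUnitMod

lemma coprime_absNorm_of_isCoprime_span {R : Type*} [CommRing R] [IsDedekindDomain R]
    [Module.Free ℤ R] [Module.Finite ℤ R] {m : ℕ} {I : Ideal R}
    (h : IsCoprime I (Ideal.span {(m : R)})) : (Ideal.absNorm I).Coprime m := by
  refine Nat.Coprime.symm (Nat.coprime_of_dvd fun p hp hpm hpI ↦ ?_)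
  obtain ⟨P, hP, hPp, hPI⟩ := Ideal.exists_isMaximal_dvd_of_dvd_absNorm' hp I hpI
  have hpP : algebraMap ℤ R p ∈ P := hPp.ge (Ideal.mem_span_singleton_self (p : ℤ))
  refine hP.ne_top (top_le_iff.1 ((Ideal.isCoprime_iff_sup_eq.1 h).ge.trans ?_))
  refine sup_le (Ideal.le_of_dvd hPI) ((Ideal.span_singleton_le_iff_mem _).2 ?_)
  rw [map_natCast] at hpP
  exact P.mem_of_dvd (Nat.cast_dvd_cast hpm) hpP

variable {R : Type*} [CommRing R] [IsDedekindDomain R]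

variable (R) in
/-- The monoid of nonzero ideals coprime to `m`. -/
def coprimeIdeals (m : ℕ) : Submonoid (Ideal R) where
  carrier := {I | I ≠ 0 ∧ IsCoprime I (Ideal.span {(m : R)})}
  one_mem' := ⟨one_ne_zero, isCoprime_one_left⟩
  mul_mem' h h' := ⟨mul_ne_zero h.1 h'.1, h.2.mul_left h'.2⟩

lemma mul_mem_coprimeIdeals_iff {m : ℕ} {I J : Ideal R} :
    I * J ∈ coprimeIdeals R m ↔ I ∈ coprimeIdeals R m ∧ J ∈ coprimeIdeals R m := by
  change _ ∧ _ ↔ (_ ∧ _) ∧ (_ ∧ _)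
  rw [mul_ne_zero_iff, IsCoprime.mul_left_iff]
  tauto

lemma IsRationalUnitMod.span_mem_coprimeIdeals {m : ℕ} {α : R} (hα : IsRationalUnitMod m α) :
    Ideal.span {α} ∈ coprimeIdeals R m :=
  ⟨by simpa using hα.1, hα.isCoprime_span⟩

variable (R) in
/-- Two ideals coprime to `m` are in the same ring class modulo `m` if they differ by a quotient
of elements which are rational units modulo `m`. -/
def ringClassCon (m : ℕ) : Con (coprimeIdeals R m) where
  r I J := ∃ α β : R, IsRationalUnitMod m α ∧ IsRationalUnitMod m β ∧
    Ideal.span {α} * (I : Ideal R) = Ideal.span {β} * J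
  iseqv :=
    { refl := fun _ ↦ ⟨1, 1, .one, .one, rfl⟩
      symm := fun ⟨α, β, hα, hβ, h⟩ ↦ ⟨β, α, hβ, hα, h.symm⟩
      trans := by
        rintro I J L ⟨α, β, hα, hβ, h⟩ ⟨γ, δ, hγ, hδ, h'⟩
        refine ⟨γ * α, β * δ, hγ.mul hα, hβ.mul hδ, ?_⟩
        rw [← Ideal.span_singleton_mul_span_singleton, ← Ideal.span_singleton_mul_span_singleton,
          mul_assoc, h, mul_left_comm, h', mul_assoc] }
  mul' := by
    rintro I J L M ⟨α, β, hα, hβ, h⟩ ⟨γ, δ, hγ, hδ, h'⟩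
    refine ⟨α * γ, β * δ, hα.mul hγ, hβ.mul hδ, ?_⟩
    rw [← Ideal.span_singleton_mul_span_singleton, ← Ideal.span_singleton_mul_span_singleton,
      Submonoid.coe_mul, Submonoid.coe_mul, mul_mul_mul_comm, h, h', mul_mul_mul_comm]

variable (R) in
/-- The ring class group of conductor `m`: ideals coprime to `m`, modulo the principal ideals
generated by rational units modulo `m`. -/
def RingClassGroup (m : ℕ) : Type _ := (ringClassCon R m).Quotient

namespace RingClassGroup

variable {m : ℕ}

instance : CommMonoid (RingClassGroup R m) :=
  inferInstanceAs (CommMonoid (ringClassCon R m).Quotient)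

variable (R m) in
/-- The ring class of an ideal coprime to `m`. -/
def mk : coprimeIdeals R m →* RingClassGroup R m := (ringClassCon R m).mk'

lemma mk_surjective : Function.Surjective (mk R m) := (ringClassCon R m).mk'_surjective

lemma mk_eq_one_iff {I : coprimeIdeals R m} :
    mk R m I = 1 ↔ ∃ γ : R, IsRationalUnitMod m γ ∧ (I : Ideal R) = Ideal.span {γ} := by
  rw [← map_one (mk R m)]
  refine (Con.eq _).trans ⟨?_, fun ⟨γ, hγ, h⟩ ↦ ⟨1, γ, .one, hγ, by simpa using h⟩⟩
  rintro ⟨α, β, hα, hβ, h⟩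
  rw [Submonoid.coe_one, mul_one] at h
  obtain ⟨γ, rfl⟩ : α ∣ β := Ideal.mem_span_singleton.1
    (Ideal.mul_le_left (J := I) (h.ge (Ideal.mem_span_singleton_self β)))
  rw [← Ideal.span_singleton_mul_span_singleton] at h
  exact ⟨γ, hα.of_mul_left hβ, mul_left_cancel₀ (by simpa using hα.1) h⟩

variable [Module.Free ℤ R] [Module.Finite ℤ R] [CharZero R]

-- The cofactor of `I` in the ideal generated by its norm is an inverse of the class of `I`.
lemma exists_mul_eq_one (x : RingClassGroup R m) : ∃ y, y * x = 1 := by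
  obtain ⟨I, rfl⟩ := mk_surjective x
  obtain ⟨J, hJ⟩ := Ideal.dvd_span_singleton.2 (Ideal.absNorm_mem (I : Ideal R))
  have hn : IsRationalUnitMod m (Ideal.absNorm (I : Ideal R) : R) :=
    .natCast (absNorm_ne_zero I.2.1) (coprime_absNorm_of_isCoprime_span I.2.2)
  have hIJ : (I : Ideal R) * J ∈ coprimeIdeals R m := hJ ▸ hn.span_mem_coprimeIdeals
  refine ⟨mk R m ⟨J, (mul_mem_coprimeIdeals_iff.1 hIJ).2⟩, ?_⟩
  rw [← map_mul, mk_eq_one_iff]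
  exact ⟨_, hn, by rw [hJ, Submonoid.coe_mul, mul_comm]⟩

noncomputable instance : CommGroup (RingClassGroup R m) where
  inv x := (exists_mul_eq_one x).choose
  inv_mul_cancel x := (exists_mul_eq_one x).choose_spec

end RingClassGroup

variable [Module.Free ℤ R] [Module.Finite ℤ R] [CharZero R] {m : ℕ}

open Classical in
variable (R m) in
/-- The ring class of an ideal, extended by zero to the ideals not coprime to `m`. -/
noncomputable def ringClass : Ideal R →*₀ WithZero (RingClassGroup R m) where
  toFun I := if h : I ∈ coprimeIdeals R m then ↑(RingClassGroup.mk R m ⟨I, h⟩) else 0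
  map_zero' := dif_neg fun h ↦ h.1 rfl
  map_one' := (dif_pos (one_mem _)).trans (congrArg _ (map_one _))
  map_mul' I J := by
    by_cases h : I ∈ coprimeIdeals R m ∧ J ∈ coprimeIdeals R m
    · rw [dif_pos h.1, dif_pos h.2, dif_pos (mul_mem h.1 h.2), ← WithZero.coe_mul, ← map_mul]
      rfl
    · rw [dif_neg (mul_mem_coprimeIdeals_iff.not.2 h)]
      rcases not_and_or.1 h with hI | hJ
      · rw [dif_neg hI, zero_mul]
      · rw [dif_neg hJ, mul_zero]

lemma ringClass_of_mem {I : Ideal R} (h : I ∈ coprimeIdeals R m) :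
    ringClass R m I = RingClassGroup.mk R m ⟨I, h⟩ :=
  dif_pos h

lemma ringClass_ne_zero_iff {I : Ideal R} : ringClass R m I ≠ 0 ↔ I ∈ coprimeIdeals R m := by
  by_cases h : I ∈ coprimeIdeals R m
  · simp [ringClass_of_mem h, h]
  · have : ringClass R m I = 0 := dif_neg h
    simp [this, h]

lemma mem_coprimeIdeals_of_ringClass_eq {I : Ideal R} {g : RingClassGroup R m}
    (h : ringClass R m I = g) : I ∈ coprimeIdeals R m :=
  ringClass_ne_zero_iff.1 (h ▸ WithZero.coe_ne_zero)

lemma exists_ringClass_eq (g : RingClassGroup R m) : ∃ I, ringClass R m I = g := by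
  obtain ⟨I, rfl⟩ := RingClassGroup.mk_surjective g
  exact ⟨I, ringClass_of_mem I.2⟩

lemma ringClass_eq_one_iff {I : Ideal R} :
    ringClass R m I = 1 ↔ ∃ γ : R, IsRationalUnitMod m γ ∧ I = Ideal.span {γ} := by
  refine ⟨fun h ↦ ?_, fun ⟨γ, hγ, hI⟩ ↦ ?_⟩
  · have hI := ringClass_ne_zero_iff.1 (h.trans_ne one_ne_zero)
    rw [ringClass_of_mem hI, ← WithZero.coe_one, WithZero.coe_inj] at h
    exact RingClassGroup.mk_eq_one_iff.1 h
  · have hI' : I ∈ coprimeIdeals R m := hI ▸ hγ.span_mem_coprimeIdeals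
    rw [ringClass_of_mem hI', ← WithZero.coe_one, WithZero.coe_inj]
    exact RingClassGroup.mk_eq_one_iff.2 ⟨γ, hγ, hI⟩

end RingClassGroup

section LatticePointCount

open MeasureTheory Metric Module Submodule
open scoped Pointwise

variable {E : Type*} [NormedAddCommGroup E]

lemma biUnion_vadd_subset_closedBall {F : Set E} {D : ℝ} (hD : F ⊆ closedBall 0 D)
    {S : Set E} {r : ℝ} (hS : ∀ z ∈ S, ‖z‖ ≤ r) : ⋃ z ∈ S, z +ᵥ F ⊆ closedBall 0 (r + D) := by
  refine Set.iUnion₂_subset fun z hz ↦ ?_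
  rintro _ ⟨w, hw, rfl⟩
  rw [mem_closedBall_zero_iff]
  exact (norm_add_le z w).trans (add_le_add (hS z hz) (mem_closedBall_zero_iff.1 (hD hw)))

variable [NormedSpace ℝ E]

section FundamentalDomain

variable {ι : Type*} (b : Basis ι ℝ E)

lemma pairwiseDisjoint_vadd_fundamentalDomain [Finite ι] {S : Set E} {x : E}
    (hS : ∀ z ∈ S, z - x ∈ span ℤ (Set.range b)) :
    S.PairwiseDisjoint fun z ↦ z +ᵥ ZSpan.fundamentalDomain b := by
  intro z hz z' hz' hne
  refine Set.disjoint_left.2 fun w hw hw' ↦ hne ?_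
  rw [Set.mem_vadd_set_iff_neg_vadd_mem] at hw hw'
  have hzz' : z - z' ∈ span ℤ (Set.range b) := by simpa using sub_mem (hS z hz) (hS z' hz')
  have := (ZSpan.exist_unique_vadd_mem_fundamentalDomain b (-z +ᵥ w)).unique
    (y₁ := 0) (y₂ := ⟨z - z', hzz'⟩) (by rwa [zero_vadd]) (by
      convert hw' using 1
      simp only [Submodule.vadd_def, vadd_eq_add]
      abel)
  exact sub_eq_zero.1 (congrArg Subtype.val this).symm

lemma closedBall_subset_biUnion_vadd_fundamentalDomain [Finite ι] {D : ℝ}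
    (hD : ZSpan.fundamentalDomain b ⊆ closedBall 0 D) (x : E) (r : ℝ) :
    closedBall 0 (r - D) ⊆
      ⋃ z ∈ {z | z - x ∈ span ℤ (Set.range b) ∧ ‖z‖ ≤ r}, z +ᵥ ZSpan.fundamentalDomain b := by
  intro w hw
  obtain ⟨v, hv, -⟩ := ZSpan.exist_unique_vadd_mem_fundamentalDomain b (w - x)
  rw [Submodule.vadd_def, vadd_eq_add] at hv
  refine Set.mem_biUnion (x := x - v) ⟨by simp, ?_⟩ ?_
  · calc ‖x - v‖ = ‖w - (v + (w - x))‖ := by congr 1; abel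
      _ ≤ (r - D) + D := (norm_sub_le _ _).trans
          (add_le_add (mem_closedBall_zero_iff.1 hw) (mem_closedBall_zero_iff.1 (hD hv)))
      _ = r := by ring
  · rw [Set.mem_vadd_set_iff_neg_vadd_mem]
    convert hv using 1
    simp only [vadd_eq_add]
    abel

end FundamentalDomain

variable [FiniteDimensional ℝ E]

lemma finite_sub_mem_norm_le (L : Submodule ℤ E) [DiscreteTopology L] (x : E) (r : ℝ) :
    {z | z - x ∈ L ∧ ‖z‖ ≤ r}.Finite := by
  have : DiscreteTopology L.toAddSubgroup := ‹_›
  have hL : IsClosed (L : Set E) := AddSubgroup.isClosed_of_discrete (H := L.toAddSubgroup)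
  refine ((finite_isBounded_inter_isClosed DiscreteTopology.isDiscrete
    (isBounded_closedBall (x := -x) (r := r)) hL).image (· + x)).subset fun z hz ↦ ⟨z - x, ?_⟩
  simpa [dist_eq_norm] using And.comm.1 hz

variable [MeasurableSpace E] [BorelSpace E] (μ : Measure E) [μ.IsAddHaarMeasure]

lemma card_mul_covolume_mem_Icc {ι : Type*} [Finite ι] (b : Basis ι ℝ E) {D : ℝ}
    (hD : ZSpan.fundamentalDomain b ⊆ closedBall 0 D) (x : E) (r : ℝ) :
    Nat.card {z // z - x ∈ span ℤ (Set.range b) ∧ ‖z‖ ≤ r} *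
        ZLattice.covolume (span ℤ (Set.range b)) μ ∈
      Set.Icc (μ.real (closedBall 0 (r - D))) (μ.real (closedBall 0 (r + D))) := by
  set S := {z | z - x ∈ span ℤ (Set.range b) ∧ ‖z‖ ≤ r} with hS
  have hfin : S.Finite := finite_sub_mem_norm_le _ x r
  have hF : μ (ZSpan.fundamentalDomain b) ≠ ⊤ :=
    measure_ne_top_of_subset hD measure_closedBall_lt_top.ne
  have hvol : μ.real (⋃ z ∈ S, z +ᵥ ZSpan.fundamentalDomain b) =
      Nat.card S * ZLattice.covolume (span ℤ (Set.range b)) μ := by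
    have hdisj := pairwiseDisjoint_vadd_fundamentalDomain b fun z (hz : z ∈ S) ↦ hz.1
    rw [← hfin.coe_toFinset] at hdisj
    have := measureReal_biUnion_finset (μ := μ) hdisj
      (fun z _ ↦ (ZSpan.fundamentalDomain_measurableSet b).const_vadd z)
      (fun z _ ↦ by rwa [measure_vadd])
    simp only [hfin.mem_toFinset, measureReal_def, measure_vadd] at this
    rw [measureReal_def, this, Finset.sum_const, nsmul_eq_mul,
      Nat.card_eq_card_finite_toFinset hfin,
      ZLattice.covolume_eq_measure_fundamentalDomain _ μ (ZSpan.isAddFundamentalDomain b μ),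
      measureReal_def]
  have hsub : ⋃ z ∈ S, z +ᵥ ZSpan.fundamentalDomain b ⊆ closedBall 0 (r + D) :=
    biUnion_vadd_subset_closedBall hD fun z hz ↦ hz.2
  have hcover := closedBall_subset_biUnion_vadd_fundamentalDomain b hD x r
  have htop : μ (closedBall (0 : E) (r + D)) ≠ ⊤ := measure_closedBall_lt_top.ne
  rw [← Set.coe_ofPred, ← hS, ← hvol]
  exact ⟨measureReal_mono hcover (measure_ne_top_of_subset hsub htop),
    measureReal_mono hsub htop⟩

lemma abs_add_pow_sub_pow_le {r D s : ℝ} (hr : 0 ≤ r) (hs : |s| ≤ D) (hrs : 0 ≤ r + s) (n : ℕ) :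
    |(r + s) ^ n - r ^ n| ≤ D * n * (D + 1) ^ (n - 1) * (r + 1) ^ (n - 1) := by
  have hD : 0 ≤ D := (abs_nonneg s).trans hs
  have hmax : max |r + s| |r| ≤ (D + 1) * (r + 1) := by
    rw [abs_of_nonneg hr, abs_of_nonneg hrs]
    have := le_abs_self s
    exact max_le (by nlinarith) (by nlinarith)
  calc |(r + s) ^ n - r ^ n| ≤ |r + s - r| * n * max |r + s| |r| ^ (n - 1) := abs_pow_sub_pow_le ..
    _ ≤ D * n * ((D + 1) * (r + 1)) ^ (n - 1) := by
      rw [add_sub_cancel_left]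
      gcongr
    _ = _ := by rw [mul_pow, ← mul_assoc]

lemma exists_abs_card_mul_covolume_sub_le {ι : Type*} [Finite ι] (b : Basis ι ℝ E) :
    ∃ C, ∀ x r, 0 ≤ r → |Nat.card {z // z - x ∈ span ℤ (Set.range b) ∧ ‖z‖ ≤ r} *
        ZLattice.covolume (span ℤ (Set.range b)) μ - μ.real (ball 0 1) * r ^ finrank ℝ E| ≤
      C * (r + 1) ^ (finrank ℝ E - 1) := by
  obtain ⟨D, hD0, hD⟩ := (ZSpan.fundamentalDomain_isBounded b).subset_closedBall_lt 0 0
  set n := finrank ℝ E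
  refine ⟨μ.real (ball 0 1) * (D * n * (D + 1) ^ (n - 1) + D ^ n), fun x r hr ↦ ?_⟩
  obtain ⟨hlower, hupper⟩ := card_mul_covolume_mem_Icc μ b hD x r
  set c : ℝ := (Nat.card {z // z - x ∈ span ℤ (Set.range b) ∧ ‖z‖ ≤ r} : ℝ) *
    ZLattice.covolume (span ℤ (Set.range b)) μ
  set B := μ.real (ball (0 : E) 1)
  set K : ℝ := D * n * (D + 1) ^ (n - 1) * (r + 1) ^ (n - 1)
  set K' : ℝ := D ^ n * (r + 1) ^ (n - 1)
  have hB : 0 ≤ B := measureReal_nonneg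
  have hK : 0 ≤ K := by positivity
  have hK' : D ^ n ≤ K' := le_mul_of_one_le_right (by positivity) (one_le_pow₀ (by linarith))
  have hDn : 0 ≤ D ^ n := pow_nonneg hD0.le n
  rw [mul_assoc, add_mul, abs_le]
  constructor
  · suffices B * (r ^ n - (K + K')) ≤ c by linarith
    rcases le_total D r with hDr | hrD
    · rw [Measure.addHaar_real_closedBall μ 0 (sub_nonneg.2 hDr), mul_comm] at hlower
      have := neg_le_of_abs_le (abs_add_pow_sub_pow_le (s := -D) hr
        (by rw [abs_neg, abs_of_pos hD0]) (by linarith) n)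
      rw [← sub_eq_add_neg] at this
      exact le_trans (by gcongr; linarith) hlower
    · have : r ^ n ≤ D ^ n := by gcongr
      exact (mul_nonpos_of_nonneg_of_nonpos hB (by linarith)).trans
        (measureReal_nonneg.trans hlower)
  · suffices c ≤ B * (r ^ n + (K + K')) by linarith
    rw [Measure.addHaar_real_closedBall μ 0 (by positivity), mul_comm] at hupper
    have := le_of_abs_le (abs_add_pow_sub_pow_le hr (abs_of_pos hD0).le (by positivity) n)
    exact hupper.trans (by gcongr; linarith)

theorem exists_abs_card_sub_le (L : Submodule ℤ E) [DiscreteTopology L] [IsZLattice ℝ L] :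
    ∃ C, ∀ x r, 0 ≤ r → |Nat.card {z // z - x ∈ L ∧ ‖z‖ ≤ r} -
      μ.real (ball 0 1) / ZLattice.covolume L μ * r ^ finrank ℝ E| ≤
        C * (r + 1) ^ (finrank ℝ E - 1) := by
  have := ZLattice.module_free ℝ L
  have := ZLattice.module_finite ℝ L
  let b := (Free.chooseBasis ℤ L).ofZLatticeBasis ℝ L
  have hb : span ℤ (Set.range b) = L := (Free.chooseBasis ℤ L).ofZLatticeBasis_span ℝ
  obtain ⟨C, hC⟩ := exists_abs_card_mul_covolume_sub_le μ b
  have hV : 0 < ZLattice.covolume L μ := ZLattice.covolume_pos L μ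
  have hdiff (c B t : ℝ) : c - B / ZLattice.covolume L μ * t =
      (c * ZLattice.covolume L μ - B * t) / ZLattice.covolume L μ := by field_simp
  refine ⟨C / ZLattice.covolume L μ, fun x r hr ↦ ?_⟩
  have h := hC x r hr
  simp only [hb] at h
  rw [hdiff, abs_div, abs_of_pos hV, div_mul_eq_mul_div]
  gcongr

end LatticePointCount

section CountingRingClasses

open Filter Asymptotics

variable {R : Type*} [CommRing R]

section Residues

lemma natCast_dvd_intCast_iff [CharZero R] [Module.Free ℤ R] [Module.Finite ℤ R] {m : ℕ} {k : ℤ} :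
    (m : R) ∣ (k : R) ↔ (m : ℤ) ∣ k := by
  refine ⟨fun ⟨α, hα⟩ ↦ ?_, fun h ↦ by simpa using Int.cast_dvd_cast (α := R) _ _ h⟩
  have b := Module.finBasis ℤ R
  have hnorm (l : ℤ) : Algebra.norm ℤ (l : R) = l ^ Module.finrank ℤ R := by
    simpa using Algebra.norm_algebraMap_of_basis b l
  refine (Int.pow_dvd_pow_iff (Module.finrank_pos (R := ℤ) (M := R)).ne').1 ⟨Algebra.norm ℤ α, ?_⟩
  rw [← hnorm, ← hnorm, ← map_mul, hα, Int.cast_natCast]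

lemma sub_mul_mem_span_mul_iff {m e t : R} {J : Ideal R} (heJ : e ∈ J) (he : e = 1 - m * t)
    {α k : R} : α - e * k ∈ Ideal.span {m} * J ↔ α ∈ J ∧ m ∣ α - k := by
  rw [Ideal.mem_span_singleton_mul]
  constructor
  · rintro ⟨j, hj, hα⟩
    refine ⟨?_, j - t * k, by linear_combination k * he - hα⟩
    rw [show α = m * j + e * k by rw [hα]; ring]
    exact J.add_mem (J.mul_mem_left _ hj) (J.mul_mem_right _ heJ)
  · rintro ⟨hα, b, hb⟩
    refine ⟨t * α + b * e, J.add_mem (J.mul_mem_left _ hα) (J.mul_mem_left _ heJ), ?_⟩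
    linear_combination α * he - e * hb

variable [CharZero R] [Module.Free ℤ R] [Module.Finite ℤ R]

lemma isRationalUnitMod_iff_exists_unit {m : ℕ} (hm : 1 < m) {α : R} :
    IsRationalUnitMod m α ↔ ∃ u : (ZMod m)ˣ, (m : R) ∣ α - (u : ZMod m).val := by
  have : NeZero m := ⟨by lia⟩
  constructor
  · rintro ⟨-, k, hk, hα⟩
    obtain ⟨u, hu⟩ := (ZMod.coe_int_isUnit_iff_isCoprime k m).2 hk.symm
    refine ⟨u, ?_⟩
    have hku : (m : R) ∣ ((k - (u : ZMod m).val : ℤ) : R) := natCast_dvd_intCast_iff.2 <| by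
      rw [← ZMod.intCast_zmod_eq_zero_iff_dvd]
      simp [hu]
    simpa using dvd_add hα hku
  · rintro ⟨u, hu⟩
    have hk : IsCoprime ((u : ZMod m).val : ℤ) m :=
      ((ZMod.coe_int_isUnit_iff_isCoprime _ m).1 (by simp)).symm
    refine ⟨?_, (u : ZMod m).val, hk, by simpa using hu⟩
    rintro rfl
    have hmu : (m : ℤ) ∣ (u : ZMod m).val := by
      rw [← dvd_neg, ← natCast_dvd_intCast_iff (R := R)]
      simpa using hu
    have := Int.isUnit_iff.1 (hk.isUnit_of_dvd' hmu dvd_rfl)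
    lia

lemma exists_embedding_units_quotient {m : ℕ} (hm : 1 < m) {J : Ideal R}
    (hJ : IsCoprime J (Ideal.span {(m : R)})) :
    ∃ b : (ZMod m)ˣ ↪ R ⧸ Ideal.span {(m : R)} * J, ∀ α : R,
      IsRationalUnitMod m α ∧ α ∈ J ↔ ∃ u, Ideal.Quotient.mk _ α = b u := by
  have : NeZero m := ⟨by lia⟩
  obtain ⟨e, heJ, t', ht', he⟩ := Ideal.isCoprime_iff_exists.1 hJ
  obtain ⟨t, rfl⟩ := Ideal.mem_span_singleton.1 ht'
  have hmem (α k : R) := sub_mul_mem_span_mul_iff (α := α) (k := k) heJ (eq_sub_of_add_eq he)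
  refine ⟨⟨fun u ↦ Ideal.Quotient.mk _ (e * ((u : ZMod m).val : R)), fun u v huv ↦ ?_⟩,
    fun α ↦ ?_⟩
  · have hdvd := dvd_sub ((hmem _ _).1 (Ideal.Quotient.eq.1 huv)).2
      ((hmem (e * ((u : ZMod m).val : R)) (u : ZMod m).val).1 (by rw [sub_self]; simp)).2
    have : (m : ℤ) ∣ (u : ZMod m).val - (v : ZMod m).val := by
      rw [← natCast_dvd_intCast_iff (R := R)]
      simpa using hdvd
    rw [← ZMod.intCast_zmod_eq_zero_iff_dvd] at this
    exact Units.ext (by simpa [sub_eq_zero] using this)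
  · rw [isRationalUnitMod_iff_exists_unit hm, and_comm, ← exists_and_left]
    exact exists_congr fun u ↦ (hmem _ _).symm.trans Ideal.Quotient.eq.symm

end Residues

variable [IsDedekindDomain R] [Module.Free ℤ R]

section ImaginaryQuadratic

open MeasureTheory

/-- An embedding of `R` into `ℂ` which is not real and for which the norm is the square of the
absolute value, as for the ring of integers of an imaginary quadratic field. -/
class IsImaginaryQuadratic (φ : R →+* ℂ) : Prop where
  absNorm_span (α : R) : (Ideal.absNorm (Ideal.span {α}) : ℝ) = ‖φ α‖ ^ 2
  exists_im_ne_zero : ∃ α, (φ α).im ≠ 0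

/-- The image of an ideal in `ℂ`, a lattice in the sense of `IsZLattice` if the ideal is nonzero. -/
def idealLattice (φ : R →+* ℂ) (I : Ideal R) : Submodule ℤ ℂ :=
  AddSubgroup.toIntSubmodule (I.toAddSubgroup.map (φ : R →+ ℂ))

namespace IsImaginaryQuadratic

variable (φ : R →+* ℂ) [IsImaginaryQuadratic φ]

lemma norm_le_sqrt_iff {α : R} {X : ℕ} :
    ‖φ α‖ ≤ √X ↔ Ideal.absNorm (Ideal.span {α}) ≤ X := by
  rw [Real.le_sqrt (norm_nonneg _) (Nat.cast_nonneg _), ← absNorm_span, Nat.cast_le]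

variable [Module.Finite ℤ R]

lemma one_le_norm {α : R} (hα : α ≠ 0) : 1 ≤ ‖φ α‖ := by
  have : 1 ≤ Ideal.absNorm (Ideal.span {α}) :=
    Nat.one_le_iff_ne_zero.2 (absNorm_ne_zero (by simpa using hα))
  rw [← one_le_sq_iff₀ (norm_nonneg _), ← absNorm_span]
  exact_mod_cast this

lemma injective : Function.Injective φ := by
  refine (injective_iff_map_eq_zero φ).2 fun α hα ↦ ?_
  by_contra h
  have := one_le_norm φ h
  norm_num [hα] at this

instance (I : Ideal R) : DiscreteTopology (idealLattice φ I) := by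
  refine .of_forall_le_norm one_pos ?_
  rintro ⟨_, α, hα, rfl⟩ h
  exact one_le_norm φ fun h0 ↦ h (Subtype.ext (by simp [h0]))

include φ in
lemma finite_absNorm_span_le (X : ℕ) :
    {α : R | Ideal.absNorm (Ideal.span {α}) ≤ X}.Finite :=
  ((finite_sub_mem_norm_le (idealLattice φ ⊤) 0 √X).preimage (injective φ).injOn).subset
    fun α hα ↦ ⟨⟨α, trivial, (sub_zero _).symm⟩, (norm_le_sqrt_iff φ).2 hα⟩

include φ in
lemma finite_units : Finite Rˣ := by
  have := (finite_absNorm_span_le φ 1).to_subtype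
  refine Finite.of_injective (β := {α : R | Ideal.absNorm (Ideal.span {α}) ≤ 1})
    (fun u ↦ ⟨u, ?_⟩) fun u v huv ↦ Units.ext (congrArg Subtype.val huv)
  change Ideal.absNorm _ ≤ 1
  rw [Ideal.span_singleton_eq_top.2 u.isUnit, Ideal.absNorm_top]

variable {I : Ideal R}

-- The lattice contains `n` and `n α`, where `n` is the norm of `I` and `φ α` is not real.
lemma span_idealLattice_eq_top (hI : I ≠ 0) :
    Submodule.span ℝ (idealLattice φ I : Set ℂ) = ⊤ := by
  obtain ⟨α, hα⟩ := exists_im_ne_zero (φ := φ)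
  set n := Ideal.absNorm I
  have hn : (n : ℝ) ≠ 0 := Nat.cast_ne_zero.2 (absNorm_ne_zero hI)
  have h1 : φ n ∈ Submodule.span ℝ (idealLattice φ I : Set ℂ) :=
    Submodule.subset_span ⟨n, Ideal.absNorm_mem I, rfl⟩
  have h2 : φ (n * α) ∈ Submodule.span ℝ (idealLattice φ I : Set ℂ) :=
    Submodule.subset_span ⟨n * α, I.mul_mem_right _ (Ideal.absNorm_mem I), rfl⟩
  refine eq_top_iff.2 fun z _ ↦ ?_
  have hz : z = ((z.re - z.im / (φ α).im * (φ α).re) / n : ℝ) • φ n +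
      (z.im / (φ α).im / n : ℝ) • φ (n * α) := by
    apply Complex.ext
    · simp only [Complex.add_re, Complex.smul_re, smul_eq_mul, map_natCast, map_mul,
        Complex.natCast_re, Complex.natCast_im, Complex.mul_re]
      field_simp
      ring
    · simp only [Complex.add_im, Complex.smul_im, smul_eq_mul, map_natCast, map_mul,
        Complex.natCast_re, Complex.natCast_im, Complex.mul_im]
      field_simp
      ring
  rw [hz]
  exact add_mem (Submodule.smul_mem _ _ h1) (Submodule.smul_mem _ _ h2)

lemma covolume_idealLattice (hI : I ≠ 0) :
    ZLattice.covolume (idealLattice φ I) =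
      Ideal.absNorm I * ZLattice.covolume (idealLattice φ ⊤) := by
  have : IsZLattice ℝ (idealLattice φ I) := ⟨span_idealLattice_eq_top φ hI⟩
  have : IsZLattice ℝ (idealLattice φ ⊤) := ⟨span_idealLattice_eq_top φ top_ne_bot⟩
  have h := ZLattice.covolume_div_covolume_eq_relIndex' (idealLattice φ I) (idealLattice φ ⊤)
    (AddSubgroup.map_mono le_top)
  have hindex : (idealLattice φ I).toAddSubgroup.relIndex (idealLattice φ ⊤).toAddSubgroup =
      Ideal.absNorm I :=
    (AddSubgroup.relIndex_map_map_of_injective _ _ (injective φ)).trans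
      (AddSubgroup.relIndex_top_right _)
  rwa [hindex, div_eq_iff (ZLattice.covolume_ne_zero _ _)] at h

lemma card_quotient_mk_eq (β : R) (X : ℕ) :
    Nat.card {α // Ideal.Quotient.mk I α = Ideal.Quotient.mk I β ∧
      Ideal.absNorm (Ideal.span {α}) ≤ X} =
    Nat.card {z // z - φ β ∈ idealLattice φ I ∧ ‖z‖ ≤ √X} := by
  refine Nat.card_congr (Equiv.ofBijective (fun α ↦ ⟨φ α, ?_, ?_⟩) ⟨?_, ?_⟩)
  · exact ⟨α - β, Ideal.Quotient.eq.1 α.2.1, map_sub φ _ _⟩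
  · exact (norm_le_sqrt_iff φ).2 α.2.2
  · exact fun α γ h ↦ Subtype.ext (injective φ (congrArg Subtype.val h))
  · rintro ⟨z, ⟨α, hα, hz⟩, hzX⟩
    obtain rfl : φ (α + β) = z := by
      rw [map_add]
      exact eq_sub_iff_add_eq.1 hz
    exact ⟨⟨α + β, Ideal.Quotient.eq.2 (by simpa using hα), (norm_le_sqrt_iff φ).1 hzX⟩, rfl⟩

lemma exists_abs_card_quotient_mk_eq_sub_le (hI : I ≠ 0) :
    ∃ C, ∀ (x : R ⧸ I) (X : ℕ),
      |Nat.card {α // Ideal.Quotient.mk I α = x ∧ Ideal.absNorm (Ideal.span {α}) ≤ X} -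
        Real.pi / (Ideal.absNorm I * ZLattice.covolume (idealLattice φ ⊤)) * X| ≤
      C * (√X + 1) := by
  have : IsZLattice ℝ (idealLattice φ I) := ⟨span_idealLattice_eq_top φ hI⟩
  obtain ⟨C, hC⟩ := exists_abs_card_sub_le volume (idealLattice φ I)
  refine ⟨C, fun x X ↦ ?_⟩
  obtain ⟨β, rfl⟩ := Ideal.Quotient.mk_surjective x
  rw [card_quotient_mk_eq φ]
  simpa [Complex.finrank_real_complex, measureReal_def, Complex.volume_ball,
    covolume_idealLattice φ hI] using hC (φ β) (√X) (Real.sqrt_nonneg _)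

include φ in
lemma card_isRationalUnitMod_mem_eq_sum {m : ℕ} {J : Ideal R} {ι : Type*} [Fintype ι]
    (b : ι ↪ R ⧸ I) (hb : ∀ α : R, IsRationalUnitMod m α ∧ α ∈ J ↔
      ∃ u, Ideal.Quotient.mk I α = b u) (X : ℕ) :
    Nat.card {α : R // (IsRationalUnitMod m α ∧ α ∈ J) ∧ Ideal.absNorm (Ideal.span {α}) ≤ X} =
      ∑ u, Nat.card {α // Ideal.Quotient.mk I α = b u ∧ Ideal.absNorm (Ideal.span {α}) ≤ X} := by
  have (u : ι) : Finite {α // Ideal.Quotient.mk I α = b u ∧ Ideal.absNorm (Ideal.span {α}) ≤ X} :=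
    ((finite_absNorm_span_le φ X).subset fun α hα ↦ hα.2).to_subtype
  rw [← Nat.card_sigma]
  refine Nat.card_congr (Equiv.ofBijective
    (fun x ↦ ⟨x.2, (hb _).2 ⟨x.1, x.2.2.1⟩, x.2.2.2⟩) ⟨?_, ?_⟩).symm
  · rintro ⟨u, α, hα, hαX⟩ ⟨v, β, hβ, hβX⟩ h
    obtain rfl : α = β := congrArg Subtype.val h
    obtain rfl := b.injective (hα.symm.trans hβ)
    rfl
  · rintro ⟨α, hα, hαX⟩
    obtain ⟨u, hu⟩ := (hb α).1 hα
    exact ⟨⟨u, α, hu, hαX⟩, rfl⟩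

include φ in
lemma exists_abs_card_isRationalUnitMod_mem_sub_le [CharZero R] {m : ℕ} (hm : 1 < m) :
    ∃ κ > (0 : ℝ), ∀ J ∈ coprimeIdeals R m, ∃ C, ∀ X : ℕ,
      |(Nat.card {α : R // (IsRationalUnitMod m α ∧ α ∈ J) ∧
          Ideal.absNorm (Ideal.span {α}) ≤ X} : ℝ) - κ / Ideal.absNorm J * X| ≤ C * (√X + 1) := by
  have : NeZero m := ⟨by lia⟩
  have : IsZLattice ℝ (idealLattice φ ⊤) := ⟨span_idealLattice_eq_top φ top_ne_bot⟩
  have hm0 : Ideal.span {(m : R)} ≠ 0 := by simpa using NeZero.ne m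
  have hnorm : 0 < Ideal.absNorm (Ideal.span {(m : R)}) := Nat.pos_of_ne_zero (absNorm_ne_zero hm0)
  have hcovol := ZLattice.covolume_pos (idealLattice φ ⊤)
  refine ⟨Fintype.card (ZMod m)ˣ * (Real.pi / (Ideal.absNorm (Ideal.span {(m : R)}) *
    ZLattice.covolume (idealLattice φ ⊤))), by positivity, fun J hJ ↦ ?_⟩
  obtain ⟨b, hb⟩ := exists_embedding_units_quotient hm hJ.2
  obtain ⟨C, hC⟩ := exists_abs_card_quotient_mk_eq_sub_le φ (mul_ne_zero hm0 hJ.1)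
  refine ⟨Fintype.card (ZMod m)ˣ * C, fun X ↦ ?_⟩
  set δ := Real.pi / (Ideal.absNorm (Ideal.span {(m : R)} * J) *
    ZLattice.covolume (idealLattice φ ⊤)) with hδ
  have hmain : Fintype.card (ZMod m)ˣ * (Real.pi / (Ideal.absNorm (Ideal.span {(m : R)}) *
      ZLattice.covolume (idealLattice φ ⊤))) / Ideal.absNorm J * X = ∑ _u : (ZMod m)ˣ, δ * X := by
    rw [Finset.sum_const, Finset.card_univ, nsmul_eq_mul, hδ, map_mul]
    push_cast
    ring
  have herr : Fintype.card (ZMod m)ˣ * C * (√X + 1) = ∑ _u : (ZMod m)ˣ, C * (√X + 1) := by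
    rw [Finset.sum_const, Finset.card_univ, nsmul_eq_mul, mul_assoc]
  rw [card_isRationalUnitMod_mem_eq_sum φ b hb, Nat.cast_sum, hmain, herr,
    ← Finset.sum_sub_distrib]
  exact (Finset.abs_sum_le_sum_abs _ _).trans (Finset.sum_le_sum fun u _ ↦ hC (b u) X)

end IsImaginaryQuadratic

end ImaginaryQuadratic

variable [Module.Finite ℤ R] [CharZero R] {m : ℕ}

lemma ringClass_eq_iff_exists {g : RingClassGroup R m} {I J : Ideal R}
    (hJ : ringClass R m J = (g⁻¹ : RingClassGroup R m)) :
    ringClass R m I = g ↔ ∃ γ : R, IsRationalUnitMod m γ ∧ I * J = Ideal.span {γ} := by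
  rw [← ringClass_eq_one_iff, map_mul, hJ, WithZero.coe_inv, mul_inv_eq_one₀ WithZero.coe_ne_zero]

lemma card_units_mul_card_ringClass_eq {g : RingClassGroup R m} {J : Ideal R}
    (hJ : ringClass R m J = (g⁻¹ : RingClassGroup R m)) (n : ℕ) :
    Nat.card {u : Rˣ // IsRationalUnitMod m (u : R)} *
      Nat.card {I // ringClass R m I = g ∧ Ideal.absNorm I ≤ n} =
    Nat.card {α : R // (IsRationalUnitMod m α ∧ α ∈ J) ∧
      Ideal.absNorm (Ideal.span {α}) ≤ n * Ideal.absNorm J} := by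
  have hJ0 : J ≠ 0 := (mem_coprimeIdeals_of_ringClass_eq hJ).1
  choose! γ hγ hγJ using fun I ↦ (ringClass_eq_iff_exists (I := I) hJ).1
  rw [← Nat.card_prod]
  refine Nat.card_congr (Equiv.ofBijective
    (fun x ↦ ⟨x.1.1 * γ x.2.1, ⟨x.1.2.mul (hγ _ x.2.2.1), ?_⟩, ?_⟩) ⟨?_, ?_⟩)
  · refine J.mul_mem_left _ (Ideal.mul_le_right (I := x.2.1) ?_)
    rw [hγJ _ x.2.2.1]
    exact Ideal.mem_span_singleton_self _
  · rw [Ideal.span_singleton_mul_left_unit x.1.1.isUnit, ← hγJ _ x.2.2.1, map_mul]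
    exact Nat.mul_le_mul_right _ x.2.2.2
  · rintro ⟨u, I, hI, hIn⟩ ⟨v, I', hI', hIn'⟩ huv
    have huv : (u.1 : R) * γ I = v.1 * γ I' := congrArg Subtype.val huv
    have hspan := congrArg (fun α ↦ Ideal.span {α}) huv
    simp only [Ideal.span_singleton_mul_left_unit u.1.isUnit,
      Ideal.span_singleton_mul_left_unit v.1.isUnit, ← hγJ _ hI, ← hγJ _ hI'] at hspan
    obtain rfl := mul_right_cancel₀ hJ0 hspan
    obtain rfl : u = v := Subtype.ext (Units.ext (mul_right_cancel₀ (hγ I hI).1 huv))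
    rfl
  · rintro ⟨α, ⟨hα, hαJ⟩, hn⟩
    obtain ⟨I, hIJ⟩ := Ideal.dvd_span_singleton.2 hαJ
    rw [mul_comm] at hIJ
    have hI : ringClass R m I = g := (ringClass_eq_iff_exists hJ).2 ⟨α, hα, hIJ.symm⟩
    obtain ⟨u, hu⟩ : Associated (γ I) α := by
      rw [← Ideal.span_singleton_eq_span_singleton, ← hγJ I hI, hIJ]
    rw [hIJ, map_mul] at hn
    exact ⟨⟨⟨u, (hγ I hI).of_mul_left (by rwa [hu])⟩, I, hI,
      Nat.le_of_mul_le_mul_right hn (Nat.pos_of_ne_zero (absNorm_ne_zero hJ0))⟩,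
      Subtype.ext ((mul_comm _ _).trans hu)⟩

theorem exists_card_ringClass_sub_isBigO (φ : R →+* ℂ) [IsImaginaryQuadratic φ] (hm : 1 < m) :
    ∃ κ > (0 : ℝ), ∀ g : RingClassGroup R m, (fun n : ℕ ↦
      (Nat.card {I // ringClass R m I = g ∧ Ideal.absNorm I ≤ n} : ℝ) - κ * n) =O[atTop]
      fun n : ℕ ↦ (n : ℝ) ^ (1 / 2 : ℝ) := by
  obtain ⟨κ, hκ, hcount⟩ :=
    IsImaginaryQuadratic.exists_abs_card_isRationalUnitMod_mem_sub_le φ hm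
  have := IsImaginaryQuadratic.finite_units φ
  have : Nonempty {u : Rˣ // IsRationalUnitMod m (u : R)} := ⟨1, .one⟩
  set W := Nat.card {u : Rˣ // IsRationalUnitMod m (u : R)}
  have hW : (0 : ℝ) < W := Nat.cast_pos.2 Nat.card_pos
  refine ⟨κ / W, by positivity, fun g ↦ ?_⟩
  obtain ⟨J, hJ⟩ := exists_ringClass_eq g⁻¹
  have hJ' := mem_coprimeIdeals_of_ringClass_eq hJ
  have hNJ : (Ideal.absNorm J : ℝ) ≠ 0 := Nat.cast_ne_zero.2 (absNorm_ne_zero hJ'.1)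
  obtain ⟨C, hC⟩ := hcount J hJ'
  refine .of_bound (|C| * (√(Ideal.absNorm J) + 1) / W) (eventually_atTop.2 ⟨1, fun n hn ↦ ?_⟩)
  have hn1 : 1 ≤ √(n : ℝ) := Real.one_le_sqrt.2 (by exact_mod_cast hn)
  specialize hC (n * Ideal.absNorm J)
  rw [← card_units_mul_card_ringClass_eq hJ] at hC
  push_cast at hC
  set c : ℝ := (Nat.card {I // ringClass R m I = g ∧ Ideal.absNorm I ≤ n} : ℝ)
  have hdiff : c - κ / W * n = (W * c - κ / Ideal.absNorm J * (n * Ideal.absNorm J)) / W := by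
    field_simp
  rw [hdiff, ← Real.sqrt_eq_rpow, Real.norm_of_nonneg (Real.sqrt_nonneg _), Real.norm_eq_abs,
    abs_div, abs_of_pos hW, div_mul_eq_mul_div (|C| * _)]
  gcongr
  calc _ ≤ |C| * (√n * √(Ideal.absNorm J) + 1) := by
        rw [← Real.sqrt_mul (Nat.cast_nonneg _)]
        exact hC.trans (by gcongr; exact le_abs_self C)
    _ ≤ |C| * ((√(Ideal.absNorm J) + 1) * √n) := by
        gcongr
        linarith
    _ = _ := (mul_assoc _ _ _).symm

end CountingRingClasses

section FiniteClasses

open Filter Asymptotics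

lemma eventually_half_mul_le_of_sub_isBigO {f : ℕ → ℝ} {κ r : ℝ} (hκ : 0 < κ) (hr : r < 1)
    (h : (fun n ↦ f n - κ * n) =O[atTop] fun n : ℕ ↦ (n : ℝ) ^ r) :
    ∀ᶠ n : ℕ in atTop, κ / 2 * n ≤ f n := by
  have hlittle : (fun n : ℕ ↦ (n : ℝ) ^ r) =o[atTop] fun n : ℕ ↦ (n : ℝ) := by
    refine isLittleO_of_tendsto' ?_ (((tendsto_rpow_neg_atTop (sub_pos.2 hr)).comp
      tendsto_natCast_atTop_atTop).congr' ?_)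
    · filter_upwards [eventually_gt_atTop 0] with n hn h0
      exact absurd h0 (by positivity)
    · filter_upwards [eventually_gt_atTop 0] with n hn
      rw [Function.comp_apply, neg_sub, Real.rpow_sub_one (by positivity)]
  filter_upwards [(h.trans_isLittleO hlittle).bound (half_pos hκ)] with n hn
  rw [Real.norm_eq_abs, Real.norm_eq_abs, Nat.abs_cast] at hn
  linarith [(abs_le.1 hn).1]

variable {R : Type*} [CommRing R] [IsDedekindDomain R] [Module.Free ℤ R] [Module.Finite ℤ R]
  [CharZero R] {G : Type*} [CommGroup G] (cl : Ideal R →*₀ WithZero G)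

lemma sum_card_class_le (s : Finset G) (n : ℕ) :
    ∑ g ∈ s, Nat.card {I : Ideal R // cl I = g ∧ Ideal.absNorm I ≤ n} ≤
      Nat.card {I : Ideal R // Ideal.absNorm I ≤ n} := by
  have : Finite {I : Ideal R // Ideal.absNorm I ≤ n} :=
    (Ideal.finite_setOfPred_absNorm_le n).to_subtype
  have (g : G) : Finite {I : Ideal R // cl I = g ∧ Ideal.absNorm I ≤ n} :=
    ((Ideal.finite_setOfPred_absNorm_le n).subset fun I hI ↦ hI.2).to_subtype
  rw [← Finset.sum_coe_sort, ← Nat.card_sigma]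
  refine Nat.card_le_card_of_injective (fun x ↦ ⟨x.2.1, x.2.2.2⟩) ?_
  rintro ⟨⟨g, hg⟩, I, hI, hI'⟩ ⟨⟨g', hg'⟩, J, hJ, hJ'⟩ h
  obtain rfl : I = J := congrArg Subtype.val h
  obtain rfl : g = g' := WithZero.coe_inj.1 (hI.symm.trans hJ)
  rfl

theorem finite_of_card_class_sub_isBigO {κ r C : ℝ} (hκ : 0 < κ) (hr : r < 1)
    (hcount : ∀ g : G, (fun n : ℕ ↦
      (Nat.card {I : Ideal R // cl I = g ∧ Ideal.absNorm I ≤ n} : ℝ) - κ * n) =O[atTop]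
      fun n : ℕ ↦ (n : ℝ) ^ r)
    (htotal : ∀ᶠ n : ℕ in atTop, (Nat.card {I : Ideal R // Ideal.absNorm I ≤ n} : ℝ) ≤ C * n) :
    Finite G := by
  by_contra hG
  rw [not_finite_iff_infinite] at hG
  obtain ⟨K, hK⟩ := exists_nat_gt (2 * C / κ)
  obtain ⟨s, hs⟩ := Infinite.exists_subset_card_eq G K
  have hclass := (eventually_all_finset s).2 fun g _ ↦
    eventually_half_mul_le_of_sub_isBigO hκ hr (hcount g)
  obtain ⟨n, hn, hnC, hn0⟩ := (hclass.and (htotal.and (eventually_gt_atTop 0))).exists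
  have hle : (K : ℝ) * (κ / 2 * n) ≤ C * n := by
    rw [← hs, ← nsmul_eq_mul]
    refine ((Finset.card_nsmul_le_sum s _ _ hn).trans ?_).trans hnC
    exact_mod_cast sum_card_class_le cl s n
  rw [← mul_assoc] at hle
  have := le_of_mul_le_mul_right hle (Nat.cast_pos.2 hn0)
  rw [div_lt_iff₀ hκ] at hK
  linarith

end FiniteClasses

section LegendreConic

lemma isCoprime_of_forall_prime_dvd {x y : ℤ}
    (h : ∀ q : ℕ, q.Prime → (q : ℤ) ∣ x → ¬ (q : ℤ) ∣ y) : IsCoprime x y := by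
  rw [Int.isCoprime_iff_gcd_eq_one]
  by_contra hne
  obtain ⟨q, hq, hd⟩ := Nat.exists_prime_and_dvd hne
  exact h q hq ((Int.natCast_dvd_natCast.2 hd).trans (Int.gcd_dvd_left ..))
    ((Int.natCast_dvd_natCast.2 hd).trans (Int.gcd_dvd_right ..))

lemma exists_forall_primeFactors_pow_dvd_sub (Q : ℕ) (s : ℕ → ℤ) :
    ∃ e : ℤ, ∀ q ∈ Q.primeFactors, (q : ℤ) ^ Q.factorization q ∣ e - s q := by
  obtain ⟨e, he⟩ := Ideal.exists_forall_sub_mem_ideal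
    (I := fun q : Q.primeFactors ↦ Ideal.span {((q : ℕ) : ℤ) ^ Q.factorization q})
    (fun q r hqr ↦ by
      rw [Function.onFun, Ideal.isCoprime_span_singleton_iff]
      refine IsCoprime.pow (Nat.isCoprime_iff_coprime.2 ?_)
      exact (Nat.coprime_primes (Nat.prime_of_mem_primeFactors q.2)
        (Nat.prime_of_mem_primeFactors r.2)).2 fun h ↦ hqr (Subtype.ext h)) (fun q ↦ s q)
  exact ⟨e, fun q hq ↦ Ideal.mem_span_singleton.1 (he ⟨q, hq⟩)⟩

lemma natCast_dvd_of_forall_primeFactors_pow_dvd {Q : ℕ} {z : ℤ} (hQ : Q ≠ 0)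
    (h : ∀ q ∈ Q.primeFactors, (q : ℤ) ^ Q.factorization q ∣ z) : (Q : ℤ) ∣ z := by
  rw [Int.natCast_dvd, Nat.dvd_iff_prime_pow_dvd_dvd]
  intro q k hq hk
  obtain rfl | hk0 := eq_or_ne k 0
  · simp
  have hqQ : q ∈ Q.primeFactors := Nat.mem_primeFactors.2 ⟨hq, (dvd_pow_self q hk0).trans hk, hQ⟩
  rw [← Int.natCast_dvd]
  push_cast
  exact (pow_dvd_pow _ ((hq.pow_dvd_iff_le_factorization hQ).1 hk)).trans (h q hqQ)

lemma isCoprime_of_eq_gcd_mul {u b : ℤ} {L m : ℕ}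
    (h : ∀ q : ℕ, q.Prime → q ∣ m → ¬ (q : ℤ) ^ L.factorization q ∣ u)
    (hb : u = Int.gcd u L * b) : IsCoprime b m := by
  refine isCoprime_of_forall_prime_dvd fun q hq hqb hqm ↦ ?_
  suffices ∀ i ≤ L.factorization q, (q : ℤ) ^ i ∣ u from
    h q hq (Int.natCast_dvd_natCast.1 hqm) (this _ le_rfl)
  intro i
  induction i with
  | zero => simp
  | succ i ih =>
    intro hi
    have hL : (q : ℤ) ^ i ∣ L := by
      exact_mod_cast (pow_dvd_pow q (Nat.le_of_succ_le hi)).trans (Nat.ordProj_dvd L q)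
    rw [hb, pow_succ]
    exact mul_dvd_mul (Int.dvd_coe_gcd (ih (Nat.le_of_succ_le hi)) hL) hqb

variable {a p : ℕ}

lemma exists_dvd_sq_add_of_modEq_one (ha : a ≠ 0) (hp : p.Prime) (h : p ≡ 1 [MOD 4 * a]) :
    ∃ t : ℤ, (p : ℤ) ∣ t ^ 2 + a := by
  have : Fact p.Prime := ⟨hp⟩
  have hodd : Odd p := Nat.odd_iff.2 (h.of_dvd (by lia : 2 ∣ 4 * a))
  have hmod : p % (4 * (-(a : ℤ)).natAbs) = 1 := by
    rw [Int.natAbs_neg, Int.natAbs_natCast, h, Nat.mod_eq_of_lt (by lia)]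
  have hsymbol : legendreSym p (-a) = 1 := by
    rw [jacobiSym.legendreSym.to_jacobiSym, jacobiSym.mod_right _ hodd, hmod, jacobiSym.one_right]
  have hne : ((-a : ℤ) : ZMod p) ≠ 0 := fun h0 ↦ by
    rw [(legendreSym.eq_zero_iff p _).2 h0] at hsymbol
    exact zero_ne_one hsymbol
  obtain ⟨t, ht⟩ := (legendreSym.eq_one_iff p hne).1 hsymbol
  refine ⟨t.val, ?_⟩
  rw [← ZMod.intCast_zmod_eq_zero_iff_dvd]
  push_cast at ht ⊢
  rw [ZMod.natCast_zmod_val]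
  linear_combination -ht

lemma mul_lt_sqrt_succ_mul (a p : ℕ) :
    a * p < (Nat.sqrt (a * p) + 1) * ((Nat.sqrt p + 1) * (Nat.sqrt a + 1)) := by
  refine lt_of_mul_self_lt_mul_self₀ (by positivity) ?_
  have := Nat.mul_lt_mul'' (Nat.lt_succ_sqrt (a * p))
    (Nat.mul_lt_mul'' (Nat.lt_succ_sqrt p) (Nat.lt_succ_sqrt a))
  linarith

lemma sq_sub_le_of_le_sqrt {u v k : ℕ} (hu : u ≤ Nat.sqrt k) (hv : v ≤ Nat.sqrt k) :
    ((u : ℤ) - v) ^ 2 ≤ k := by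
  have habs : |(u : ℤ) - v| ≤ Nat.sqrt k := abs_le.2 ⟨by lia, by lia⟩
  calc ((u : ℤ) - v) ^ 2 ≤ (Nat.sqrt k : ℤ) ^ 2 := sq_le_sq' (abs_le.1 habs).1 (abs_le.1 habs).2
    _ ≤ k := by exact_mod_cast Nat.sqrt_le' k

lemma exists_small_dvd_sub_dvd_sub (ha : a ≠ 0) (hp : p ≠ 0) (t : ℤ) :
    ∃ x y z : ℤ, (x, y, z) ≠ 0 ∧ (a : ℤ) ∣ x - z ∧ (p : ℤ) ∣ x - t * y ∧
      x ^ 2 ≤ a * p ∧ y ^ 2 ≤ p ∧ z ^ 2 ≤ a := by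
  have : NeZero a := ⟨ha⟩
  have : NeZero p := ⟨hp⟩
  let box : Finset (ℕ × ℕ × ℕ) := Finset.range (Nat.sqrt (a * p) + 1) ×ˢ
    Finset.range (Nat.sqrt p + 1) ×ˢ Finset.range (Nat.sqrt a + 1)
  have hcard : (Finset.univ : Finset (ZMod a × ZMod p)).card < box.card := by
    simpa [box] using mul_lt_sqrt_succ_mul a p
  obtain ⟨⟨x₁, y₁, z₁⟩, h₁, ⟨x₂, y₂, z₂⟩, h₂, hne, heq⟩ :=
    Finset.exists_ne_map_eq_of_card_lt_of_maps_to hcard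
      (f := fun w ↦ (((w.1 : ℤ) - w.2.2 : ℤ), ((w.1 : ℤ) - t * w.2.1 : ℤ)))
      (fun _ _ ↦ by simp)
  simp only [box, Finset.mem_product, Finset.mem_range, Nat.lt_succ_iff] at h₁ h₂
  rw [Prod.mk.injEq, ZMod.intCast_eq_intCast_iff_dvd_sub,
    ZMod.intCast_eq_intCast_iff_dvd_sub] at heq
  refine ⟨x₂ - x₁, y₂ - y₁, z₂ - z₁, ?_, ?_, ?_, ?_, sq_sub_le_of_le_sqrt h₂.2.1 h₁.2.1,
    sq_sub_le_of_le_sqrt h₂.2.2 h₁.2.2⟩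
  · simp only [ne_eq, Prod.mk_eq_zero, Prod.mk.injEq] at hne ⊢
    lia
  · convert heq.1 using 1
    ring
  · convert heq.2 using 1
    ring
  · exact_mod_cast sq_sub_le_of_le_sqrt h₂.1 h₁.1

lemma mul_dvd_sq_add_mul_sq_sub (hpa : p ≡ 1 [MOD a]) {t x y z : ℤ} (ht : (p : ℤ) ∣ t ^ 2 + a)
    (ha : (a : ℤ) ∣ x - z) (hp : (p : ℤ) ∣ x - t * y) :
    (a * p : ℤ) ∣ x ^ 2 + a * y ^ 2 - p * z ^ 2 := by
  have hcop : Nat.Coprime a p := by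
    rw [Nat.coprime_comm, Nat.Coprime, hpa.gcd_eq, Nat.gcd_one_left]
  refine IsCoprime.mul_dvd (Nat.isCoprime_iff_coprime.2 hcop) ?_ ?_
  · have h1p : (a : ℤ) ∣ 1 - p := Nat.modEq_iff_dvd.1 hpa
    rw [show x ^ 2 + a * y ^ 2 - p * z ^ 2 =
      (x - z) * (x + z) + a * y ^ 2 + (1 - p) * z ^ 2 by ring]
    exact dvd_add (dvd_add (ha.mul_right _) (dvd_mul_right _ _)) (h1p.mul_right _)
  · rw [show x ^ 2 + a * y ^ 2 - p * z ^ 2 =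
      (x - t * y) * (x + t * y) + (t ^ 2 + a) * y ^ 2 - p * z ^ 2 by ring]
    exact dvd_sub (dvd_add (hp.mul_right _) (ht.mul_right _)) (dvd_mul_right _ _)

lemma exists_sq_add_mul_sq_eq_zero_or_eq_mul (ha : 2 ≤ a) (hp : p.Prime) (hpa : p ≡ 1 [MOD a])
    {t : ℤ} (ht : (p : ℤ) ∣ t ^ 2 + a) :
    ∃ x y z : ℤ, (x, y, z) ≠ 0 ∧
      (x ^ 2 + a * y ^ 2 - p * z ^ 2 = 0 ∨ x ^ 2 + a * y ^ 2 - p * z ^ 2 = a * p) := by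
  obtain ⟨x, y, z, hne, hxz, hxy, hx, hy, hz⟩ :=
    exists_small_dvd_sub_dvd_sub (by lia : a ≠ 0) hp.ne_zero t
  obtain ⟨k, hk⟩ := mul_dvd_sq_add_mul_sq_sub hpa ht hxz hxy
  refine ⟨x, y, z, hne, ?_⟩
  have ha0 : (0 : ℤ) < a := by positivity
  have hp0 : (0 : ℤ) < p := mod_cast hp.pos
  have hapos : (0 : ℤ) < a * p := mul_pos ha0 hp0
  have hy' : y ^ 2 < p := lt_of_le_of_ne hy fun h ↦
    (Nat.prime_iff_prime_int.1 hp).irreducible.not_isSquare ⟨y, by rw [← h, sq]⟩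
  have hk2 : k < 2 := by
    have hay := mul_lt_mul_of_pos_left hy' ha0
    have hpz : 0 ≤ p * z ^ 2 := by positivity
    exact lt_of_mul_lt_mul_left (by linarith) hapos.le
  have hk1 : -1 ≤ k := by
    have hay : 0 ≤ a * y ^ 2 := by positivity
    have hpz := mul_le_mul_of_nonneg_left hz hp0.le
    exact le_of_mul_le_mul_left (by linarith [sq_nonneg x]) hapos
  have hk1' : k ≠ -1 := by
    rintro rfl
    have hay : 0 ≤ a * y ^ 2 := by positivity
    have hpz := mul_le_mul_of_nonneg_left hz hp0.le
    obtain rfl : x = 0 := pow_eq_zero_iff two_ne_zero |>.1 (le_antisymm (by linarith) (sq_nonneg x))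
    have hza : z ^ 2 = a := le_antisymm hz (le_of_mul_le_mul_left (by linarith) hp0)
    obtain ⟨w, rfl⟩ : (a : ℤ) ∣ z := by simpa using hxz
    have := Int.eq_one_of_mul_eq_one_right ha0.le
      (mul_left_cancel₀ ha0.ne' (by linear_combination hza) : (a : ℤ) * w ^ 2 = 1)
    lia
  obtain rfl | rfl : k = 0 ∨ k = 1 := by lia
  · exact .inl (by rw [hk, mul_zero])
  · exact .inr (by rw [hk, mul_one])

lemma exists_sq_add_mul_sq_eq_mul_sq (ha : 2 ≤ a) (hp : p.Prime) (h : p ≡ 1 [MOD 4 * a]) :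
    ∃ x y z : ℤ, x ^ 2 + a * y ^ 2 = p * z ^ 2 ∧ z ≠ 0 := by
  obtain ⟨t, ht⟩ := exists_dvd_sq_add_of_modEq_one (by lia) hp h
  obtain ⟨x, y, z, hne, h0 | h1⟩ :=
    exists_sq_add_mul_sq_eq_zero_or_eq_mul ha hp (h.of_dvd (dvd_mul_left _ _)) ht
  · refine ⟨x, y, z, sub_eq_zero.1 h0, ?_⟩
    rintro rfl
    have ha0 : a ≠ 0 := by lia
    have hxy : x ^ 2 = 0 ∧ a * y ^ 2 = 0 :=
      (add_eq_zero_iff_of_nonneg (by positivity) (by positivity)).1 (by linarith)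
    exact hne (by simpa [ha0] using hxy)
  · exact ⟨x * z + a * y, y * z - x, z ^ 2 + a, by linear_combination (z ^ 2 + a) * h1,
      by positivity⟩

lemma dvd_of_mul_self_dvd_mul_sq {p d z : ℤ} (hp : Squarefree p) (h : d * d ∣ p * z ^ 2) :
    d ∣ z := by
  obtain hg | hg := (Int.gcd d z).eq_zero_or_pos
  · rw [(Int.gcd_eq_zero_iff.1 hg).2]
    exact dvd_zero d
  obtain ⟨d', z', hcop, hd, hz⟩ := Int.exists_gcd_one hg
  have hg0 : (Int.gcd d z : ℤ) ≠ 0 := by lia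
  generalize (Int.gcd d z : ℤ) = g at hd hz hg0
  subst hd hz
  have hdvd : d' * d' ∣ p * z' ^ 2 :=
    (mul_dvd_mul_iff_left (pow_ne_zero 2 hg0)).1 (by
      rwa [show g ^ 2 * (d' * d') = d' * g * (d' * g) by ring,
        show g ^ 2 * (p * z' ^ 2) = p * (z' * g) ^ 2 by ring])
  have hcop' : IsCoprime (d' * d') (z' ^ 2) :=
    have hd'z' : IsCoprime d' (z' ^ 2) := (Int.isCoprime_iff_gcd_eq_one.2 hcop).pow_right
    hd'z'.mul_left hd'z'
  exact mul_dvd_mul_right (hp d' (hcop'.dvd_of_dvd_mul_right hdvd)).dvd g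

lemma exists_isCoprime_of_sq_add_mul_sq_eq {a p x y z : ℤ} (hp : Squarefree p)
    (h : x ^ 2 + a * y ^ 2 = p * z ^ 2) (hz : z ≠ 0) :
    ∃ d x' y' z', x = d * x' ∧ y = d * y' ∧ IsCoprime x' y' ∧ z' ≠ 0 ∧
      x' ^ 2 + a * y' ^ 2 = p * z' ^ 2 := by
  have hgcd : Int.gcd x y ≠ 0 := fun h0 ↦ by
    obtain ⟨rfl, rfl⟩ := Int.gcd_eq_zero_iff.1 h0
    simp [hp.ne_zero, hz] at h
  obtain ⟨x', y', hcop, hx, hy⟩ := Int.exists_gcd_one (Nat.pos_of_ne_zero hgcd)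
  have hd0 : (Int.gcd x y : ℤ) ≠ 0 := by exact_mod_cast hgcd
  generalize (Int.gcd x y : ℤ) = d at hx hy hd0
  subst hx hy
  obtain ⟨z', rfl⟩ : d ∣ z :=
    dvd_of_mul_self_dvd_mul_sq hp ⟨x' ^ 2 + a * y' ^ 2, by rw [← h]; ring⟩
  exact ⟨d, x', y', z', mul_comm _ _, mul_comm _ _, Int.isCoprime_iff_gcd_eq_one.2 hcop,
    right_ne_zero_of_mul hz, mul_left_cancel₀ (pow_ne_zero 2 hd0) (by linear_combination h)⟩

lemma exists_sq_eq_one_not_pow_dvd {q a p x y z : ℤ} {n : ℕ} (hq : Prime q)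
    (hn : ¬ q ^ n ∣ 4 * a) (h : x ^ 2 + a * y ^ 2 = p * z ^ 2) (hxy : IsCoprime x y) :
    ∃ s : ℤ, s ^ 2 = 1 ∧ ¬ q ^ n ∣ 2 * (x - s * z) := by
  by_contra! hdvd
  have hsub := hdvd 1 (by norm_num)
  have hadd := hdvd (-1) (by norm_num)
  have hx4 : q ^ n ∣ 4 * x := by
    rw [show 4 * x = 2 * (x - 1 * z) + 2 * (x - -1 * z) by ring]
    exact dvd_add hsub hadd
  have hz4 : q ^ n ∣ 4 * z := by
    rw [show 4 * z = 2 * (x - -1 * z) - 2 * (x - 1 * z) by ring]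
    exact dvd_sub hadd hsub
  have hqx : q ∣ x := by
    by_contra hqx
    exact hn ((hq.pow_dvd_of_dvd_mul_right n hqx hx4).mul_right a)
  have hqy : ¬ q ∣ y := fun hqy ↦ hq.not_isUnit (hxy.isUnit_of_dvd' hqx hqy)
  have hay : q ^ (n + n) ∣ 4 * (4 * a) * y ^ 2 := by
    rw [show 4 * (4 * a) * y ^ 2 = p * (4 * z * (4 * z)) - 4 * x * (4 * x) by
      linear_combination 16 * h, pow_add]
    exact dvd_sub ((mul_dvd_mul hz4 hz4).mul_left p) (mul_dvd_mul hx4 hx4)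
  obtain ⟨k, rfl⟩ : ∃ k, n = k + 1 := Nat.exists_eq_succ_of_ne_zero fun h0 ↦ hn (by simp [h0])
  refine finiteMultiplicity_mul_aux hq (mt (Dvd.dvd.mul_right · a) hn) hn
    ((pow_dvd_pow q (by lia)).trans
      (hq.pow_dvd_of_dvd_mul_right _ (mt hq.dvd_of_dvd_pow hqy) hay))

lemma not_pow_factorization_mul_dvd {n m q : ℕ} (hn : n ≠ 0) (hm : m ≠ 0) (hq : q.Prime)
    (hqm : q ∣ m) : ¬ q ^ (n * m).factorization q ∣ n := by
  rw [hq.pow_dvd_iff_le_factorization hn, Nat.factorization_mul hn hm, Finsupp.add_apply, not_le]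
  exact Nat.lt_add_of_pos_right (hq.factorization_pos_of_dvd hm hqm)

variable {m : ℕ}

lemma exists_dvd_one_sub_mul_sq_not_pow_dvd {x y z : ℤ} (ha : a ≠ 0) (hm : m ≠ 0)
    (hp : p ≡ 1 [MOD 4 * a * m * m]) (h : x ^ 2 + a * y ^ 2 = p * z ^ 2) (hxy : IsCoprime x y) :
    ∃ e : ℤ, ((4 * a * m * m : ℕ) : ℤ) ∣ 1 - p * e ^ 2 ∧ ∀ q : ℕ, q.Prime → q ∣ m →
      ¬ (q : ℤ) ^ (4 * a * m).factorization q ∣ 2 * (x - p * e * z) := by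
  have ha4 : 4 * a ≠ 0 := by lia
  have hL : 4 * a * m ≠ 0 := mul_ne_zero ha4 hm
  have hM : 4 * a * m * m ≠ 0 := mul_ne_zero hL hm
  have hsign (q : ℕ) : ∃ s : ℤ, s ^ 2 = 1 ∧ (q.Prime → q ∣ m →
      ¬ (q : ℤ) ^ (4 * a * m).factorization q ∣ 2 * (x - s * z)) := by
    by_cases hq : q.Prime ∧ q ∣ m
    · obtain ⟨s, hs, hsz⟩ := exists_sq_eq_one_not_pow_dvd (Nat.prime_iff_prime_int.1 hq.1)
        (by exact_mod_cast not_pow_factorization_mul_dvd ha4 hm hq.1 hq.2) h hxy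
      exact ⟨s, hs, fun _ _ ↦ hsz⟩
    · exact ⟨1, one_pow 2, fun hq₁ hq₂ ↦ (hq ⟨hq₁, hq₂⟩).elim⟩
  choose s hs hsz using hsign
  obtain ⟨e, he⟩ := exists_forall_primeFactors_pow_dvd_sub (4 * a * m * m) s
  have hp1 : ((4 * a * m * m : ℕ) : ℤ) ∣ 1 - p := Nat.modEq_iff_dvd.1 hp
  refine ⟨e, ?_, fun q hq hqm hdvd ↦ hsz q hq hqm ?_⟩
  · have he2 : ((4 * a * m * m : ℕ) : ℤ) ∣ e ^ 2 - 1 :=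
      natCast_dvd_of_forall_primeFactors_pow_dvd hM fun q hq ↦ by
        rw [← hs q, sq_sub_sq]
        exact (he q hq).mul_left _
    rw [show 1 - p * e ^ 2 = 1 - p - p * (e ^ 2 - 1) by ring]
    exact dvd_sub hp1 (he2.mul_left p)
  · have hLM : (q : ℤ) ^ (4 * a * m).factorization q ∣
        (q : ℤ) ^ (4 * a * m * m).factorization q :=
      pow_dvd_pow _ ((Nat.factorization_le_iff_dvd hL hM).2 (dvd_mul_right _ m) q)
    have hes : (q : ℤ) ^ (4 * a * m).factorization q ∣ e - s q :=
      hLM.trans (he q (Nat.mem_primeFactors.2 ⟨hq, hqm.mul_left _, hM⟩))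
    have hqp : (q : ℤ) ^ (4 * a * m).factorization q ∣ 1 - p :=
      hLM.trans ((by exact_mod_cast Nat.ordProj_dvd _ q :
        (q : ℤ) ^ (4 * a * m * m).factorization q ∣ (4 * a * m * m : ℕ)).trans hp1)
    rw [show 2 * (x - s q * z) =
      2 * (x - p * e * z) + (2 * z * (e - s q) - 2 * z * e * (1 - p)) by ring]
    exact dvd_add hdvd (dvd_sub (hes.mul_left _) (hqp.mul_left _))

-- The solution is the second intersection of the conic with the line through `(x, y, z)` and a
-- point `(1, 0, e)` that lies on the conic modulo `4 * a * m ^ 2`.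
lemma exists_sq_add_mul_sq_eq_mul_sq_isCoprime_dvd {x y z : ℤ} (ha : a ≠ 0) (hm : m ≠ 0)
    (h2m : 2 ∣ m) (hp : p ≡ 1 [MOD 4 * a * m * m]) (h : x ^ 2 + a * y ^ 2 = p * z ^ 2)
    (hxy : IsCoprime x y) :
    ∃ x' y' z' : ℤ, x' ^ 2 + a * y' ^ 2 = p * z' ^ 2 ∧ z' ≠ 0 ∧ IsCoprime x' m ∧ (m : ℤ) ∣ y' := by
  obtain ⟨e, ⟨c, hc⟩, hdvd⟩ := exists_dvd_one_sub_mul_sq_not_pow_dvd ha hm hp h hxy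
  obtain ⟨b, hb⟩ := Int.gcd_dvd_left (a := 2 * (x - p * e * z)) (b := (4 * a * m : ℕ))
  obtain ⟨l, hl⟩ := Int.gcd_dvd_right (a := 2 * (x - p * e * z)) (b := (4 * a * m : ℕ))
  have hbm : IsCoprime b m := isCoprime_of_eq_gcd_mul hdvd hb
  generalize (Int.gcd (2 * (x - p * e * z)) (4 * a * m : ℕ) : ℤ) = g at hb hl
  have hxm : IsCoprime (l * m * c * x - b) m := by
    rw [show l * m * c * x - b = -b + m * (l * c * x) by ring]
    exact hbm.neg_left.add_mul_left_left _
  have hcg : 1 - p * e ^ 2 = g * l * m * c := by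
    rw [hc, ← hl]
    push_cast
    ring
  have heq : (l * m * c * x - b) ^ 2 + a * (l * m * c * y) ^ 2 =
      p * (l * m * c * z - b * e) ^ 2 := by
     linear_combination (l * m * c) ^ 2 * h - b * l * m * c * hb + b ^ 2 * hcg
  refine ⟨_, _, _, heq, fun hz ↦ ?_, hxm, ⟨l * c * y, by ring⟩⟩
  have hx0 : l * m * c * x - b = 0 := by
    rw [hz] at heq
    refine pow_eq_zero_iff two_ne_zero |>.1 (le_antisymm ?_ (sq_nonneg _))
    have : 0 ≤ a * (l * m * c * y) ^ 2 := by positivity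
    linarith
  rw [hx0, isCoprime_zero_left, Int.isUnit_iff] at hxm
  lia

lemma exists_isCoprime_sq_add_mul_sq_eq_mul_sq (ha : 2 ≤ a) (hm : m ≠ 0) (h2m : 2 ∣ m)
    (hp : p.Prime) (hpm : p ≡ 1 [MOD 4 * a * m * m]) :
    ∃ x y z : ℤ, x ^ 2 + a * y ^ 2 = p * z ^ 2 ∧ z ≠ 0 ∧ IsCoprime x m ∧ (m : ℤ) ∣ y ∧
      IsCoprime x y := by
  have hsq : Squarefree (p : ℤ) := (Nat.prime_iff_prime_int.1 hp).squarefree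
  have hpa : p ≡ 1 [MOD 4 * a] := hpm.of_dvd ((dvd_mul_right _ m).mul_right m)
  obtain ⟨x₀, y₀, z₀, h₀, hz₀⟩ := exists_sq_add_mul_sq_eq_mul_sq ha hp hpa
  obtain ⟨-, x₁, y₁, z₁, -, -, hxy₁, -, h₁⟩ := exists_isCoprime_of_sq_add_mul_sq_eq hsq h₀ hz₀
  obtain ⟨x₂, y₂, z₂, h₂, hz₂, hxm, hmy⟩ :=
    exists_sq_add_mul_sq_eq_mul_sq_isCoprime_dvd (by lia) hm h2m hpm h₁ hxy₁
  obtain ⟨d, x, y, z, rfl, rfl, hxy, hz, h⟩ := exists_isCoprime_of_sq_add_mul_sq_eq hsq h₂ hz₂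
  exact ⟨x, y, z, h, hz, hxm.of_mul_left_right,
    hxm.of_mul_left_left.symm.dvd_of_dvd_mul_left hmy, hxy⟩

end LegendreConic

section SquareClasses

variable {R : Type*} [CommRing R]

lemma isCoprime_add_sub_of_sq_eq_neg {a m : ℕ} {θ : R} (hθ : θ ^ 2 = -a) (h2m : 2 ∣ m)
    (ham : a ∣ m) {x y : ℤ} (hxm : IsCoprime x m) (hmy : (m : ℤ) ∣ y) (hxy : IsCoprime x y) :
    IsCoprime ((x : R) + y * θ) (x - y * θ) := by
  obtain ⟨u, v, huv⟩ : IsCoprime x (a * y) :=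
    (hxm.of_isCoprime_of_dvd_right (Int.natCast_dvd_natCast.2 ham)).mul_right hxy
  obtain ⟨s, t, hst⟩ : IsCoprime x 2 := hxm.of_isCoprime_of_dvd_right (by exact_mod_cast h2m)
  obtain ⟨w, rfl⟩ : (2 : ℤ) ∣ y := (show (2 : ℤ) ∣ m by exact_mod_cast h2m).trans hmy
  have huv' := congrArg (Int.cast : ℤ → R) huv
  have hst' := congrArg (Int.cast : ℤ → R) hst
  push_cast at huv' hst' ⊢
  refine ⟨s + (t - s * w * θ) * (u - v * θ), (t - s * w * θ) * (u + v * θ), ?_⟩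
  linear_combination hst' + 2 * (t - s * w * θ) * huv' - 2 * (t - s * w * θ) * v * (2 * w) * hθ

lemma span_pair_mul_span_pair_eq {p α β u v w : R} (hp : p ∣ α * β)
    (h : u * α + v * β + w * p = 1) :
    Ideal.span {p, α} * Ideal.span {p, β} = Ideal.span {p} := by
  refine le_antisymm ?_ ?_
  · rw [Ideal.span_pair_mul_span_pair, Ideal.span_le]
    rintro - (rfl | rfl | rfl | rfl) <;> rw [SetLike.mem_coe, Ideal.mem_span_singleton]
    exacts [dvd_mul_right _ _, dvd_mul_right _ _, dvd_mul_left _ _, hp]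
  · have hp' : u * (α * p) + v * (p * β) + w * (p * p) = p := by linear_combination p * h
    have hpα : p ∈ Ideal.span {p, α} := Ideal.subset_span (by simp)
    have hα : α ∈ Ideal.span {p, α} := Ideal.subset_span (by simp)
    have hpβ : p ∈ Ideal.span {p, β} := Ideal.subset_span (by simp)
    have hβ : β ∈ Ideal.span {p, β} := Ideal.subset_span (by simp)
    have hmem := add_mem (add_mem
      (Ideal.mul_mem_left _ u (Ideal.mul_mem_mul hα hpβ))
      (Ideal.mul_mem_left _ v (Ideal.mul_mem_mul hpα hβ)))
      (Ideal.mul_mem_left _ w (Ideal.mul_mem_mul hpα hpβ))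
    rwa [hp', ← Ideal.span_singleton_le_iff_mem] at hmem

variable [IsDedekindDomain R]

lemma exists_dvd_span_eq_mul_sq {α β p z : R} (hp : p ≠ 0) (h : α * β = p * z ^ 2)
    (hcop : IsCoprime α β) :
    ∃ P J : Ideal R, P ∣ Ideal.span {p} ∧ Ideal.span {α} = P * J ^ 2 := by
  have ⟨u, v, huv⟩ := hcop
  have hPQ : Ideal.span {p, α} * Ideal.span {p, β} = Ideal.span {p} :=
    span_pair_mul_span_pair_eq (u := u) (v := v) (w := 0) ⟨_, h⟩ (by linear_combination huv)
  obtain ⟨A, hA⟩ : Ideal.span {p, α} ∣ Ideal.span {α} :=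
    Ideal.dvd_iff_le.2 (Ideal.span_mono (by simp))
  obtain ⟨B, hB⟩ : Ideal.span {p, β} ∣ Ideal.span {β} :=
    Ideal.dvd_iff_le.2 (Ideal.span_mono (by simp))
  have hAB : A * B = Ideal.span {z} ^ 2 := by
    refine mul_left_cancel₀ (show Ideal.span {p} ≠ 0 by simpa using hp) ?_
    rw [Ideal.span_singleton_pow, Ideal.span_singleton_mul_span_singleton, ← h,
      ← Ideal.span_singleton_mul_span_singleton, hA, hB, ← hPQ]
    ring
  have hcopAB : IsCoprime (Ideal.span {p, α} * A) (Ideal.span {p, β} * B) := by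
    rw [← hA, ← hB]
    exact (Ideal.isCoprime_span_singleton_iff α β).2 hcop
  obtain ⟨J, rfl⟩ := exists_eq_pow_of_mul_eq_pow_of_coprime
    hcopAB.of_mul_left_right.of_mul_right_right hAB
  exact ⟨_, J, ⟨_, hPQ.symm⟩, hA⟩

lemma prime_mul_sq_ne_sq {p u v : ℕ} (hp : p.Prime) (hu : u ≠ 0) : p * u ^ 2 ≠ v ^ 2 := by
  intro h
  obtain ⟨t, rfl⟩ : u ∣ v := (Nat.pow_dvd_pow_iff two_ne_zero).1 ⟨p, by rw [← h, mul_comm]⟩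
  refine hp.prime.irreducible.not_isSquare ⟨t, ?_⟩
  exact Nat.eq_of_mul_eq_mul_right (pow_pos (Nat.pos_of_ne_zero hu) 2) (by rw [h]; ring)

lemma eq_prime_of_mul_sq_eq_mul_sq {p n u z : ℕ} (hp : p.Prime) (hn : n ∣ p ^ 2) (hz : z ≠ 0)
    (h : n * u ^ 2 = p * z ^ 2) : n = p := by
  obtain ⟨i, hi, rfl⟩ := (Nat.dvd_prime_pow hp).1 hn
  have hu : u ≠ 0 := by
    rintro rfl
    simp [hp.ne_zero, hz] at h
  interval_cases i
  · exact (prime_mul_sq_ne_sq hp hz (by rw [← h, pow_zero, one_mul])).elim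
  · exact pow_one p
  · exact (prime_mul_sq_ne_sq hp hu
      (Nat.eq_of_mul_eq_mul_left hp.pos (by rw [← h]; ring))).elim

lemma im_ne_zero_of_sq_eq_neg {w : ℂ} {r : ℝ} (hr : 0 < r) (h : w ^ 2 = -r) : w.im ≠ 0 := by
  intro him
  have hre := congrArg Complex.re h
  simp only [sq, Complex.mul_re, him, Complex.neg_re, Complex.ofReal_re] at hre
  nlinarith [mul_self_nonneg w.re]

lemma norm_add_mul_sq_of_sq_eq_neg {w : ℂ} {r : ℝ} (hr : 0 < r) (h : w ^ 2 = -r) (x y : ℝ) :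
    ‖x + y * w‖ ^ 2 = x ^ 2 + r * y ^ 2 := by
  have hre := congrArg Complex.re h
  have him := congrArg Complex.im h
  simp only [sq, Complex.mul_re, Complex.mul_im, Complex.neg_re, Complex.neg_im,
    Complex.ofReal_re, Complex.ofReal_im, neg_zero] at hre him
  have hw : w.re = 0 :=
    (mul_eq_zero_iff_right (im_ne_zero_of_sq_eq_neg hr h)).1 (by linarith)
  rw [← Complex.normSq_eq_norm_sq, Complex.normSq_apply]
  simp only [Complex.add_re, Complex.add_im, Complex.re_ofReal_mul, Complex.im_ofReal_mul,
    Complex.ofReal_re, Complex.ofReal_im, hw] at hre ⊢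
  linear_combination -y ^ 2 * hre

variable [Module.Free ℤ R] {a m p : ℕ} {θ : R}

lemma absNorm_span_add_mul (φ : R →+* ℂ) [IsImaginaryQuadratic φ] (ha : a ≠ 0)
    (hθ : θ ^ 2 = -a) (x y : ℤ) :
    (Ideal.absNorm (Ideal.span {x + y * θ}) : ℤ) = x ^ 2 + a * y ^ 2 := by
  have hφθ : φ θ ^ 2 = -(a : ℝ) := by rw [← map_pow, hθ]; simp
  have := norm_add_mul_sq_of_sq_eq_neg (by positivity) hφθ x y
  have hnorm := IsImaginaryQuadratic.absNorm_span (φ := φ) (x + y * θ)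
  simp only [map_add, map_mul, map_intCast, Complex.ofReal_intCast] at hnorm this
  rw [this] at hnorm
  exact_mod_cast hnorm

variable [Module.Finite ℤ R] [CharZero R]

lemma exists_ringClass_eq_mul_self_of_mul_sq {P J : Ideal R} {α : R}
    (hα : IsRationalUnitMod m α) (h : Ideal.span {α} = P * J ^ 2) :
    ∃ g : RingClassGroup R m, ringClass R m P = (g * g : RingClassGroup R m) := by
  have hone : ringClass R m P * ringClass R m J ^ 2 = 1 := by
    rw [← map_pow, ← map_mul, ← h]
    exact ringClass_eq_one_iff.2 ⟨α, hα, rfl⟩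
  have hJ : ringClass R m J ≠ 0 := fun h0 ↦ by simp [h0] at hone
  obtain ⟨j, hj⟩ := WithZero.ne_zero_iff_exists.1 hJ
  refine ⟨j⁻¹, ?_⟩
  rw [WithZero.coe_mul, WithZero.coe_inv, ← mul_inv, ← sq, hj]
  exact eq_inv_of_mul_eq_one_left hone

theorem exists_ringClass_eq_mul_self_absNorm_eq (φ : R →+* ℂ) [IsImaginaryQuadratic φ]
    (hθ : θ ^ 2 = -a) (ha : 2 ≤ a) (hm : m ≠ 0) (h2m : 2 ∣ m) (ham : a ∣ m) (hp : p.Prime)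
    (hpm : p ≡ 1 [MOD 4 * a * m * m]) :
    ∃ g : RingClassGroup R m, ∃ P : Ideal R,
      ringClass R m P = (g * g : RingClassGroup R m) ∧ Ideal.absNorm P = p := by
  obtain ⟨x, y, z, hxyz, hz, hxm, hmy, hxy⟩ :=
    exists_isCoprime_sq_add_mul_sq_eq_mul_sq ha hm h2m hp hpm
  have hcop := isCoprime_add_sub_of_sq_eq_neg hθ h2m ham hxm hmy hxy
  have hαβ : ((x : R) + y * θ) * (x - y * θ) = p * z ^ 2 := by
    have := congrArg (Int.cast : ℤ → R) hxyz
    push_cast at this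
    linear_combination this - y ^ 2 * hθ
  obtain ⟨P, J, hP, hPJ⟩ :=
    exists_dvd_span_eq_mul_sq (by exact_mod_cast hp.ne_zero) hαβ hcop
  have hα : IsRationalUnitMod m ((x : R) + y * θ) := by
    obtain ⟨w, rfl⟩ := hmy
    exact ⟨left_ne_zero_of_mul (hαβ.trans_ne (by simp [hp.ne_zero, hz])), x, hxm,
      w * θ, by push_cast; ring⟩
  obtain ⟨g, hg⟩ := exists_ringClass_eq_mul_self_of_mul_sq hα hPJ
  refine ⟨g, P, hg, eq_prime_of_mul_sq_eq_mul_sq (u := Ideal.absNorm J) hp ?_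
    (Int.natAbs_ne_zero.2 hz) ?_⟩
  · have hp2 := absNorm_span_add_mul φ (by lia) hθ p 0
    rw [Int.cast_zero, zero_mul, add_zero, zero_pow two_ne_zero, mul_zero, add_zero,
      Int.cast_natCast] at hp2
    rw [← (by exact_mod_cast hp2 : Ideal.absNorm (Ideal.span {(p : R)}) = p ^ 2)]
    exact map_dvd Ideal.absNorm hP
  · have hN := absNorm_span_add_mul φ (by lia) hθ x y
    rw [hPJ, hxyz, map_mul, map_pow] at hN
    zify
    rw [sq_abs]
    exact_mod_cast hN

end SquareClasses

section ImaginaryQuadraticField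

open scoped NumberField

open QuadraticAlgebra (omega)

variable {a : ℕ}

lemma fact_sq_ne_neg_natCast (ha : a ≠ 0) : Fact (∀ r : ℚ, r ^ 2 ≠ -(a : ℚ) + 0 * r) :=
  ⟨fun r h ↦ by
    have : (0 : ℚ) < a := by positivity
    nlinarith [sq_nonneg r]⟩

lemma quadraticAlgebra_algebraNorm_eq (z : QuadraticAlgebra ℚ (-a : ℚ) 0) :
    Algebra.norm ℚ z = z.re ^ 2 + a * z.im ^ 2 := by
  refine (QuadraticAlgebra.det_toLinearMap_eq_norm z).trans ?_
  rw [QuadraticAlgebra.norm_def]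
  ring

lemma exists_two_mul_re_eq_of_isIntegral {z : QuadraticAlgebra ℚ (-a : ℚ) 0}
    (hz : IsIntegral ℤ z) : ∃ k : ℤ, 2 * z.re = k := by
  have htrace :=
    hz.add (hz.map (starRingEnd (QuadraticAlgebra ℚ (-a : ℚ) 0)).toIntAlgHom)
  change IsIntegral ℤ (z + star z) at htrace
  rw [← QuadraticAlgebra.algebraMap_trace_eq_add_star, isIntegral_algebraMap_iff
    QuadraticAlgebra.algebraMap_injective, IsIntegrallyClosed.isIntegral_iff] at htrace
  obtain ⟨k, hk⟩ := htrace
  rw [QuadraticAlgebra.trace_def, zero_mul, add_zero] at hk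
  exact ⟨k, hk.symm⟩

lemma omega_sq_eq_neg : (omega : QuadraticAlgebra ℚ (-a : ℚ) 0) ^ 2 = -a := by
  rw [sq, QuadraticAlgebra.omega_mul_omega_eq_mk]
  ext <;> simp

lemma isIntegral_omega : IsIntegral ℤ (omega : QuadraticAlgebra ℚ (-a : ℚ) 0) := by
  refine IsIntegral.of_pow two_pos ?_
  rw [omega_sq_eq_neg]
  exact (isIntegral_algebraMap (x := (a : ℤ))).neg

lemma exists_two_mul_mul_eq_of_isIntegral {z : QuadraticAlgebra ℚ (-a : ℚ) 0}
    (hz : IsIntegral ℤ z) :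
    ∃ x y : ℤ, 2 * a * z = x + y * (omega : QuadraticAlgebra ℚ (-a : ℚ) 0) := by
  obtain ⟨k, hk⟩ := exists_two_mul_re_eq_of_isIntegral hz
  obtain ⟨l, hl⟩ := exists_two_mul_re_eq_of_isIntegral (isIntegral_omega.mul hz)
  refine ⟨a * k, -l, ?_⟩
  rw [QuadraticAlgebra.re_mul] at hl
  simp only [QuadraticAlgebra.omega_re, QuadraticAlgebra.omega_im] at hl
  ext <;> simp only [QuadraticAlgebra.re_add, QuadraticAlgebra.im_add, QuadraticAlgebra.re_mul,
    QuadraticAlgebra.im_mul, QuadraticAlgebra.re_ofNat, QuadraticAlgebra.im_ofNat,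
    QuadraticAlgebra.re_natCast, QuadraticAlgebra.im_natCast, QuadraticAlgebra.re_intCast,
    QuadraticAlgebra.im_intCast, QuadraticAlgebra.omega_re, QuadraticAlgebra.omega_im]
  · push_cast
    linear_combination a * hk
  · push_cast
    linear_combination -hl

lemma norm_ringHom_sq_eq (ha : a ≠ 0) (φ : QuadraticAlgebra ℚ (-a : ℚ) 0 →+* ℂ)
    (z : QuadraticAlgebra ℚ (-a : ℚ) 0) :
    ‖φ z‖ ^ 2 = ((z.re ^ 2 + a * z.im ^ 2 : ℚ) : ℝ) := by
  have hφω : φ omega ^ 2 = -(a : ℝ) := by rw [← map_pow, omega_sq_eq_neg]; simp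
  have hz : φ z = (z.re : ℝ) + (z.im : ℝ) * φ omega := by
    conv_lhs => rw [show z = algebraMap ℚ _ z.re + algebraMap ℚ _ z.im * omega by ext <;> simp]
    simp
  rw [hz, norm_add_mul_sq_of_sq_eq_neg (by positivity) hφω]
  push_cast
  rfl

theorem exists_numberField_isImaginaryQuadratic (ha : a ≠ 0) :
    ∃ (K : Type) (_ : Field K) (_ : NumberField K) (φ : 𝓞 K →+* ℂ) (θ : 𝓞 K),
      IsImaginaryQuadratic φ ∧ θ ^ 2 = -a ∧
        ∀ α : 𝓞 K, ∃ x y : ℤ, 2 * a * α = x + y * θ := by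
  have := fact_sq_ne_neg_natCast ha
  let K := QuadraticAlgebra ℚ (-a : ℚ) 0
  have : NumberField K := { to_charZero := inferInstance, to_finiteDimensional := inferInstance }
  have hinj := FaithfulSMul.algebraMap_injective (𝓞 K) K
  obtain ⟨φ⟩ : Nonempty (K →+* ℂ) := inferInstance
  let θ : 𝓞 K := ⟨omega, isIntegral_omega⟩
  have hθ : θ ^ 2 = -a := hinj <| by
    rw [map_pow, map_neg, map_natCast]
    exact omega_sq_eq_neg
  refine ⟨K, inferInstance, inferInstance, φ.comp (algebraMap (𝓞 K) K), θ, ⟨fun α ↦ ?_, θ, ?_⟩,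
    hθ, fun α ↦ ?_⟩
  · have hnorm := (Algebra.coe_norm_int α).trans (quadraticAlgebra_algebraNorm_eq _)
    have hnonneg : (0 : ℚ) ≤ Algebra.norm ℤ α := by rw [hnorm]; positivity
    rw [RingHom.comp_apply, norm_ringHom_sq_eq ha, ← hnorm, Ideal.absNorm_span_singleton,
      Nat.cast_natAbs, abs_of_nonneg (Int.cast_nonneg_iff.1 hnonneg), Rat.cast_intCast]
  · refine im_ne_zero_of_sq_eq_neg (r := a) (by positivity) ?_
    rw [← map_pow, hθ]
    simp
  · obtain ⟨x, y, hxy⟩ := exists_two_mul_mul_eq_of_isIntegral α.2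
    refine ⟨x, y, hinj ?_⟩
    simp only [map_mul, map_add, map_ofNat, map_natCast, map_intCast]
    exact hxy

end ImaginaryQuadraticField

section FormsAndIdeals

open Filter Asymptotics

open scoped NumberField

lemma ne_zero_of_isCoprime_two_mul {A a : ℤ} (hA : IsCoprime A (2 * a)) : A ≠ 0 := by
  rintro rfl
  rw [isCoprime_zero_left, Int.isUnit_iff] at hA
  lia

variable {R : Type*} [CommRing R] {a : ℕ} {θ : R}

lemma IsRationalUnitMod.exists_eq_add_mul
    (hgen : ∀ α : R, ∃ x y : ℤ, 2 * a * α = x + y * θ) {γ : R}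
    (hγ : IsRationalUnitMod (2 * a) γ) : ∃ x y : ℤ, γ = x + y * θ := by
  obtain ⟨-, k, -, α, hα⟩ := hγ
  obtain ⟨x, y, hxy⟩ := hgen α
  push_cast at hα
  exact ⟨k + x, y, by push_cast; linear_combination hα + hxy⟩

variable [IsDedekindDomain R] [Module.Free ℤ R]

lemma eq_of_add_mul_eq_add_mul (φ : R →+* ℂ) [IsImaginaryQuadratic φ] (ha : a ≠ 0)
    (hθ : θ ^ 2 = -a) {x y x' y' : ℤ} (h : (x + y * θ : R) = x' + y' * θ) : y = y' := by
  have hnorm := absNorm_span_add_mul φ ha hθ (x - x') (y - y')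
  rw [show (((x - x' : ℤ) : R) + (y - y' : ℤ) * θ) = 0 by push_cast; linear_combination h,
    Ideal.span_singleton_zero, Ideal.zero_eq_bot.symm, map_zero, Nat.cast_zero] at hnorm
  have : 0 < (a : ℤ) := by positivity
  have hy : a * (y - y') ^ 2 = 0 := by nlinarith [sq_nonneg (x - x')]
  simpa [ha, sub_eq_zero] using hy

lemma dvd_of_mem_span_pair (φ : R →+* ℂ) [IsImaginaryQuadratic φ] (ha : a ≠ 0)
    (hθ : θ ^ 2 = -a) (hgen : ∀ α : R, ∃ x y : ℤ, 2 * a * α = x + y * θ) {A B C x y : ℤ}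
    (hABC : A * C = B ^ 2 + a) (hA : IsCoprime A (2 * a))
    (hmem : x + y * θ ∈ Ideal.span {(A : R), B - θ}) : A ∣ x + B * y := by
  obtain ⟨u, v, huv⟩ := Ideal.mem_span_pair.1 hmem
  obtain ⟨s, t, hst⟩ := hgen (u * (B + θ) + v * C)
  have hABC' := congrArg (Int.cast : ℤ → R) hABC
  push_cast at hABC'
  have hmul : (B + θ) * (x + y * θ) = A * (u * (B + θ) + v * C) := by
    linear_combination -(B + θ) * huv - v * hABC' - v * hθ
  refine hA.dvd_of_dvd_mul_left ⟨t, eq_of_add_mul_eq_add_mul φ ha hθ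
    (x := 2 * a * (B * x - a * y)) (x' := A * s) ?_⟩
  push_cast
  linear_combination 2 * a * hmul + A * hst - 2 * a * y * hθ

lemma absNorm_span_pair_eq (φ : R →+* ℂ) [IsImaginaryQuadratic φ] (ha : a ≠ 0)
    (hθ : θ ^ 2 = -a) (hgen : ∀ α : R, ∃ x y : ℤ, 2 * a * α = x + y * θ) {A : ℕ} {B C : ℤ}
    (hABC : A * C = B ^ 2 + a) (hA : IsCoprime (A : ℤ) (2 * a)) :
    Ideal.absNorm (Ideal.span {(A : R), B - θ}) = A := by
  have hdvd : ∀ B : ℤ, A * C = B ^ 2 + a → A ∣ Ideal.absNorm (Ideal.span {(A : R), B - θ}) := by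
    intro B hB
    have := dvd_of_mem_span_pair φ ha hθ hgen (x := Ideal.absNorm (Ideal.span {(A : R), B - θ}))
      (y := 0) hB hA (by simpa using Ideal.absNorm_mem _)
    simpa [Int.natCast_dvd_natCast] using this
  obtain ⟨u, v, huv⟩ : IsCoprime (A : ℤ) (2 * B) := by
    refine hA.of_mul_right_left.mul_right ?_
    obtain ⟨u, v, huv⟩ := hA.of_mul_right_right
    exact ⟨u + v * C, -v * B, by linear_combination huv + v * hABC⟩
  have hABC' := congrArg (Int.cast : ℤ → R) hABC
  have huv' := congrArg (Int.cast : ℤ → R) huv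
  push_cast at hABC' huv'
  have hmul : Ideal.span {(A : R), B - θ} * Ideal.span {(A : R), (-B : ℤ) - θ} =
      Ideal.span {(A : R)} :=
    span_pair_mul_span_pair_eq (u := v) (v := -v) (w := u)
      ⟨-C, by push_cast; linear_combination hABC' + hθ⟩ (by push_cast; linear_combination huv')
  have hN := absNorm_span_add_mul φ ha hθ A 0
  rw [Int.cast_zero, zero_mul, add_zero, Int.cast_natCast, ← hmul, map_mul] at hN
  obtain ⟨s, hs⟩ := hdvd B hABC
  obtain ⟨t, ht⟩ := hdvd (-B) (by rw [hABC, neg_sq])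
  have hst : (s * t : ℤ) = 1 := by
    refine mul_left_cancel₀ (pow_ne_zero 2 (ne_zero_of_isCoprime_two_mul hA)) ?_
    rw [hs, ht] at hN
    push_cast at hN
    linear_combination hN
  have hs1 : s = 1 := Nat.eq_one_of_mul_eq_one_right (by exact_mod_cast hst)
  rw [hs, hs1, mul_one]

lemma exists_eventually_card_absNorm_le (K : Type*) [Field K] [NumberField K] :
    ∃ C : ℝ, ∀ᶠ n : ℕ in atTop,
      (Nat.card {I : Ideal (𝓞 K) // Ideal.absNorm I ≤ n} : ℝ) ≤ C * n := by
  have hlim := (NumberField.Ideal.tendsto_norm_le_div_atTop K).comp tendsto_natCast_atTop_atTop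
  obtain ⟨c, hc⟩ : ∃ c, Tendsto _ atTop (nhds c) := ⟨_, hlim⟩
  refine ⟨c + 1, ?_⟩
  filter_upwards [hc.eventually_le_const (lt_add_one _), eventually_gt_atTop 0] with n hn hn0
  simp only [Function.comp_apply, Nat.cast_le] at hn
  exact (div_le_iff₀ (by exact_mod_cast hn0)).1 hn

variable [Module.Finite ℤ R] [CharZero R]

theorem exists_prime_form_eq_of_isImaginaryQuadratic (φ : R →+* ℂ) [IsImaginaryQuadratic φ]
    (ha : 2 ≤ a) (hθ : θ ^ 2 = -a) (hgen : ∀ α : R, ∃ x y : ℤ, 2 * a * α = x + y * θ) {D : ℝ}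
    (htotal : ∀ᶠ n : ℕ in atTop, (Nat.card {I : Ideal R // Ideal.absNorm I ≤ n} : ℝ) ≤ D * n)
    {A : ℕ} {B C : ℤ} (hABC : A * C = B ^ 2 + a) (hA : IsCoprime (A : ℤ) (2 * a)) (X : ℕ) :
    ∃ p : ℕ, p.Prime ∧ X < p ∧ ∃ x y : ℤ, A * x ^ 2 + 2 * B * x * y + C * y ^ 2 = p := by
  have ha0 : a ≠ 0 := by lia
  have : NeZero (4 * a * (2 * a) * (2 * a)) := ⟨by simp [ha0]⟩
  set J : Ideal R := Ideal.span {(A : R), B - θ} with hJ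
  have hA0 : (A : ℤ) ≠ 0 := ne_zero_of_isCoprime_two_mul hA
  obtain ⟨J', hJ'⟩ : J ∣ Ideal.span {(A : R)} := Ideal.dvd_iff_le.2 (Ideal.span_mono (by simp))
  have hspanA : Ideal.span {(A : R)} ∈ coprimeIdeals R (2 * a) :=
    (IsRationalUnitMod.natCast (by exact_mod_cast hA0)
      (Nat.isCoprime_iff_coprime.1 (by exact_mod_cast hA))).span_mem_coprimeIdeals
  obtain ⟨j, hj⟩ := WithZero.ne_zero_iff_exists.1 <| ringClass_ne_zero_iff.2
    (mul_mem_coprimeIdeals_iff.1 (hJ' ▸ hspanA)).1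
  obtain ⟨κ, hκ, hcount⟩ := exists_card_ringClass_sub_isBigO φ (m := 2 * a) (by lia)
  have : Finite (RingClassGroup R (2 * a)) :=
    finite_of_card_class_sub_isBigO _ hκ (by norm_num) hcount htotal
  obtain ⟨P, hP, hPp, hPX⟩ := exists_prime_absNorm_of_card_isBigO (ringClass R (2 * a)) hκ
    (by norm_num) (by norm_num) hcount (fun p hp hp1 ↦ exists_ringClass_eq_mul_self_absNorm_eq φ
      hθ ha (by lia) (dvd_mul_right _ _) (dvd_mul_left _ _) hp
      ((ZMod.natCast_eq_natCast_iff _ _ _).1 (by rw [hp1, Nat.cast_one]))) j⁻¹ X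
  obtain ⟨γ, hγ, hPJ⟩ := (ringClass_eq_iff_exists (by rw [inv_inv, hj])).1 hP
  obtain ⟨x, y, rfl⟩ := hγ.exists_eq_add_mul hgen
  have hmem : (x + y * θ : R) ∈ J :=
    Ideal.mul_le_right (hPJ.ge (Ideal.mem_span_singleton_self _))
  obtain ⟨t, ht⟩ :=
    dvd_of_mem_span_pair φ ha0 hθ hgen (x := x) (y := y) hABC hA (by rwa [Int.cast_natCast])
  have hN := absNorm_span_add_mul φ ha0 hθ x y
  rw [← hPJ, map_mul, hJ, absNorm_span_pair_eq φ ha0 hθ hgen hABC hA] at hN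
  refine ⟨_, hPp, hPX, t, -y, mul_left_cancel₀ hA0 ?_⟩
  push_cast at hN
  linear_combination -hN + y ^ 2 * hABC - (x - B * y + A * t) * ht

theorem exists_prime_form_eq_of_isCoprime {a A : ℕ} {B C : ℤ} (ha : 2 ≤ a)
    (hABC : A * C = B ^ 2 + a) (hA : IsCoprime (A : ℤ) (2 * a)) (X : ℕ) :
    ∃ p : ℕ, p.Prime ∧ X < p ∧ ∃ x y : ℤ, A * x ^ 2 + 2 * B * x * y + C * y ^ 2 = p := by
  obtain ⟨K, _, _, φ, θ, _, hθ, hgen⟩ :=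
    exists_numberField_isImaginaryQuadratic (show a ≠ 0 by lia)
  obtain ⟨D, htotal⟩ := exists_eventually_card_absNorm_le K
  exact exists_prime_form_eq_of_isImaginaryQuadratic φ ha hθ hgen htotal hABC hA X

end FormsAndIdeals

section Weber

lemma form_pos {K : Type*} [CommRing K] [LinearOrder K] [IsStrictOrderedRing K] {α β γ x y : K}
    (hα : 0 < α) (hdisc : β ^ 2 < 4 * α * γ) (hxy : x ≠ 0 ∨ y ≠ 0) :
    0 < α * x ^ 2 + β * x * y + γ * y ^ 2 := by
  have hsq : 4 * α * (α * x ^ 2 + β * x * y + γ * y ^ 2) =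
      (2 * α * x + β * y) ^ 2 + (4 * α * γ - β ^ 2) * y ^ 2 := by ring
  refine pos_of_mul_pos_right (a := 4 * α) ?_ (by positivity)
  rw [hsq]
  have := sub_pos.2 hdisc
  rcases eq_or_ne y 0 with rfl | hy
  · have hx : x ≠ 0 := by simpa using hxy
    have : 0 < (2 * α * x) ^ 2 := by positivity
    simpa using this
  · positivity

lemma exists_not_dvd_form {q α β γ : ℤ} (h : ¬(q ∣ α ∧ q ∣ β ∧ q ∣ γ)) :
    ∃ x y : ℤ, ¬q ∣ α * x ^ 2 + β * x * y + γ * y ^ 2 := by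
  contrapose! h
  have hα : q ∣ α := by simpa using h 1 0
  have hγ : q ∣ γ := by simpa using h 0 1
  have hsum : q ∣ α + β + γ := by simpa using h 1 1
  exact ⟨hα, (dvd_add_right hα).1 ((dvd_add_left hγ).1 hsum), hγ⟩

lemma exists_isCoprime_form {α β γ : ℤ} (hprim : Int.gcd α (Int.gcd β γ) = 1) {M : ℕ}
    (hM : 1 < M) :
    ∃ x y : ℤ, IsCoprime x y ∧ IsCoprime (α * x ^ 2 + β * x * y + γ * y ^ 2) M := by
  have hloc (q : ℕ) (hq : q.Prime) :
      ∃ x y : ℤ, ¬(q : ℤ) ∣ α * x ^ 2 + β * x * y + γ * y ^ 2 := by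
    refine exists_not_dvd_form fun ⟨hα, hβ, hγ⟩ ↦ hq.one_lt.ne' ?_
    have hdvd := Int.dvd_coe_gcd hα (Int.dvd_coe_gcd hβ hγ)
    rw [hprim] at hdvd
    exact Nat.dvd_one.1 (by exact_mod_cast hdvd)
  choose! s t hst using hloc
  obtain ⟨x, hx⟩ := exists_forall_primeFactors_pow_dvd_sub M s
  obtain ⟨y, hy⟩ := exists_forall_primeFactors_pow_dvd_sub M t
  have hcop : IsCoprime (α * x ^ 2 + β * x * y + γ * y ^ 2) (M : ℤ) := by
    refine isCoprime_of_forall_prime_dvd fun q hq hqf hqM ↦ hst q hq ?_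
    have hqM' : q ∈ M.primeFactors :=
      Nat.mem_primeFactors.2 ⟨hq, Int.natCast_dvd_natCast.1 hqM, by lia⟩
    have hpow : (q : ℤ) ∣ (q : ℤ) ^ M.factorization q :=
      dvd_pow_self _ (Finsupp.mem_support_iff.1 hqM')
    have hxs : x ≡ s q [ZMOD q] := ((Int.modEq_iff_dvd).2 (hpow.trans (hx q hqM'))).symm
    have hyt : y ≡ t q [ZMOD q] := ((Int.modEq_iff_dvd).2 (hpow.trans (hy q hqM'))).symm
    have hform : α * x ^ 2 + β * x * y + γ * y ^ 2 ≡
        α * s q ^ 2 + β * s q * t q + γ * t q ^ 2 [ZMOD q] := by gcongr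
    exact hform.dvd_iff.1 hqf
  have hxy : 0 < Int.gcd x y := by
    refine Int.gcd_pos_iff.2 (not_and_or.1 ?_)
    rintro ⟨rfl, rfl⟩
    have hunit : IsUnit (M : ℤ) := isCoprime_zero_left.1 (by simpa using hcop)
    rw [Int.isUnit_iff] at hunit
    lia
  obtain ⟨x', y', hcop', hx', hy'⟩ := Int.exists_gcd_one hxy
  refine ⟨x', y', Int.isCoprime_iff_gcd_eq_one.2 hcop', hcop.of_isCoprime_of_dvd_left
    ⟨(Int.gcd x y : ℤ) ^ 2, ?_⟩⟩
  generalize Int.gcd x y = g at hx' hy'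
  rw [hx', hy']
  ring

lemma two_le_sub_sq_of_sq_lt {α β γ : ℤ} (hdisc : β ^ 2 < 4 * α * γ) :
    2 ≤ 4 * α * γ - β ^ 2 := by
  rcases Int.even_or_odd' β with ⟨k, rfl | rfl⟩ <;> ring_nf at hdisc ⊢ <;> lia

theorem exists_prime_eq_form {α β γ : ℤ} (hprim : Int.gcd α (Int.gcd β γ) = 1) (hα : 0 < α)
    (hdisc : β ^ 2 < 4 * α * γ) (X : ℕ) :
    ∃ p : ℕ, p.Prime ∧ X < p ∧ ∃ x y : ℤ, α * x ^ 2 + β * x * y + γ * y ^ 2 = p := by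
  obtain ⟨D, hD⟩ := Int.eq_ofNat_of_zero_le (sub_pos.2 hdisc).le
  have hD2 : 2 ≤ D := by exact_mod_cast hD ▸ two_le_sub_sq_of_sq_lt hdisc
  obtain ⟨x, y, ⟨v, u, huv⟩, hcop⟩ := exists_isCoprime_form hprim (show 1 < 2 * D by lia)
  have hxy : x ≠ 0 ∨ y ≠ 0 := by
    by_contra! h
    simp [h.1, h.2] at huv
  obtain ⟨A, hA⟩ := Int.eq_ofNat_of_zero_le (form_pos hα hdisc hxy).le
  -- The form evaluated at `s (x, y) + 2 t (-u, v)`: doubling the second vector of the basis makes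
  -- the middle coefficient even.
  obtain ⟨p, hp, hX, s, t, hst⟩ := exists_prime_form_eq_of_isCoprime (a := D) (A := A)
    (B := 2 * α * x * -u + β * (x * v - y * u) + 2 * γ * y * v)
    (C := 4 * (α * u ^ 2 - β * u * v + γ * v ^ 2)) hD2
    (by rw [← hD, ← hA]; linear_combination (4 * α * γ - β ^ 2) * (v * x + u * y + 1) * huv)
    (by rw [← hA]; exact_mod_cast hcop) X
  refine ⟨p, hp, hX, x * s - 2 * u * t, y * s + 2 * v * t, ?_⟩
  rw [← hst, ← hA]
  ring

end Weber

section Congruence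

lemma transpose_mul_mul_diag {K : Type*} [CommRing K] {T : Matrix (Fin 2) (Fin 2) K}
    (hT : T 1 0 = T 0 1) (A : Matrix (Fin 2) (Fin 2) K) (i : Fin 2) :
    (Aᵀ * T * A) i i = T 0 0 * A 0 i ^ 2 + 2 * T 0 1 * A 0 i * A 1 i + T 1 1 * A 1 i ^ 2 := by
  simp only [Matrix.mul_apply, Matrix.transpose_apply, Fin.sum_univ_two, hT]
  ring

lemma halfIntegral_of (n r m : ℤ) :
    HalfIntegral !![(n : ℚ), (r : ℚ) / 2; (r : ℚ) / 2, (m : ℚ)] :=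
  ⟨rfl, ⟨n, rfl⟩, ⟨m, rfl⟩, r, mul_div_cancel₀ _ two_ne_zero⟩

lemma HalfIntegral.transpose_mul_mul {T : Matrix (Fin 2) (Fin 2) ℚ} (hT : HalfIntegral T)
    (A : Matrix (Fin 2) (Fin 2) ℤ) :
    HalfIntegral ((A.map (Int.cast : ℤ → ℚ))ᵀ * T * A.map (Int.cast : ℤ → ℚ)) := by
  obtain ⟨hsymm, ⟨n, hn⟩, ⟨m, hm⟩, r, hr⟩ := hT
  refine ⟨?_, ⟨n * A 0 0 ^ 2 + r * A 0 0 * A 1 0 + m * A 1 0 ^ 2, ?_⟩,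
    ⟨n * A 0 1 ^ 2 + r * A 0 1 * A 1 1 + m * A 1 1 ^ 2, ?_⟩,
    2 * n * A 0 0 * A 0 1 + r * (A 0 0 * A 1 1 + A 1 0 * A 0 1) + 2 * m * A 1 0 * A 1 1, ?_⟩
  · simp only [Matrix.mul_apply, Matrix.transpose_apply, Fin.sum_univ_two, hsymm]
    ring
  · rw [transpose_mul_mul_diag hsymm, hn, hm, hr]
    simp
  · rw [transpose_mul_mul_diag hsymm, hn, hm, hr]
    simp
  · simp only [Matrix.mul_apply, Matrix.transpose_apply, Matrix.map_apply, Fin.sum_univ_two,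
      hsymm, hn, hm]
    push_cast
    linear_combination ((A 0 0 : ℚ) * A 1 1 + A 1 0 * A 0 1) * hr

lemma PosDef2.transpose_mul_mul {T : Matrix (Fin 2) (Fin 2) ℚ} (hT : PosDef2 T)
    (hsymm : T 1 0 = T 0 1) {A : Matrix (Fin 2) (Fin 2) ℚ} (hA : A.det = 1) :
    PosDef2 (Aᵀ * T * A) := by
  obtain ⟨hpos, hdet⟩ := hT
  refine ⟨?_, by rwa [Matrix.det_mul, Matrix.det_mul, Matrix.det_transpose, hA, one_mul, mul_one]⟩
  rw [transpose_mul_mul_diag hsymm]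
  refine form_pos hpos ?_ ?_
  · rw [Matrix.det_fin_two, hsymm] at hdet
    linarith
  · by_contra! h
    simp [Matrix.det_fin_two, h.1, h.2] at hA

lemma posDef2_of_iff {x y z : ℚ} : PosDef2 !![x, y / 2; y / 2, z] ↔ 0 < x ∧ y ^ 2 < 4 * x * z := by
  rw [PosDef2, Matrix.det_fin_two_of]
  refine and_congr_right' ⟨fun h ↦ by linarith, fun h ↦ by linarith⟩

lemma PosDef2.fricke {n r m : ℚ} {N : ℕ} (h : PosDef2 !![n, r / 2; r / 2, N * m]) :
    PosDef2 !![m, -r / 2; -r / 2, n * N] := by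
  rw [posDef2_of_iff] at h ⊢
  obtain ⟨hn, hdisc⟩ := h
  have hm : 0 < 4 * n * N * m := by nlinarith [sq_nonneg r]
  exact ⟨pos_of_mul_pos_right hm (by positivity), by linarith⟩

lemma isCoprime_mul_of_form_eq_prime {α β γ x y : ℤ} {N p : ℕ} (hp : p.Prime) (hpN : ¬p ∣ N)
    (h : α * x ^ 2 + β * x * y + N * γ * y ^ 2 = p) : IsCoprime x (N * y) := by
  refine isCoprime_of_forall_prime_dvd fun q hq ⟨u, hu⟩ ⟨v, hv⟩ ↦ ?_
  have hqp : q = p := by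
    refine (Nat.prime_dvd_prime_iff_eq hq hp).1 (Int.natCast_dvd_natCast.1 ?_)
    exact ⟨α * u * x + β * u * y + γ * y * v, by
      linear_combination -h + (α * x + β * y) * hu + γ * y * hv⟩
  subst hqp
  have hqZ := Nat.prime_iff_prime_int.1 hq
  obtain ⟨w, hw⟩ : (q : ℤ) ∣ y :=
    (hqZ.dvd_or_dvd ⟨v, hv⟩).resolve_left (by exact_mod_cast hpN)
  refine hqZ.not_isUnit (IsUnit.of_mul_eq_one (α * u ^ 2 + β * u * w + N * γ * w ^ 2)
    (mul_left_cancel₀ hqZ.ne_zero ?_))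
  rw [hu, hw] at h
  linear_combination h

lemma pos_of_sq_lt_mul {N : ℕ} {n r m : ℤ} (hdisc : r ^ 2 < 4 * n * (N * m)) : 0 < N := by
  refine Nat.pos_of_ne_zero ?_
  rintro rfl
  simp [(sq_nonneg r).not_gt] at hdisc

theorem exists_matrix_form_eq_mul_prime {N : ℕ} {n r m : ℤ}
    (hprim : Int.gcd n (Int.gcd r (N * m)) = 1) (hn : 0 < n) (hdisc : r ^ 2 < 4 * n * (N * m))
    (X : ℕ) :
    ∃ p : ℕ, p.Prime ∧ X < p ∧ ¬p ∣ N ∧ ∃ A : Matrix (Fin 2) (Fin 2) ℤ,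
      A.det = 1 ∧ (N : ℤ) ∣ A 0 1 ∧
        m * A 0 1 ^ 2 - r * A 0 1 * A 1 1 + n * N * A 1 1 ^ 2 = N * p := by
  obtain ⟨p, hp, hpX, d, c, hdc⟩ := exists_prime_eq_form (β := -r) (by rwa [Int.neg_gcd]) hn
    (by rwa [neg_sq]) (N + X)
  have hpN : ¬p ∣ N := Nat.not_dvd_of_pos_of_lt (pos_of_sq_lt_mul hdisc) (by lia)
  obtain ⟨u, v, huv⟩ := isCoprime_mul_of_form_eq_prime hp hpN hdc
  refine ⟨p, hp, by lia, hpN, !![u, N * c; -v, d], ?_, ?_, ?_⟩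
  · rw [Matrix.det_fin_two_of]
    linear_combination huv
  · simp
  · simp only [of_apply, cons_val', cons_val_zero, cons_val_one, cons_val_fin_one]
    linear_combination N * hdc

end Congruence

theorem jacobi_fourier_nonvanishing_general {R : Type*} [MulZeroClass R] (N : ℕ)
    (a : Matrix (Fin 2) (Fin 2) ℚ → R)
    (hinv : ∀ A : Matrix (Fin 2) (Fin 2) ℤ, A.det = 1 → (N : ℤ) ∣ A 0 1 →
      ∀ T : Matrix (Fin 2) (Fin 2) ℚ, HalfIntegral T → PosDef2 T →
        a ((A.map (Int.cast : ℤ → ℚ))ᵀ * T * A.map (Int.cast : ℤ → ℚ)) = a T)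
    (ε : R)
    (hfricke : ∀ n r m : ℤ, (N : ℤ) ∣ m →
      a !![(n : ℚ), (r : ℚ) / 2; (r : ℚ) / 2, (m : ℚ)] =
        ε * a !![(m : ℚ) / N, -(r : ℚ) / 2; -(r : ℚ) / 2, (n : ℚ) * N])
    (n r m : ℤ) (hprim : Int.gcd n (Int.gcd r ((N : ℤ) * m)) = 1)
    (hSpos : PosDef2 !![(n : ℚ), (r : ℚ) / 2; (r : ℚ) / 2, ((N : ℤ) * m : ℤ)])
    (hS : a !![(n : ℚ), (r : ℚ) / 2; (r : ℚ) / 2, ((N : ℤ) * m : ℤ)] ≠ 0) (X : ℕ) :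
    ∃ p : ℕ, p.Prime ∧ X < p ∧ Odd p ∧ ¬ p ∣ N ∧
      ∃ T : Matrix (Fin 2) (Fin 2) ℚ, HalfIntegral T ∧ PosDef2 T ∧
        T 1 1 = (N : ℚ) * p ∧ a T ≠ 0 := by
  obtain ⟨hn, hdisc⟩ : 0 < n ∧ r ^ 2 < 4 * n * (N * m) := by
    exact_mod_cast posDef2_of_iff.1 hSpos
  obtain ⟨p, hp, hpX, hpN, A, hA, hNA, hform⟩ :=
    exists_matrix_form_eq_mul_prime hprim hn hdisc (X + 2)
  have hN : (N : ℚ) ≠ 0 := Nat.cast_ne_zero.2 (pos_of_sq_lt_mul hdisc).ne'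
  let S' : Matrix (Fin 2) (Fin 2) ℚ := !![(m : ℚ), -(r : ℚ) / 2; -(r : ℚ) / 2, (n : ℚ) * N]
  have hhalf : HalfIntegral S' := by simpa using halfIntegral_of m (-r) (n * N)
  have hpos : PosDef2 S' :=
    PosDef2.fricke (by simpa only [Int.cast_mul, Int.cast_natCast] using hSpos)
  have haS' : a S' ≠ 0 := by
    rw [hfricke _ _ _ (dvd_mul_right _ _), Int.cast_mul, Int.cast_natCast,
      mul_div_cancel_left₀ _ hN] at hS
    exact right_ne_zero_of_mul hS
  have hAdet : (A.map (Int.cast : ℤ → ℚ)).det = 1 := by rw [← Int.cast_det, hA, Int.cast_one]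
  refine ⟨p, hp, by lia, hp.odd_of_ne_two (by lia), hpN, _, hhalf.transpose_mul_mul A,
    hpos.transpose_mul_mul hhalf.1 hAdet, ?_, (hinv A hA hNA S' hhalf hpos).trans_ne haS'⟩
  have hformQ := congrArg (Int.cast : ℤ → ℚ) hform
  push_cast at hformQ
  rw [transpose_mul_mul_diag hhalf.1, ← hformQ]
  simp only [S', of_apply, cons_val', cons_val_zero, cons_val_one, cons_val_fin_one, map_apply]
  ring

theorem jacobi_fourier_nonvanishing (N : ℕ) (hN : 0 < N)
    (a : Matrix (Fin 2) (Fin 2) ℚ → ℂ)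
    -- invariance under Γ⁰(N):  a(AᵀTA) = a(T)
    (hinv : ∀ A : Matrix (Fin 2) (Fin 2) ℤ, A.det = 1 → (N : ℤ) ∣ A 0 1 →
      ∀ T : Matrix (Fin 2) (Fin 2) ℚ, HalfIntegral T → PosDef2 T →
        a ((A.map (Int.cast : ℤ → ℚ))ᵀ * T * A.map (Int.cast : ℤ → ℚ)) = a T)
    (ε : ℂ) (hε : ε = 1 ∨ ε = -1)
    -- Fricke symmetry of the coefficients
    (hfricke : ∀ n r m : ℤ, (N : ℤ) ∣ m →
      a !![(n : ℚ), (r : ℚ) / 2; (r : ℚ) / 2, (m : ℚ)] =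
        ε * a !![(m : ℚ) / N, -(r : ℚ) / 2; -(r : ℚ) / 2, (n : ℚ) * N])
    -- a primitive matrix S = [[n, r/2], [r/2, Nm]] with a(S) ≠ 0
    (n r m : ℤ) (hprim : Int.gcd n (Int.gcd r ((N : ℤ) * m)) = 1)
    (hSpos : PosDef2 !![(n : ℚ), (r : ℚ) / 2; (r : ℚ) / 2, ((N : ℤ) * m : ℤ)])
    (hS : a !![(n : ℚ), (r : ℚ) / 2; (r : ℚ) / 2, ((N : ℤ) * m : ℤ)] ≠ 0) :
    ∃ p : ℕ, p.Prime ∧ Odd p ∧ ¬ p ∣ N ∧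
      ∃ T : Matrix (Fin 2) (Fin 2) ℚ, HalfIntegral T ∧ PosDef2 T ∧
        T 1 1 = (N : ℚ) * p ∧ a T ≠ 0 := by
  obtain ⟨p, hp, -, h⟩ :=
    jacobi_fourier_nonvanishing_general N a hinv ε hfricke n r m hprim hSpos hS 0
  exact ⟨p, hp, h⟩
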